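/- Let X be a geodesic metric space which admits a disc-thickening with a quadratic isoperimetric inequality. Suppose that H²(φ(K)) = 0 whenever φ: K → (Z,d_Z) is a Lipschitz map with K ⊂ ℝ² compact and (Z,d_Z) an asymptotic subset of X. Then X is Gromov hyperbolic. -/

import Mathlib

open scoped NNReal ENNReal
open MeasureTheory Filter

universe u v

namespace SharpIsop

/-- The closed unit disc `D² ⊂ ℝ²`. -/
def D2 : Set (ℝ × ℝ) := {p | p.1 ^ 2 + p.2 ^ 2 ≤ 1}

/-- The length (total variation over `[0,1]`) of a curve `γ : [0,1] → X`. -/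
noncomputable def loopLength {X : Type u} [PseudoEMetricSpace X] (γ : ℝ → X) : ℝ :=
  (eVariationOn γ (Set.Icc 0 1)).toReal

/-- A Lipschitz loop in `X`: a Lipschitz map `γ : [0,1] → X` with `γ 0 = γ 1`. -/
def IsLipLoop {X : Type u} [PseudoEMetricSpace X] (γ : ℝ → X) : Prop :=
  (∃ K : ℝ≥0, LipschitzOnWith K γ (Set.Icc 0 1)) ∧ γ 0 = γ 1

/-- The metric (directional) derivative of `φ : ℝ² → X` at `x` in direction `v`,
defined via a `limsup` so that it is everywhere defined (and agrees a.e. with the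
limit when the latter exists). -/
noncomputable def mder {X : Type u} [PseudoMetricSpace X] (φ : ℝ × ℝ → X)
    (x v : ℝ × ℝ) : ℝ :=
  Filter.limsup (fun r : ℝ => dist (φ (x + r • v)) (φ x) / r) (nhdsWithin 0 (Set.Ioi 0))

/-- The Jacobian of a (semi)norm `s` on `ℝ²`:  `π / Leb²({v : s v ≤ 1})` if this set
has finite measure, `0` otherwise. -/
noncomputable def jac2 (s : ℝ × ℝ → ℝ) : ℝ :=
  if volume {v : ℝ × ℝ | s v ≤ 1} < ⊤ then
    Real.pi / (volume {v : ℝ × ℝ | s v ≤ 1}).toReal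
  else 0

/-- The parametrized (Hausdorff) area of a map `φ : D² → X`. -/
noncomputable def lipArea {X : Type u} [PseudoMetricSpace X] (φ : ℝ × ℝ → X) : ℝ :=
  ∫ x in D2, jac2 (mder φ x)

/-- `φ : D² → X` is a singular Lipschitz disc bounding the loop `γ : [0,1] → X`. -/
def BoundsLoop {X : Type u} [PseudoMetricSpace X] (φ : ℝ × ℝ → X) (γ : ℝ → X) : Prop :=
  (∃ K : ℝ≥0, LipschitzOnWith K φ D2) ∧
    ∀ s ∈ Set.Icc (0:ℝ) 1, φ (Real.cos (2 * Real.pi * s), Real.sin (2 * Real.pi * s)) = γ s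

/-- `g : [0, d x y] → X` is a geodesic from `x` to `y`. -/
def IsGeodesicSeg {X : Type u} [MetricSpace X] (x y : X) (g : ℝ → X) : Prop :=
  g 0 = x ∧ g (dist x y) = y ∧
    ∀ s ∈ Set.Icc (0:ℝ) (dist x y), ∀ t ∈ Set.Icc (0:ℝ) (dist x y),
      dist (g s) (g t) = |s - t|

/-- A geodesic metric space: any two points are joined by a geodesic. -/
def GeodesicSpace (X : Type u) [MetricSpace X] : Prop :=
  ∀ x y : X, ∃ g : ℝ → X, IsGeodesicSeg x y g

/-- Gromov hyperbolicity via δ-slim geodesic triangles. -/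
def GromovHyperbolic (X : Type u) [MetricSpace X] : Prop :=
  ∃ δ : ℝ, 0 ≤ δ ∧
    ∀ x y z : X, ∀ gxy gyz gzx : ℝ → X,
      IsGeodesicSeg x y gxy → IsGeodesicSeg y z gyz → IsGeodesicSeg z x gzx →
      ∀ s ∈ Set.Icc (0:ℝ) (dist x y),
        ∃ p ∈ gyz '' Set.Icc (0:ℝ) (dist y z) ∪ gzx '' Set.Icc (0:ℝ) (dist z x),
          dist (gxy s) p ≤ δ

/-- `L^∞(X)`: the Banach space of bounded real functions on `X` with sup norm. -/
abbrev Linfty (X : Type u) : Type u := lp (fun _ : X => ℝ) ⊤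

/-- The Kuratowski embedding `x ↦ d(x,·) − d(x₀,·)` of `X` into `L^∞(X)`. -/
noncomputable def kuratowski (X : Type u) [MetricSpace X] (x₀ : X) (x : X) : Linfty X :=
  ⟨fun y => dist x y - dist x₀ y, memℓp_infty ⟨dist x x₀, by
    rintro t ⟨y, rfl⟩
    simpa [Real.norm_eq_abs] using abs_dist_sub_le x x₀ y⟩⟩

/-- `Y` admits a quadratic isoperimetric inequality for curves (with singular
Lipschitz discs as fillings). -/
def QuadIsopSpace (Y : Type u) [MetricSpace Y] : Prop :=
  ∃ C > (0:ℝ), ∀ c : ℝ → Y, IsLipLoop c →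
    ∃ φ : ℝ × ℝ → Y, BoundsLoop φ c ∧ lipArea φ ≤ C * (loopLength c) ^ 2

/-- `X` admits a disc-thickening with a quadratic isoperimetric inequality. -/
def HasDiscThickeningQII (X : Type u) [MetricSpace X] : Prop :=
  ∃ (X' : Type u) (m : MetricSpace X') (ι : X → X'),
    letI := m
    CompleteSpace X' ∧ Isometry ι ∧
      EMetric.hausdorffEdist (Set.range ι) (Set.univ : Set X') ≠ ⊤ ∧
      QuadIsopSpace X'

/-- A compact metric space `Z` is an asymptotic subset of `X`: there are nonempty
compact subsets `Zₙ ⊂ X` and scales `rₙ → ∞` such that the rescaled spaces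
`(Zₙ, rₙ⁻¹ d_X)` converge to `Z` in the Gromov–Hausdorff sense (expressed here via
`ε`-isometries). -/
def IsAsymptoticSubset (X : Type u) [MetricSpace X] (Z : Type v) [MetricSpace Z] :
    Prop :=
  CompactSpace Z ∧
    ∃ (Zn : ℕ → Set X) (r : ℕ → ℝ),
      (∀ n, (Zn n).Nonempty ∧ IsCompact (Zn n)) ∧
      Filter.Tendsto r Filter.atTop Filter.atTop ∧
      ∀ ε > (0:ℝ), ∀ᶠ n in Filter.atTop,
        ∃ f : Zn n → Z,
          (∀ p q : Zn n, |dist (f p) (f q) - (r n)⁻¹ * dist (p : X) (q : X)| ≤ ε) ∧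
          ∀ z : Z, ∃ p : Zn n, dist z (f p) ≤ ε

section
open scoped NNReal ENNReal
open MeasureTheory Filter

def Conn {X : Type u} [MetricSpace X] (S : Set X) (L : ℝ) (a b : X) : Prop :=
  ∃ c : ℝ → X, (∀ s ∈ Set.Icc (0:ℝ) 1, ∀ t ∈ Set.Icc (0:ℝ) 1, dist (c s) (c t) ≤ L * |s - t|) ∧
    c 0 = a ∧ c 1 = b ∧ ∀ s ∈ Set.Icc (0:ℝ) 1, c s ∈ S

section geom
variable {X : Type u} [MetricSpace X]

lemma Conn.mono {S : Set X} {L L' : ℝ} {a b : X} (h : Conn S L a b) (hL : L ≤ L') :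
    Conn S L' a b := by
  obtain ⟨c, h1, h2, h3, h4⟩ := h
  refine ⟨c, fun s hs t ht => (h1 s hs t ht).trans ?_, h2, h3, h4⟩
  exact mul_le_mul_of_nonneg_right hL (abs_nonneg _)

lemma Conn.symm {S : Set X} {L : ℝ} {a b : X} (h : Conn S L a b) : Conn S L b a := by
  obtain ⟨c, h1, h2, h3, h4⟩ := h
  refine ⟨fun t => c (1 - t), fun s hs t ht => ?_, by simpa using h3, by simpa using h2,
    fun s hs => h4 _ ⟨by linarith [hs.2], by linarith [hs.1]⟩⟩
  have := h1 (1 - s) ⟨by linarith [hs.2], by linarith [hs.1]⟩ (1 - t)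
    ⟨by linarith [ht.2], by linarith [ht.1]⟩
  have e : |1 - s - (1 - t)| = |s - t| := by rw [abs_sub_comm]; congr 1; ring
  rwa [e] at this

lemma Conn.trans {S : Set X} {L : ℝ} {a b d : X} (h : Conn S L a b) (h' : Conn S L b d) :
    Conn S (2 * L) a d := by
  obtain ⟨c, h1, h2, h3, h4⟩ := h
  obtain ⟨c', h1', h2', h3', h4'⟩ := h'
  have key : ∀ s t : ℝ, s ∈ Set.Icc (0:ℝ) 1 → t ∈ Set.Icc (0:ℝ) 1 → s ≤ t →
      dist (if s ≤ 1/2 then c (2 * s) else c' (2 * s - 1))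
        (if t ≤ 1/2 then c (2 * t) else c' (2 * t - 1)) ≤ 2 * L * |s - t| := by
    intro s t hs ht hst
    by_cases h5 : t ≤ 1/2
    · rw [if_pos h5, if_pos (hst.trans h5)]
      refine (h1 _ ⟨by linarith [hs.1], by linarith⟩ _ ⟨by linarith [ht.1], by linarith⟩).trans ?_
      rw [← mul_sub, abs_mul, abs_two]; apply le_of_eq; ring
    · push Not at h5
      rw [if_neg (not_le.2 h5)]
      by_cases h6 : s ≤ 1/2
      · rw [if_pos h6]
        have A := h1 (2 * s) ⟨by linarith [hs.1], by linarith⟩ 1 ⟨by norm_num, le_rfl⟩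
        have B := h1' 0 ⟨le_rfl, by norm_num⟩ (2 * t - 1) ⟨by linarith, by linarith [ht.2]⟩
        rw [h3] at A; rw [h2'] at B
        rw [abs_of_nonpos (by linarith)] at A B ⊢
        refine (dist_triangle _ b _).trans ?_
        nlinarith
      · push Not at h6
        rw [if_neg (not_le.2 h6)]
        refine (h1' _ ⟨by linarith, by linarith [hs.2]⟩ _ ⟨by linarith, by linarith [ht.2]⟩).trans ?_
        have : 2 * s - 1 - (2 * t - 1) = 2 * (s - t) := by ring
        rw [this, abs_mul, abs_two]; apply le_of_eq; ring
  refine ⟨fun t => if t ≤ 1/2 then c (2 * t) else c' (2 * t - 1), ?_, ?_, ?_, ?_⟩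
  · intro s hs t ht
    rcases le_total s t with hst | hst
    · exact key s t hs ht hst
    · rw [dist_comm, abs_sub_comm]; exact key t s ht hs hst
  · simp [h2]
  · have : ¬ ((1:ℝ) ≤ 1/2) := by norm_num
    simp only [this, if_false]; rw [← h3']; norm_num
  · intro s hs
    by_cases h5 : s ≤ 1/2
    · simp only [h5, if_true]; exact h4 _ ⟨by linarith [hs.1], by linarith⟩
    · simp only [h5, if_false]; push Not at h5; exact h4' _ ⟨by linarith, by linarith [hs.2]⟩

lemma Conn.geod {S : Set X} {L ℓ : ℝ} {α : ℝ → X}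
    (hα : ∀ s ∈ Set.Icc (0:ℝ) ℓ, ∀ t ∈ Set.Icc (0:ℝ) ℓ, dist (α s) (α t) = |s - t|)
    {s₁ s₂ : ℝ} (h1 : s₁ ∈ Set.Icc (0:ℝ) ℓ) (h2 : s₂ ∈ Set.Icc (0:ℝ) ℓ) (hL : |s₁ - s₂| ≤ L)
    (hS : ∀ t ∈ Set.uIcc s₁ s₂, α t ∈ S) : Conn S L (α s₁) (α s₂) := by
  have hm : ∀ t ∈ Set.Icc (0:ℝ) 1, s₁ + t * (s₂ - s₁) ∈ Set.uIcc s₁ s₂ := by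
    intro t ht
    rw [Set.mem_uIcc]
    rcases le_total s₁ s₂ with h | h
    · left; constructor <;> nlinarith [ht.1, ht.2]
    · right; constructor <;> nlinarith [ht.1, ht.2]
  have hm' : ∀ t ∈ Set.Icc (0:ℝ) 1, s₁ + t * (s₂ - s₁) ∈ Set.Icc (0:ℝ) ℓ := fun t ht =>
    (Set.uIcc_subset_Icc h1 h2) (hm t ht)
  refine ⟨fun t => α (s₁ + t * (s₂ - s₁)), ?_, by simp, by simp, fun t ht => hS _ (hm t ht)⟩
  intro s hs t ht
  rw [hα _ (hm' s hs) _ (hm' t ht)]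
  have : s₁ + s * (s₂ - s₁) - (s₁ + t * (s₂ - s₁)) = (s₂ - s₁) * (s - t) := by ring
  rw [this, abs_mul, abs_sub_comm s₂]
  exact mul_le_mul_of_nonneg_right hL (abs_nonneg _)

def SlimUpTo (X : Type u) [MetricSpace X] (a R : ℝ) : Prop :=
  ∀ x y z : X, dist x y ≤ R → dist y z ≤ R → dist z x ≤ R → ∀ gxy gyz gzx : ℝ → X,
      IsGeodesicSeg x y gxy → IsGeodesicSeg y z gyz → IsGeodesicSeg z x gzx →
      ∀ s ∈ Set.Icc (0:ℝ) (dist x y),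
        ∃ p ∈ gyz '' Set.Icc (0:ℝ) (dist y z) ∪ gzx '' Set.Icc (0:ℝ) (dist z x),
          dist (gxy s) p ≤ a

lemma IsGeodesicSeg.rev {x y : X} {g : ℝ → X} (h : IsGeodesicSeg x y g) :
    IsGeodesicSeg y x (fun t => g (dist x y - t)) := by
  obtain ⟨h1, h2, h3⟩ := h
  refine ⟨by simpa using h2, by simp [dist_comm y x, h1], ?_⟩
  intro s hs t ht
  rw [dist_comm y x] at hs ht
  rw [h3 _ ⟨by linarith [hs.2], by linarith [hs.1]⟩ _ ⟨by linarith [ht.2], by linarith [ht.1]⟩]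
  rw [abs_sub_comm]; congr 1; ring

lemma IsGeodesicSeg.sub {x y : X} {g : ℝ → X} (h : IsGeodesicSeg x y g) {s : ℝ}
    (hs : s ∈ Set.Icc 0 (dist x y)) : dist x (g s) = s ∧ IsGeodesicSeg x (g s) g := by
  obtain ⟨h1, h2, h3⟩ := h
  have e : dist x (g s) = s := by
    rw [← h1, h3 0 ⟨le_rfl, dist_nonneg⟩ s hs]
    simp [abs_of_nonneg hs.1]
  refine ⟨e, h1, by rw [e], ?_⟩
  rw [e]
  intro a ha b hb
  exact h3 a ⟨ha.1, ha.2.trans hs.2⟩ b ⟨hb.1, hb.2.trans hs.2⟩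

/-- connecting two points on two sides issuing from `z`. -/
lemma conn_sides (hX : GeodesicSpace X) {R a δ D T : ℝ} (hsl : SlimUpTo X a R) {z x y p : X}
    {α β : ℝ → X} (hα : IsGeodesicSeg z x α) (hβ : IsGeodesicSeg z y β)
    (hαp : ∀ t ∈ Set.Icc 0 (dist z x), δ ≤ dist p (α t))
    (hβp : ∀ t ∈ Set.Icc 0 (dist z y), δ ≤ dist p (β t))
    (hRx : dist z x ≤ R) (hRy : dist z y ≤ R)
    {s₁ s₂ : ℝ} (h1 : s₁ ∈ Set.Icc 0 (dist z x)) (h2 : s₂ ∈ Set.Icc 0 (dist z y))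
    (hDR : dist (α s₁) (β s₂) ≤ R)
    (hD : dist (α s₁) (β s₂) ≤ D) (ha : 0 ≤ a) (hT : a + D < T)
    (hT' : dist p (α s₁) + a + δ ≤ T) : 
    Conn {w | δ ≤ dist p w} (4 * (T + D + a)) (α s₁) (β s₂) := by
  have hD0 : 0 ≤ D := dist_nonneg.trans hD
  have hs12 : |s₁ - s₂| ≤ D := by
    have e1 := (hα.sub h1).1
    have e2 := (hβ.sub h2).1
    rw [← e1, ← e2]
    have := abs_dist_sub_le (α s₁) (β s₂) z
    rw [dist_comm _ z, dist_comm _ z] at this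
    linarith
  by_cases hc : s₁ < T
  · have c1 : Conn {w | δ ≤ dist p w} (T + D + a) (α s₁) (α 0) := by
      refine Conn.geod hα.2.2 h1 ⟨le_rfl, dist_nonneg⟩ ?_ ?_
      · rw [sub_zero, abs_of_nonneg h1.1]; linarith
      · intro t ht; exact hαp t (Set.uIcc_subset_Icc h1 ⟨le_rfl, dist_nonneg⟩ ht)
    have c2 : Conn {w | δ ≤ dist p w} (T + D + a) (β 0) (β s₂) := by
      refine Conn.geod hβ.2.2 ⟨le_rfl, dist_nonneg⟩ h2 ?_ ?_
      · rw [zero_sub, abs_neg, abs_of_nonneg h2.1]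
        rw [abs_le] at hs12; linarith
      · intro t ht; exact hβp t (Set.uIcc_subset_Icc ⟨le_rfl, dist_nonneg⟩ h2 ht)
    rw [hα.1] at c1; rw [hβ.1] at c2
    exact (c1.trans c2).mono (by linarith)
  · push Not at hc
    have hT0 : 0 ≤ T := by linarith
    obtain ⟨e1, hα1⟩ := hα.sub h1
    obtain ⟨e2, hβ1⟩ := hβ.sub h2
    obtain ⟨σ, hσ⟩ := hX (α s₁) (β s₂)
    have hm : s₁ - T ∈ Set.Icc 0 (dist z (α s₁)) := ⟨by linarith, by rw [e1]; linarith⟩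
    have hm' : s₁ - T ∈ Set.Icc 0 (dist z x) := ⟨by linarith, by linarith [h1.2]⟩
    obtain ⟨q, hq, hqa⟩ := hsl z (α s₁) (β s₂) (by rw [e1]; exact h1.2.trans hRx) hDR
      (by rw [dist_comm, e2]; exact h2.2.trans hRy) α σ _ hα1 hσ hβ1.rev (s₁ - T) hm
    have hdT : dist (α (s₁ - T)) (α s₁) = T := by
      rw [hα.2.2 _ hm' _ h1]; simp [abs_of_nonneg hT0]
    have hq' : ∃ t ∈ Set.Icc 0 (dist z y), q = β t := by
      rcases hq with ⟨t, ht, rfl⟩ | ⟨t, ht, rfl⟩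
      · exfalso
        have : dist (α s₁) (σ t) ≤ D := by
          rw [(hσ.sub ht).1]; exact ht.2.trans hD
        have h3 := dist_triangle (α (s₁ - T)) (σ t) (α s₁)
        rw [dist_comm (σ t)] at h3
        linarith
      · rw [dist_comm, e2] at ht
        exact ⟨_, ⟨by rw [e2]; linarith [ht.2], by rw [e2]; linarith [ht.1, h2.2]⟩, rfl⟩
    obtain ⟨t, ht, rfl⟩ := hq'
    have c1 : Conn {w | δ ≤ dist p w} (T + D + a) (α s₁) (α (s₁ - T)) := by
      refine Conn.geod hα.2.2 h1 hm' ?_ ?_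
      · rw [sub_sub_cancel, abs_of_nonneg hT0]; linarith
      · intro t ht; exact hαp t (Set.uIcc_subset_Icc h1 hm' ht)
    obtain ⟨τ, hτ⟩ := hX (α (s₁ - T)) (β t)
    have c2 : Conn {w | δ ≤ dist p w} (T + D + a) (τ 0) (τ (dist (α (s₁ - T)) (β t))) := by
      refine Conn.geod hτ.2.2 ⟨le_rfl, dist_nonneg⟩ ⟨dist_nonneg, le_rfl⟩ ?_ ?_
      · rw [zero_sub, abs_neg, abs_of_nonneg dist_nonneg]; linarith
      · intro v hv
        rw [Set.uIcc_of_le dist_nonneg] at hv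
        have := (hτ.sub hv).1
        have h3 := dist_triangle4 (α (s₁ - T)) (τ v) p (α s₁)
        rw [dist_comm (τ v) p] at h3
        show δ ≤ dist p (τ v)
        linarith [hv.2]
    rw [hτ.1, hτ.2.1] at c2
    have c3 : Conn {w | δ ≤ dist p w} (T + D + a) (β t) (β s₂) := by
      refine Conn.geod hβ.2.2 ht h2 ?_ ?_
      · rw [← hβ.2.2 _ ht _ h2]
        have h3 := dist_triangle4 (β t) (α (s₁ - T)) (α s₁) (β s₂)
        rw [dist_comm (β t) (α (s₁ - T))] at h3
        linarith
      · intro v hv; exact hβp v (Set.uIcc_subset_Icc ht h2 hv)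
    have c12 := c1.trans c2
    have := c12.trans (c3.mono (by linarith))
    exact this.mono (by linarith)


lemma exists_scale (hn : ¬ GromovHyperbolic X) (R₀ : ℝ) :
    ∃ δ R : ℝ, R₀ ≤ δ ∧ 0 < δ ∧ ¬ SlimUpTo X δ R ∧ SlimUpTo X (3 * δ) (2 * R) := by
  by_contra hcon
  push Not at hcon
  have h0 : ∃ R, ¬ SlimUpTo X (max R₀ 1) R := by
    by_contra h
    push Not at h
    apply hn
    refine ⟨max R₀ 1, le_trans zero_le_one (le_max_right _ _), ?_⟩
    intro x y z gxy gyz gzx h1 h2 h3 s hs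
    exact h (dist x y + dist y z + dist z x) x y z (by linarith [dist_nonneg (x := y) (y := z), dist_nonneg (x := z) (y := x)])
      (by linarith [dist_nonneg (x := x) (y := y), dist_nonneg (x := z) (y := x)])
      (by linarith [dist_nonneg (x := x) (y := y), dist_nonneg (x := y) (y := z)]) gxy gyz gzx h1 h2 h3 s hs
  obtain ⟨R, hR⟩ := h0
  set d := max R₀ 1 with hd
  have hd1 : 1 ≤ d := le_max_right _ _
  have hk : ∀ k : ℕ, ¬ SlimUpTo X (3 ^ k * d) (2 ^ k * R) := by
    intro k
    induction k with
    | zero => simpa using hR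
    | succ k ih =>
      have h3 : (1:ℝ) ≤ 3 ^ k := one_le_pow₀ (by norm_num)
      have := hcon (3 ^ k * d) (2 ^ k * R) (by nlinarith [le_max_left R₀ 1]) (by positivity) ih
      rw [pow_succ, pow_succ]
      convert this using 2 <;> ring
  have hlt : ∀ k : ℕ, (3:ℝ) ^ k * d < 2 ^ k * R := by
    intro k
    have h1 := hk k
    unfold SlimUpTo at h1
    push Not at h1
    obtain ⟨x, y, z, hxy, -, -, gxy, gyz, gzx, h1, h2, h3, s, hs, h4⟩ := h1
    have h5 := h4 (gzx (dist z x)) (Or.inr ⟨_, ⟨dist_nonneg, le_rfl⟩, rfl⟩)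
    rw [h3.2.1, dist_comm, (h1.sub hs).1] at h5
    linarith [hs.2]
  have ht : Tendsto (fun k : ℕ => (3/2:ℝ) ^ k) atTop atTop :=
    tendsto_pow_atTop_atTop_of_one_lt (by norm_num)
  obtain ⟨k, hk'⟩ := (ht.eventually (eventually_ge_atTop R)).exists
  have := hlt k
  rw [div_pow, le_div_iff₀ (by positivity)] at hk'
  have h3 : (0:ℝ) < 3 ^ k := by positivity
  nlinarith

lemma exists_fat (hX : GeodesicSpace X) (hn : ¬ GromovHyperbolic X) (R₀ : ℝ) :
    ∃ r : ℝ, R₀ ≤ r ∧ 0 < r ∧ ∃ g : ℝ → X,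
      (∀ s ∈ Set.Icc (-r) r, ∀ t ∈ Set.Icc (-r) r, dist (g s) (g t) = |s - t|) ∧
      Conn {w | r ≤ dist (g 0) w} (10000 * r) (g r) (g (-r)) := by
  obtain ⟨δ, R, h0, hδ, hf, hsl⟩ := exists_scale hn R₀
  unfold SlimUpTo at hf
  push Not at hf
  obtain ⟨x, y, z, hxy, hyz, hzx, gxy, gyz, gzx, h1, h2, h3, s, hs, h4⟩ := hf
  set p := gxy s with hp
  set S : Set X := {w | δ ≤ dist p w} with hS
  have hα : ∀ t ∈ Set.Icc 0 (dist z x), δ ≤ dist p (gzx t) := fun t ht =>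
    (h4 _ (Or.inr ⟨t, ht, rfl⟩)).le
  have hβ0 : ∀ t ∈ Set.Icc 0 (dist y z), δ ≤ dist p (gyz t) := fun t ht =>
    (h4 _ (Or.inl ⟨t, ht, rfl⟩)).le
  have h2r := h2.rev
  have hβ : ∀ t ∈ Set.Icc 0 (dist z y), δ ≤ dist p (gyz (dist y z - t)) := fun t ht =>
    hβ0 _ ⟨by rw [dist_comm]; linarith [ht.2], by linarith [ht.1]⟩
  have hsx : δ < s := by
    have h5 := h4 (gzx (dist z x)) (Or.inr ⟨_, ⟨dist_nonneg, le_rfl⟩, rfl⟩)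
    rwa [h3.2.1, dist_comm, (h1.sub hs).1] at h5
  have hsy : s + δ < dist x y := by
    have h5 := h4 (gyz 0) (Or.inl ⟨_, ⟨le_rfl, dist_nonneg⟩, rfl⟩)
    rw [h2.1, ← h1.2.1, hp, h1.2.2 _ hs _ ⟨dist_nonneg, le_rfl⟩, abs_of_nonpos (by linarith [hs.2])] at h5
    linarith
  -- connect points of the geodesic to the other sides
  have side : ∀ s' ∈ Set.Icc 0 (dist x y), |s' - s| ≤ 4 * δ →
      (s' = 0 ∨ s' = dist x y ∨ |s' - s| = 4 * δ) →
      ∃ q ∈ gyz '' Set.Icc (0:ℝ) (dist y z) ∪ gzx '' Set.Icc (0:ℝ) (dist z x),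
        dist p q ≤ 7 * δ ∧ Conn S (3 * δ) (gxy s') q := by
    intro s' hs' hb hcase
    have hdp : dist p (gxy s') = |s' - s| := by
      rw [hp, h1.2.2 _ hs _ hs', abs_sub_comm]
    have triv : ∀ q : X, q = gxy s' →
        q ∈ gyz '' Set.Icc (0:ℝ) (dist y z) ∪ gzx '' Set.Icc (0:ℝ) (dist z x) →
        ∃ q ∈ gyz '' Set.Icc (0:ℝ) (dist y z) ∪ gzx '' Set.Icc (0:ℝ) (dist z x),
        dist p q ≤ 7 * δ ∧ Conn S (3 * δ) (gxy s') q := by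
      intro q hq hm
      refine ⟨q, hm, by rw [hq, hdp]; linarith, ?_⟩
      rw [hq]
      refine Conn.geod h1.2.2 hs' hs' (by simp; linarith) ?_
      intro t ht
      rw [Set.uIcc_self, Set.mem_singleton_iff] at ht
      rw [ht, ← hq]
      exact (h4 q hm).le
    rcases hcase with h | h | h
    · apply triv x (by rw [h, h1.1]) (Or.inr ⟨_, ⟨dist_nonneg, le_rfl⟩, h3.2.1⟩)
    · apply triv y (by rw [h, h1.2.1]) (Or.inl ⟨_, ⟨le_rfl, dist_nonneg⟩, h2.1⟩)
    · have hR0 : 0 ≤ R := dist_nonneg.trans hxy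
      obtain ⟨q, hq, hqd⟩ := hsl x y z (by linarith) (by linarith) (by linarith) gxy gyz gzx h1 h2 h3 s' hs'
      refine ⟨q, hq, ?_, ?_⟩
      · have := dist_triangle p (gxy s') q
        rw [hdp] at this; linarith
      · obtain ⟨τ, hτ⟩ := hX (gxy s') q
        have c2 : Conn S (3 * δ) (τ 0) (τ (dist (gxy s') q)) := by
          refine Conn.geod hτ.2.2 ⟨le_rfl, dist_nonneg⟩ ⟨dist_nonneg, le_rfl⟩ ?_ ?_
          · rw [zero_sub, abs_neg, abs_of_nonneg dist_nonneg]; linarith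
          · intro v hv
            rw [Set.uIcc_of_le dist_nonneg] at hv
            have := (hτ.sub hv).1
            have h3 := dist_triangle p (τ v) (gxy s')
            rw [dist_comm (τ v)] at h3
            show δ ≤ dist p (τ v)
            linarith [hv.2]
        rwa [hτ.1, hτ.2.1] at c2
  have along : ∀ a ∈ Set.Icc 0 (dist x y), ∀ b ∈ Set.Icc 0 (dist x y), |a - b| ≤ 3 * δ →
      (∀ t ∈ Set.uIcc a b, δ ≤ |s - t|) → Conn S (3 * δ) (gxy a) (gxy b) := by
    intro a ha b hb hab ht
    refine Conn.geod h1.2.2 ha hb hab ?_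
    intro t htt
    show δ ≤ dist p (gxy t)
    rw [hp, h1.2.2 _ hs _ (Set.uIcc_subset_Icc ha hb htt)]
    exact ht t htt
  have left : ∃ q ∈ gyz '' Set.Icc (0:ℝ) (dist y z) ∪ gzx '' Set.Icc (0:ℝ) (dist z x),
        dist p q ≤ 7 * δ ∧ Conn S (6 * δ) (gxy (s - δ)) q := by
    set s' := max 0 (s - 4 * δ) with hs'
    have hs'm : s' ∈ Set.Icc 0 (dist x y) := ⟨le_max_left _ _, max_le dist_nonneg (by linarith [hs.2])⟩
    have hle : s' ≤ s - δ := max_le (by linarith) (by linarith)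
    have hge : s - 4 * δ ≤ s' := le_max_right _ _
    have e : |s' - s| = s - s' := by rw [abs_of_nonpos (by linarith)]; ring
    obtain ⟨q, hq, hd, hc⟩ := side s' hs'm (by rw [e]; linarith) (by
      rcases max_choice 0 (s - 4 * δ) with h | h
      · left; rw [hs', h]
      · right; right; rw [e, hs', h]; ring)
    refine ⟨q, hq, hd, ?_⟩
    have := along (s - δ) ⟨by linarith, by linarith [hs.2]⟩ s' hs'm
      (by rw [abs_of_nonneg (by linarith)]; linarith) (by
        intro t ht
        rw [Set.uIcc_of_ge hle] at ht
        rw [abs_of_nonneg (by linarith [ht.2])]; linarith [ht.2])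
    exact (this.trans hc).mono (by linarith)
  have right : ∃ q ∈ gyz '' Set.Icc (0:ℝ) (dist y z) ∪ gzx '' Set.Icc (0:ℝ) (dist z x),
        dist p q ≤ 7 * δ ∧ Conn S (6 * δ) (gxy (s + δ)) q := by
    set s' := min (dist x y) (s + 4 * δ) with hs'
    have hs'm : s' ∈ Set.Icc 0 (dist x y) := ⟨le_min dist_nonneg (by linarith [hs.1]), min_le_left _ _⟩
    have hle : s + δ ≤ s' := le_min (by linarith) (by linarith)
    have hge : s' ≤ s + 4 * δ := min_le_right _ _
    have e : |s' - s| = s' - s := by rw [abs_of_nonneg (by linarith)]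
    obtain ⟨q, hq, hd, hc⟩ := side s' hs'm (by rw [e]; linarith) (by
      rcases min_choice (dist x y) (s + 4 * δ) with h | h
      · right; left; rw [hs', h]
      · right; right; rw [e, hs', h]; ring)
    refine ⟨q, hq, hd, ?_⟩
    have := along (s + δ) ⟨by linarith [hs.1], by linarith⟩ s' hs'm
      (by rw [abs_of_nonpos (by linarith)]; linarith) (by
        intro t ht
        rw [Set.uIcc_of_le hle] at ht
        rw [abs_of_nonpos (by linarith [ht.1])]; linarith [ht.1])
    exact (this.trans hc).mono (by linarith)
  obtain ⟨q₁, hq₁, hd₁, hc₁⟩ := left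
  obtain ⟨q₂, hq₂, hd₂, hc₂⟩ := right
  have hD : dist q₁ q₂ ≤ 14 * δ := by
    have := dist_triangle q₁ p q₂
    rw [dist_comm q₁ p] at this; linarith
  have hR0 : 0 ≤ R := dist_nonneg.trans hxy
  have mixed : ∀ a ∈ Set.Icc 0 (dist z x), ∀ b ∈ Set.Icc 0 (dist y z),
      dist p (gzx a) ≤ 7 * δ → dist (gzx a) (gyz b) ≤ 14 * δ →
      Conn S (200 * δ) (gzx a) (gyz b) := by
    intro a ha b hb hpa hab
    have := conn_sides hX hsl (p := p) (δ := δ) (D := 14 * δ) (T := 20 * δ) h3 h2r hα hβ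
      (by linarith) (by rw [dist_comm]; linarith) ha
      (s₂ := dist y z - b) ⟨by linarith [hb.2], by rw [dist_comm z]; linarith [hb.1]⟩
      (by
        rw [sub_sub_cancel]
        have e1 := (h3.sub ha).1
        have e2 := (h2r.sub (s := dist y z - b) ⟨by linarith [hb.2], by rw [dist_comm z]; linarith [hb.1]⟩).1
        simp only [sub_sub_cancel] at e2
        have := dist_triangle (gzx a) z (gyz b)
        rw [dist_comm _ z] at this
        linarith [ha.2, hb.1]) (by rw [sub_sub_cancel]; exact hab) (by linarith) (by linarith) (by linarith)
    rw [sub_sub_cancel] at this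
    exact this.mono (by linarith)
  have hq : Conn S (200 * δ) q₁ q₂ := by
    rcases hq₁ with ⟨a, ha, rfl⟩ | ⟨a, ha, rfl⟩ <;> rcases hq₂ with ⟨b, hb, rfl⟩ | ⟨b, hb, rfl⟩
    · refine Conn.geod h2.2.2 ha hb ?_ (fun t ht => hβ0 t (Set.uIcc_subset_Icc ha hb ht))
      rw [← h2.2.2 a ha b hb]; linarith
    · exact (mixed b hb a ha hd₂ (by rw [dist_comm]; exact hD)).symm
    · exact mixed a ha b hb hd₁ hD
    · refine Conn.geod h3.2.2 ha hb ?_ (fun t ht => hα t (Set.uIcc_subset_Icc ha hb ht))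
      rw [← h3.2.2 a ha b hb]; linarith
  refine ⟨δ, h0, hδ, fun t => gxy (s + t), ?_, ?_⟩
  · intro a ha b hb
    rw [h1.2.2 _ ⟨by linarith [ha.1], by linarith [ha.2]⟩ _ ⟨by linarith [hb.1], by linarith [hb.2]⟩]
    congr 1; ring
  · have e1 : s + -δ = s - δ := by ring
    simp only [add_zero, e1]
    have := ((hc₂.mono (by linarith : 6 * δ ≤ 200 * δ)).trans hq.symm).trans
      (hc₁.symm.mono (by linarith : 6 * δ ≤ 2 * (200 * δ)))
    exact this.mono (by linarith)

end geom

end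

section
open scoped NNReal ENNReal Topology
open MeasureTheory Filter

noncomputable def J (a b : ℝ × ℝ → ℝ) (x : ℝ × ℝ) : ℝ :=
  fderiv ℝ a x (1, 0) * fderiv ℝ b x (0, 1) - fderiv ℝ a x (0, 1) * fderiv ℝ b x (1, 0)

lemma det_prod (A B : ℝ × ℝ →L[ℝ] ℝ) :
    (A.prod B).det = A (1, 0) * B (0, 1) - A (0, 1) * B (1, 0) := by
  rw [ContinuousLinearMap.det, ← LinearMap.det_toMatrix (Module.Basis.finTwoProd ℝ), Matrix.det_fin_two]
  simp [LinearMap.toMatrix_apply]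

lemma ldswap {a b : ℝ × ℝ → ℝ} {K L : ℝ≥0} (ha : LipschitzWith K a) (hb : LipschitzWith L b)
    (hs : HasCompactSupport a) (v w : ℝ × ℝ) :
    ∫ x, lineDeriv ℝ b x w * lineDeriv ℝ a x v = ∫ x, lineDeriv ℝ a x w * lineDeriv ℝ b x v := by
  have hzero : ∀ u : ℝ × ℝ, ∀ x ∉ tsupport a, lineDeriv ℝ a x u = 0 := by
    intro u x hx
    have : a =ᶠ[𝓝 x] fun _ => 0 := notMem_tsupport_iff_eventuallyEq.1 hx
    rw [this.lineDeriv_eq]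
    simp [lineDeriv]
  have hInt : Integrable (fun x => lineDeriv ℝ a x v) := by
    have : IntegrableOn (fun x => lineDeriv ℝ a x v) (tsupport a) :=
      (ha.locallyIntegrable_lineDeriv (μ := volume) v).integrableOn_isCompact hs
    exact (integrableOn_iff_integrable_of_support_subset (fun x hx => by
      by_contra h; exact hx (hzero v x h))).1 this
  have A := hb.integral_inv_smul_sub_mul_tendsto_integral_lineDeriv_mul hInt w
  set C := Metric.cthickening ‖w‖ (tsupport a) with hC
  have hCc : IsCompact C := IsCompact.cthickening hs
  have hsub : tsupport a ⊆ C := Metric.self_subset_cthickening _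
  have hg : Integrable (C.indicator (fun x => lineDeriv ℝ b x v)) :=
    ((hb.locallyIntegrable_lineDeriv (μ := volume) v).integrableOn_isCompact hCc).integrable_indicator hCc.measurableSet
  have B := ha.integral_inv_smul_sub_mul_tendsto_integral_lineDeriv_mul hg (-w)
  have hB : ∫ x, lineDeriv ℝ a x (-w) * C.indicator (fun x => lineDeriv ℝ b x v) x =
      - ∫ x, lineDeriv ℝ a x w * lineDeriv ℝ b x v := by
    rw [← integral_neg]
    congr 1; ext x
    rw [lineDeriv_neg]
    by_cases hx : x ∈ C
    · rw [Set.indicator_of_mem hx]; ring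
    · rw [Set.indicator_of_notMem hx, hzero w x (fun h => hx (hsub h))]; ring
  rw [hB] at B
  have hE : (fun t : ℝ => ∫ x, (t⁻¹ • (b (x + t • w) - b x)) * lineDeriv ℝ a x v) =ᶠ[𝓝[>] 0]
      fun t => - ∫ x, (t⁻¹ • (a (x + t • (-w)) - a x)) * C.indicator (fun x => lineDeriv ℝ b x v) x := by
    have hmem : Set.Ioc (0:ℝ) 1 ∈ 𝓝[>] (0:ℝ) := Ioc_mem_nhdsGT one_pos
    filter_upwards [hmem] with t ht
    have hbt : LipschitzWith (‖t⁻¹‖₊ * (L + L)) (fun x => t⁻¹ • (b (x + t • w) - b x)) := by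
      have h1 : LipschitzWith L (fun x => b (x + t • w)) := by
        refine LipschitzWith.of_dist_le_mul fun x y => ?_
        have := hb.dist_le_mul (x + t • w) (y + t • w)
        rwa [dist_add_right] at this
      refine LipschitzWith.of_dist_le_mul fun x y => ?_
      have := (h1.sub hb).dist_le_mul x y
      rw [dist_smul₀]
      push_cast
      rw [mul_assoc]
      exact mul_le_mul_of_nonneg_left (by exact_mod_cast this) (norm_nonneg _)
    have ibp := hbt.integral_lineDeriv_mul_eq ha hs v (μ := volume)
    have e1 : ∫ x, (t⁻¹ • (b (x + t • w) - b x)) * lineDeriv ℝ a x v =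
        - ∫ x, lineDeriv ℝ (fun x => t⁻¹ • (b (x + t • w) - b x)) x v * a x := by
      rw [ibp, ← integral_neg]
      congr 1; ext x; rw [lineDeriv_neg]; ring
    rw [e1]
    congr 1
    have d1 := hb.ae_lineDifferentiableAt (μ := volume) v
    have d2 : ∀ᵐ x : ℝ × ℝ, LineDifferentiableAt ℝ b (x + t • w) v :=
      (measurePreserving_add_right volume (t • w)).quasiMeasurePreserving.ae d1
    have e2 : ∀ᵐ x : ℝ × ℝ, lineDeriv ℝ (fun x => t⁻¹ • (b (x + t • w) - b x)) x v * a x =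
        t⁻¹ * (lineDeriv ℝ b (x + t • w) v * a x) - t⁻¹ * (lineDeriv ℝ b x v * a x) := by
      filter_upwards [d1, d2] with x h1 h2
      have h1' := h1.hasLineDerivAt
      have h2' := h2.hasLineDerivAt
      have h3 : HasLineDerivAt ℝ (fun x => t⁻¹ • (b (x + t • w) - b x))
          (t⁻¹ • (lineDeriv ℝ b (x + t • w) v - lineDeriv ℝ b x v)) x v := by
        unfold HasLineDerivAt at *
        have h4 : HasDerivAt (fun s : ℝ => b (x + s • v + t • w)) (lineDeriv ℝ b (x + t • w) v) 0 := by
          have e : (fun s : ℝ => b (x + s • v + t • w)) = fun s : ℝ => b (x + t • w + s • v) := by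
            funext s; rw [add_right_comm]
          rw [e]; exact h2'
        exact (h4.fun_sub h1').fun_const_smul _
      rw [h3.lineDeriv, smul_eq_mul]; ring
    rw [integral_congr_ae e2]
    have i1 : Integrable (fun x => lineDeriv ℝ b x v * a x) := by
      have := (ha.continuous.integrable_of_hasCompactSupport hs (μ := volume)).bdd_mul
        (c := L * ‖v‖) (f := fun x => lineDeriv ℝ b x v)
        (aestronglyMeasurable_lineDeriv hb.continuous _)
        (.of_forall fun _x ↦ norm_lineDeriv_le_of_lipschitz ℝ hb)
      exact this
    have i2 : Integrable (fun x => lineDeriv ℝ b x v * a (x + t • (-w))) := by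
      have hs' : HasCompactSupport (fun x => a (x + t • (-w))) := by
        have := hs.comp_homeomorph (Homeomorph.addRight (t • (-w)))
        exact this
      have := ((ha.continuous.comp (continuous_add_const (t • (-w)))).integrable_of_hasCompactSupport hs' (μ := volume)).bdd_mul
        (c := L * ‖v‖) (f := fun x => lineDeriv ℝ b x v)
        (aestronglyMeasurable_lineDeriv hb.continuous _)
        (.of_forall fun _x ↦ norm_lineDeriv_le_of_lipschitz ℝ hb)
      exact this
    have e3 : (fun x => lineDeriv ℝ b (x + t • w) v * a x) =
        fun x => (fun x => lineDeriv ℝ b x v * a (x + t • (-w))) (x + t • w) := by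
      ext x; simp
    have i3 : Integrable (fun x => lineDeriv ℝ b (x + t • w) v * a x) := by
      rw [e3]; exact i2.comp_add_right _
    rw [integral_sub (i3.const_mul _) (i1.const_mul _), integral_const_mul, integral_const_mul,
      e3, integral_add_right_eq_self (fun x => lineDeriv ℝ b x v * a (x + t • (-w))), ← mul_sub,
      ← integral_sub i2 i1, ← integral_const_mul]
    congr 1; ext x
    by_cases hx : x ∈ C
    · rw [Set.indicator_of_mem hx, smul_eq_mul]; ring
    · have h1 : a x = 0 := image_eq_zero_of_notMem_tsupport (fun h => hx (hsub h))
      have h2 : a (x + t • (-w)) = 0 := by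
        apply image_eq_zero_of_notMem_tsupport
        intro h
        apply hx
        apply Metric.mem_cthickening_of_dist_le x _ _ _ h
        rw [dist_eq_norm]
        simp only [smul_neg, sub_add_cancel_left, neg_neg, norm_smul, Real.norm_eq_abs, abs_of_pos ht.1]
        nlinarith [norm_nonneg w, ht.2]
      rw [Set.indicator_of_notMem hx, h1, h2]; ring
  have A' := (B.neg).congr' hE.symm
  rw [neg_neg] at A'
  exact tendsto_nhds_unique A A'

lemma integral_J_zero {a b : ℝ × ℝ → ℝ} {K L : ℝ≥0} (ha : LipschitzWith K a)
    (hb : LipschitzWith L b) (hs : HasCompactSupport a) : ∫ x, J a b x = 0 := by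
  have h := ldswap ha hb hs (1, 0) (0, 1)
  have hzero : ∀ u : ℝ × ℝ, ∀ x ∉ tsupport a, lineDeriv ℝ a x u = 0 := by
    intro u x hx
    have : a =ᶠ[𝓝 x] fun _ => 0 := notMem_tsupport_iff_eventuallyEq.1 hx
    rw [this.lineDeriv_eq]
    simp [lineDeriv]
  have hInt : ∀ v w, Integrable (fun x => lineDeriv ℝ b x w * lineDeriv ℝ a x v) := by
    intro v w
    have : IntegrableOn (fun x => lineDeriv ℝ a x v) (tsupport a) :=
      (ha.locallyIntegrable_lineDeriv (μ := volume) v).integrableOn_isCompact hs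
    have := (integrableOn_iff_integrable_of_support_subset (fun x hx => by
      by_contra h; exact hx (hzero v x h))).1 this
    exact this.bdd_mul
        (c := L * ‖w‖) (f := fun x => lineDeriv ℝ b x w)
        (aestronglyMeasurable_lineDeriv hb.continuous _)
        (.of_forall fun _x ↦ norm_lineDeriv_le_of_lipschitz ℝ hb)
  have : ∫ x, J a b x = ∫ x, (lineDeriv ℝ b x (0, 1) * lineDeriv ℝ a x (1, 0) -
      lineDeriv ℝ b x (1, 0) * lineDeriv ℝ a x (0, 1)) := by
    apply integral_congr_ae
    filter_upwards [ha.ae_differentiableAt (μ := volume), hb.ae_differentiableAt (μ := volume)] with x h1 h2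
    rw [h1.lineDeriv_eq_fderiv, h1.lineDeriv_eq_fderiv, h2.lineDeriv_eq_fderiv, h2.lineDeriv_eq_fderiv]
    unfold J; ring
  rw [this, integral_sub (hInt _ _) (hInt _ _), h, sub_eq_zero]
  congr 1; ext x; ring


end

section
open scoped NNReal ENNReal Topology
open MeasureTheory Filter

lemma J_self (a : ℝ × ℝ → ℝ) (x : ℝ × ℝ) : J a a x = 0 := by unfold J; ring

lemma J_swap (a b : ℝ × ℝ → ℝ) (x : ℝ × ℝ) : J a b x = - J b a x := by unfold J; ring

lemma J_mul {a c b : ℝ × ℝ → ℝ} {x : ℝ × ℝ} (ha : DifferentiableAt ℝ a x)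
    (hc : DifferentiableAt ℝ c x) :
    J (fun x => a x * c x) b x = a x * J c b x + c x * J a b x := by
  unfold J
  rw [fderiv_fun_mul ha hc]
  simp; ring

lemma J_sub {a c b : ℝ × ℝ → ℝ} {x : ℝ × ℝ} (ha : DifferentiableAt ℝ a x)
    (hc : DifferentiableAt ℝ c x) :
    J (fun x => a x - c x) b x = J a b x - J c b x := by
  unfold J
  rw [fderiv_fun_sub ha hc]
  simp; ring

lemma J_comp {K : ℝ → ℝ} {a b : ℝ × ℝ → ℝ} {x : ℝ × ℝ} (ha : DifferentiableAt ℝ a x)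
    (hK : DifferentiableAt ℝ K (a x)) :
    J (fun x => K (a x)) b x = deriv K (a x) * J a b x := by
  have h : fderiv ℝ (fun x => K (a x)) x = deriv K (a x) • fderiv ℝ a x :=
    (hK.hasDerivAt.comp_hasFDerivAt x ha.hasFDerivAt).fderiv
  unfold J
  rw [h]
  simp; ring

lemma J_congr {a a' b b' : ℝ × ℝ → ℝ} {x : ℝ × ℝ} (h : a =ᶠ[𝓝 x] a') (h' : b =ᶠ[𝓝 x] b') :
    J a b x = J a' b' x := by
  unfold J; rw [h.fderiv_eq, h'.fderiv_eq]

/-- bounded Lipschitz functions -/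
def BL {α : Type*} [PseudoMetricSpace α] (f : α → ℝ) : Prop :=
  (∃ C : ℝ≥0, LipschitzWith C f) ∧ ∃ M : ℝ, ∀ x, |f x| ≤ M

lemma BL.mul {α : Type*} [PseudoMetricSpace α] {f g : α → ℝ} (hf : BL f) (hg : BL g) :
    BL (fun x => f x * g x) := by
  obtain ⟨⟨C, hC⟩, M, hM⟩ := hf
  obtain ⟨⟨C', hC'⟩, M', hM'⟩ := hg
  refine ⟨⟨(|M| * C' + |M'| * C).toNNReal, LipschitzWith.of_dist_le_mul fun x y => ?_⟩,
    |M| * |M'|, fun x => ?_⟩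
  · rw [Real.coe_toNNReal _ (by positivity)]
    have h1 := hC.dist_le_mul x y
    have h2 := hC'.dist_le_mul x y
    rw [Real.dist_eq] at *
    have : f x * g x - f y * g y = f x * (g x - g y) + g y * (f x - f y) := by ring
    rw [this]
    have a1 : |f x| ≤ |M| := (hM x).trans (le_abs_self _)
    have a2 : |g y| ≤ |M'| := (hM' y).trans (le_abs_self _)
    calc _ ≤ |f x * (g x - g y)| + |g y * (f x - f y)| := abs_add_le _ _
      _ = |f x| * |g x - g y| + |g y| * |f x - f y| := by rw [abs_mul, abs_mul]
      _ ≤ |M| * (C' * dist x y) + |M'| * (C * dist x y) := by gcongr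
      _ = _ := by ring
  · rw [abs_mul]
    have a1 : |f x| ≤ |M| := (hM x).trans (le_abs_self _)
    have a2 : |g x| ≤ |M'| := (hM' x).trans (le_abs_self _)
    gcongr

lemma BL.comp {α β : Type*} [PseudoMetricSpace α] [PseudoMetricSpace β] {f : β → ℝ} {g : α → β}
    (hf : BL f) (hg : ∃ C : ℝ≥0, LipschitzWith C g) :
    BL (fun x => f (g x)) := by
  obtain ⟨⟨C, hC⟩, M, hM⟩ := hf
  obtain ⟨C', hC'⟩ := hg
  exact ⟨⟨_, hC.comp hC'⟩, M, fun x => hM _⟩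

lemma BL.sub {α : Type*} [PseudoMetricSpace α] {f g : α → ℝ} (hf : BL f) (hg : BL g) :
    BL (fun x => f x - g x) := by
  obtain ⟨⟨C, hC⟩, M, hM⟩ := hf
  obtain ⟨⟨C', hC'⟩, M', hM'⟩ := hg
  exact ⟨⟨_, hC.sub hC'⟩, M + M', fun x => (abs_sub _ _).trans (add_le_add (hM x) (hM' x))⟩

lemma BL.diff {f : ℝ × ℝ → ℝ} (hf : BL f) : ∀ᵐ x, DifferentiableAt ℝ f x := by
  obtain ⟨⟨C, hC⟩, M, hM⟩ := hf
  exact hC.ae_differentiableAt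

lemma BL_of_smooth {f : ℝ → ℝ} (hf : ContDiff ℝ 1 f) (hs : HasCompactSupport f) : BL f := by
  obtain ⟨C, hC⟩ := ContDiff.lipschitzWith_of_hasCompactSupport hs hf (by norm_num)
  obtain ⟨M, hM⟩ := hs.exists_bound_of_continuous hf.continuous
  exact ⟨⟨C, hC⟩, M, hM⟩

/-- open unit disc -/
def U : Set (ℝ × ℝ) := {p | p.1 ^ 2 + p.2 ^ 2 < 1}

lemma U_open : IsOpen U := isOpen_lt (by fun_prop) (by fun_prop)

lemma U_sub : U ⊆ Metric.closedBall 0 1 := by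
  intro p hp
  simp only [U, Set.mem_ofPred_eq] at hp
  rw [mem_closedBall_zero_iff, Prod.norm_def]
  simp only [Real.norm_eq_abs, sup_le_iff]
  constructor <;> apply abs_le_of_sq_le_sq _ zero_le_one <;> nlinarith [sq_nonneg p.1, sq_nonneg p.2]

lemma U_fin : volume U < ⊤ :=
  (measure_mono U_sub).trans_lt (isCompact_closedBall _ _).measure_lt_top

lemma compact_of_zero {a : ℝ × ℝ → ℝ} (h : ∀ x ∉ U, a x = 0) : HasCompactSupport a :=
  HasCompactSupport.intro (isCompact_closedBall 0 1) fun x hx => h x fun hU => hx (U_sub hU)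

lemma integral_J_zero' {a b : ℝ × ℝ → ℝ} (ha : BL a) (hb : ∃ C, LipschitzWith C b)
    (h : ∀ x ∉ U, a x = 0) : ∫ x, J a b x = 0 := by
  obtain ⟨⟨C, hC⟩, -⟩ := ha
  obtain ⟨C', hC'⟩ := hb
  exact integral_J_zero hC hC' (compact_of_zero h)

lemma J_meas {a b : ℝ × ℝ → ℝ} : Measurable (J a b) := by
  unfold J
  exact ((measurable_fderiv_apply_const ℝ a _).mul (measurable_fderiv_apply_const ℝ b _)).sub
    ((measurable_fderiv_apply_const ℝ a _).mul (measurable_fderiv_apply_const ℝ b _))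

lemma J_bdd {a b : ℝ × ℝ → ℝ} (ha : ∃ C, LipschitzWith C a) (hb : ∃ C, LipschitzWith C b) :
    ∃ M : ℝ, ∀ x, |J a b x| ≤ M := by
  obtain ⟨C, hC⟩ := ha
  obtain ⟨C', hC'⟩ := hb
  have key : ∀ (f : ℝ × ℝ → ℝ) (C : ℝ≥0), LipschitzWith C f → ∀ x v, ‖v‖ ≤ 1 → |fderiv ℝ f x v| ≤ C := by
    intro f C hC x v hv
    have := (fderiv ℝ f x).le_opNorm v
    rw [Real.norm_eq_abs] at this
    have h2 : ‖fderiv ℝ f x‖ ≤ C := norm_fderiv_le_of_lipschitz ℝ hC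
    nlinarith [norm_nonneg v, norm_nonneg (fderiv ℝ f x)]
  refine ⟨C * C' + C * C', fun x => ?_⟩
  unfold J
  refine (abs_sub _ _).trans ?_
  rw [abs_mul, abs_mul]
  have n1 : ‖((1:ℝ), (0:ℝ))‖ ≤ 1 := by simp [Prod.norm_def]
  have n2 : ‖((0:ℝ), (1:ℝ))‖ ≤ 1 := by simp [Prod.norm_def]
  gcongr <;> apply key <;> assumption

lemma J_zero_off {a b : ℝ × ℝ → ℝ} {x : ℝ × ℝ} (h : a =ᶠ[𝓝 x] fun _ => 0) : J a b x = 0 := by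
  unfold J; rw [h.fderiv_eq]; simp

/-- data for the analytic core -/
structure Dat (Q : Set (ℝ × ℝ)) (F1 F2 j : ℝ × ℝ → ℝ) : Prop where
  l1 : ∃ C, LipschitzWith C F1
  l2 : ∃ C, LipschitzWith C F2
  j0 : ∀ x, 0 ≤ j x
  ji : IntegrableOn j U
  jJ : ∀ᵐ x, x ∈ U → |J F1 F2 x| ≤ j x
  off : ∀ x ∉ U, (F1 x, F2 x) ∉ Q

structure Adm (F1 F2 j g : ℝ × ℝ → ℝ) : Prop where
  bl : BL g
  h1 : ∀ᵐ x, x ∈ U → |J g F1 x| ≤ j x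
  h2 : ∀ᵐ x, x ∈ U → |J g F2 x| ≤ j x

/-- the open rectangle -/
def Qo : Set (ℝ × ℝ) := {z | |z.1| < 1/4 ∧ 0 < z.2 ∧ z.2 < 1/4}

noncomputable def mu (F1 F2 j : ℝ × ℝ → ℝ) : Measure (ℝ × ℝ) :=
  ((volume.restrict U).withDensity (fun x => ENNReal.ofReal (j x))).map (fun x => (F1 x, F2 x))

noncomputable def AA (F1 F2 g : ℝ × ℝ → ℝ) (k1 k2 : ℝ → ℝ) : ℝ :=
  ∫ x, k1 (F1 x) * k2 (F2 x) * g x * J F1 F2 x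

section
variable {Q : Set (ℝ × ℝ)} {F1 F2 j g : ℝ × ℝ → ℝ}

lemma Dat.meas (d : Dat Q F1 F2 j) : Measurable (fun x => (F1 x, F2 x)) := by
  obtain ⟨C, hC⟩ := d.l1
  obtain ⟨C', hC'⟩ := d.l2
  exact (hC.continuous.prodMk hC'.continuous).measurable

lemma Dat.mu_apply (d : Dat Q F1 F2 j) {B : Set (ℝ × ℝ)} (hB : MeasurableSet B) :
    mu F1 F2 j B = ∫⁻ x in U ∩ {x | (F1 x, F2 x) ∈ B}, ENNReal.ofReal (j x) := by
  unfold mu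
  rw [Measure.map_apply d.meas hB, withDensity_apply _ (d.meas hB),
    Measure.restrict_restrict (d.meas hB), Set.inter_comm]
  rfl

lemma Dat.mu_univ (d : Dat Q F1 F2 j) : mu F1 F2 j Set.univ = ENNReal.ofReal (∫ x in U, j x) := by
  rw [d.mu_apply MeasurableSet.univ, ofReal_integral_eq_lintegral_ofReal d.ji (.of_forall d.j0)]
  simp

lemma Dat.fin (d : Dat Q F1 F2 j) : IsFiniteMeasure (mu F1 F2 j) := ⟨by
  rw [d.mu_univ]; exact ENNReal.ofReal_lt_top⟩

/-- basic bound: an integrand dominated by `M 1_B(F) j` on `U` and vanishing off `U`. -/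
lemma Dat.bound (d : Dat Q F1 F2 j) {B : Set (ℝ × ℝ)} (hB : MeasurableSet B) {M : ℝ} (hM : 0 ≤ M)
    {f : ℝ × ℝ → ℝ}
    (h0 : ∀ᵐ x, x ∉ U → f x = 0)
    (h1 : ∀ᵐ x, x ∈ U → (F1 x, F2 x) ∉ B → f x = 0)
    (h2 : ∀ᵐ x, x ∈ U → |f x| ≤ M * j x) :
    |∫ x, f x| ≤ M * (mu F1 F2 j B).toReal := by
  have hS : MeasurableSet (U ∩ {x | (F1 x, F2 x) ∈ B}) := U_open.measurableSet.inter (d.meas hB)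
  have e : ∫ x in U ∩ {x | (F1 x, F2 x) ∈ B}, j x = (mu F1 F2 j B).toReal := by
    rw [d.mu_apply hB, integral_eq_lintegral_of_nonneg_ae (.of_forall d.j0)
      (d.ji.mono_set Set.inter_subset_left).aestronglyMeasurable]
  rw [← e, ← integral_const_mul, ← integral_indicator hS]
  refine (abs_integral_le_integral_abs).trans ?_
  apply integral_mono_of_nonneg (.of_forall fun x => abs_nonneg _)
  · rw [integrable_indicator_iff hS]
    exact (d.ji.mono_set Set.inter_subset_left).const_mul M
  · filter_upwards [h0, h1, h2] with x a0 a1 a2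
    by_cases hU : x ∈ U
    · by_cases hx : (F1 x, F2 x) ∈ B
      · rw [Set.indicator_of_mem (by exact ⟨hU, hx⟩)]; exact a2 hU
      · rw [Set.indicator_of_notMem (by simp [hx]), a1 hU hx, abs_zero]
    · rw [Set.indicator_of_notMem (by simp [hU]), a0 hU, abs_zero]

lemma Dat.move1 (d : Dat Q F1 F2 j) (a : Adm F1 F2 j g) {K κ : ℝ → ℝ} (hK : ContDiff ℝ 1 K)
    (hKs : HasCompactSupport K) (hκ : ContDiff ℝ 1 κ) (hκs : HasCompactSupport κ)
    {B : Set (ℝ × ℝ)} (hB : MeasurableSet B) (hBQ : B ⊆ Q)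
    (hz : ∀ z : ℝ × ℝ, z ∉ B → K z.1 * κ z.2 = 0) {M : ℝ} (hM : ∀ s t, |K s * κ t| ≤ M) :
    |AA F1 F2 g (deriv K) κ| ≤ M * (mu F1 F2 j B).toReal := by
  have hM0 : 0 ≤ M := (abs_nonneg _).trans (hM 0 0)
  have bK : BL (fun x => K (F1 x)) := (BL_of_smooth hK hKs).comp d.l1
  have bκ : BL (fun x => κ (F2 x)) := (BL_of_smooth hκ hκs).comp d.l2
  have hoff : ∀ x ∉ U, K (F1 x) * κ (F2 x) = 0 := fun x hx =>
    hz (F1 x, F2 x) fun h => d.off x hx (hBQ h)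
  have h0 := integral_J_zero' ((bK.mul bκ).mul a.bl) d.l2
    (fun x hx => by rw [hoff x hx, zero_mul])
  have hd1 : ∀ᵐ x, DifferentiableAt ℝ F1 x := by obtain ⟨C, hC⟩ := d.l1; exact hC.ae_differentiableAt
  have hd2 : ∀ᵐ x, DifferentiableAt ℝ F2 x := by obtain ⟨C, hC⟩ := d.l2; exact hC.ae_differentiableAt
  have hJ : ∀ᵐ x, J (fun x => K (F1 x) * κ (F2 x) * g x) F2 x =
      deriv K (F1 x) * κ (F2 x) * g x * J F1 F2 x + K (F1 x) * κ (F2 x) * J g F2 x := by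
    filter_upwards [hd1, hd2, a.bl.diff] with x h1 h2 h3
    have k1 : DifferentiableAt ℝ K (F1 x) := hK.differentiable (by norm_num) _
    have k2 : DifferentiableAt ℝ κ (F2 x) := hκ.differentiable (by norm_num) _
    have dk1 : DifferentiableAt ℝ (fun x => K (F1 x)) x := k1.comp x h1
    have dk2 : DifferentiableAt ℝ (fun x => κ (F2 x)) x := k2.comp x h2
    rw [J_mul (a := fun x => K (F1 x) * κ (F2 x)) (dk1.fun_mul dk2) h3, J_mul dk1 dk2, J_comp h1 k1, J_comp h2 k2, J_self]
    ring
  have gL := a.bl.1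
  have ib : Integrable (fun x => K (F1 x) * κ (F2 x) * J g F2 x) := by
    obtain ⟨C, hC⟩ := J_bdd gL d.l2
    have : IntegrableOn (fun x => K (F1 x) * κ (F2 x) * J g F2 x) U := by
      apply Measure.integrableOn_of_bounded (M := M * C) U_fin.ne
      · obtain ⟨⟨_, c⟩, -⟩ := bK.mul bκ
        exact (c.continuous.measurable.mul J_meas).aestronglyMeasurable
      · refine .of_forall fun x => ?_
        rw [Real.norm_eq_abs, abs_mul]
        have := hM (F1 x) (F2 x)
        have := hC x
        gcongr
    exact (integrableOn_iff_integrable_of_support_subset (fun x hx => by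
      by_contra h; exact hx (by simp only [hoff x h, zero_mul]))).1 this
  have e : AA F1 F2 g (deriv K) κ = - ∫ x, K (F1 x) * κ (F2 x) * J g F2 x := by
    have e2 : ∫ x, (J (fun x => K (F1 x) * κ (F2 x) * g x) F2 x - K (F1 x) * κ (F2 x) * J g F2 x) =
        AA F1 F2 g (deriv K) κ := by
      apply integral_congr_ae
      filter_upwards [hJ] with x hx
      rw [hx]; ring
    rw [← e2]
    by_cases hi : Integrable (J (fun x => K (F1 x) * κ (F2 x) * g x) F2)
    · rw [integral_sub hi ib, h0, zero_sub]
    · exfalso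
      apply hi
      obtain ⟨⟨C, hC⟩, -⟩ := (bK.mul bκ).mul a.bl
      obtain ⟨M', hM'⟩ := J_bdd ⟨C, hC⟩ d.l2
      have hsupp : ∀ x ∉ Metric.closedBall (0:ℝ×ℝ) 1, J (fun x => K (F1 x) * κ (F2 x) * g x) F2 x = 0 := by
        intro x hx
        apply J_zero_off
        filter_upwards [Metric.isClosed_closedBall.isOpen_compl.mem_nhds hx] with y hy
        rw [hoff y (fun h => hy (U_sub h)), zero_mul]
      refine (integrableOn_iff_integrable_of_support_subset (s := Metric.closedBall (0:ℝ×ℝ) 1) (fun x hx => by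
        by_contra h; exact hx (hsupp x h))).1 ?_
      apply Measure.integrableOn_of_bounded (M := M') (isCompact_closedBall _ _).measure_lt_top.ne
      · exact J_meas.aestronglyMeasurable
      · exact .of_forall hM'
  rw [e, abs_neg]
  apply d.bound hB hM0
  · exact .of_forall fun x hx => by rw [hoff x hx, zero_mul]
  · exact .of_forall fun x _ hx => by rw [hz _ hx, zero_mul]
  · filter_upwards [a.h2] with x hx hU
    rw [abs_mul]
    have := hM (F1 x) (F2 x)
    have := hx hU
    gcongr

/-- swap the two coordinates -/
lemma AA_swap (F1 F2 g : ℝ × ℝ → ℝ) (k1 k2 : ℝ → ℝ) : AA F2 F1 g k2 k1 = - AA F1 F2 g k1 k2 := by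
  unfold AA
  rw [← integral_neg]
  congr 1; ext x; rw [J_swap F2 F1]; ring

lemma Dat.swap (d : Dat Q F1 F2 j) : Dat (Prod.swap ⁻¹' Q) F2 F1 j where
  l1 := d.l2
  l2 := d.l1
  j0 := d.j0
  ji := d.ji
  jJ := by
    filter_upwards [d.jJ] with x hx hU
    rw [J_swap, abs_neg]; exact hx hU
  off := fun x hx h => d.off x hx h

lemma Adm.swap (a : Adm F1 F2 j g) : Adm F2 F1 j g := ⟨a.bl, a.h2, a.h1⟩

lemma Dat.move2 (d : Dat Q F1 F2 j) (a : Adm F1 F2 j g) {K κ : ℝ → ℝ} (hK : ContDiff ℝ 1 K)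
    (hKs : HasCompactSupport K) (hκ : ContDiff ℝ 1 κ) (hκs : HasCompactSupport κ)
    {B : Set (ℝ × ℝ)} (hB : MeasurableSet B) (hBQ : B ⊆ Q)
    (hz : ∀ z : ℝ × ℝ, z ∉ B → K z.1 * κ z.2 = 0) {M : ℝ} (hM : ∀ s t, |K s * κ t| ≤ M) :
    |AA F1 F2 g K (deriv κ)| ≤ M * (mu F1 F2 j B).toReal := by
  have hB' : MeasurableSet (Prod.swap ⁻¹' B) := measurable_swap hB
  have := d.swap.move1 a.swap hκ hκs hK hKs hB' (Set.preimage_mono hBQ)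
    (fun z hz' => by rw [mul_comm]; exact hz z.swap hz') (fun s t => by rw [mul_comm]; exact hM t s)
  rw [AA_swap, abs_neg] at this
  have e : mu F2 F1 j (Prod.swap ⁻¹' B) = mu F1 F2 j B := by
    rw [d.swap.mu_apply hB', d.mu_apply hB]; rfl
  rwa [e] at this

end


end

section
open scoped NNReal ENNReal Topology
open MeasureTheory Filter

noncomputable def PP (y r t : ℝ) : ℝ := Real.smoothTransition (((t - y) / r + 1) / 2)

noncomputable def ker (y r t : ℝ) : ℝ := deriv (PP y r) t

lemma PP_smooth (y r : ℝ) : ContDiff ℝ 2 (PP y r) := by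
  unfold PP
  apply Real.smoothTransition.contDiff.comp
  fun_prop

lemma ker_smooth (y r : ℝ) : ContDiff ℝ 1 (ker y r) := by
  have := PP_smooth y r
  exact ContDiff.deriv' (n := 1) (by exact_mod_cast this)

lemma ker_cont (y r : ℝ) : Continuous (ker y r) := (ker_smooth y r).continuous

lemma PP_left {y r t : ℝ} (hr : 0 < r) (h : t ≤ y - r) : PP y r t = 0 := by
  apply Real.smoothTransition.zero_of_nonpos
  have : (t - y) / r ≤ -1 := by rw [div_le_iff₀ hr]; linarith
  linarith

lemma PP_right {y r t : ℝ} (hr : 0 < r) (h : y + r ≤ t) : PP y r t = 1 := by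
  apply Real.smoothTransition.one_of_one_le
  have : 1 ≤ (t - y) / r := by rw [le_div_iff₀ hr]; linarith
  linarith

lemma ker_zero {y r t : ℝ} (hr : 0 < r) (h : t ∉ Metric.closedBall y r) : ker y r t = 0 := by
  rw [Metric.mem_closedBall, Real.dist_eq, not_le, lt_abs] at h
  unfold ker
  rcases h with h | h
  · have : PP y r =ᶠ[𝓝 t] fun _ => 1 := by
      filter_upwards [Ioi_mem_nhds (show y + r < t by linarith)] with s hs
      exact PP_right hr (le_of_lt hs)
    rw [this.deriv_eq]; simp
  · have : PP y r =ᶠ[𝓝 t] fun _ => 0 := by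
      filter_upwards [Iio_mem_nhds (show t < y - r by linarith)] with s hs
      exact PP_left hr (le_of_lt hs)
    rw [this.deriv_eq]; simp

lemma ker_compact {y r : ℝ} (hr : 0 < r) : HasCompactSupport (ker y r) :=
  HasCompactSupport.intro (isCompact_closedBall y r) fun _ hx => ker_zero hr hx

lemma ker_scale (y r t : ℝ) : ker y r t = ker 0 1 ((t - y) / r) * r⁻¹ := by
  have h : PP y r = fun t => PP 0 1 ((t - y) / r) := by
    ext t; unfold PP; simp
  unfold ker
  have h1 : HasDerivAt (PP 0 1) (deriv (PP 0 1) ((t - y) / r)) ((t - y) / r) :=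
    ((PP_smooth 0 1).differentiable (by norm_num) _).hasDerivAt
  have h2 : HasDerivAt (fun t => (t - y) / r) (r⁻¹) t := by
    have := ((hasDerivAt_id t).sub_const y).div_const r
    simpa [one_div] using this
  have := h1.comp t h2
  rw [h]
  exact this.deriv

lemma exists_kc : ∃ c : ℝ, 1 ≤ c ∧ ∀ y r t : ℝ, 0 < r → |ker y r t| ≤ c / r := by
  obtain ⟨c, hc⟩ := (ker_compact (y := 0) one_pos).exists_bound_of_continuous (ker_cont 0 1)
  refine ⟨max c 1, le_max_right _ _, fun y r t hr => ?_⟩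
  rw [ker_scale, abs_mul, abs_inv, abs_of_pos hr, div_eq_mul_inv]
  have := (hc ((t - y) / r)).trans (le_max_left c 1)
  exact mul_le_mul_of_nonneg_right this (inv_nonneg.2 hr.le)

noncomputable def kc : ℝ := exists_kc.choose
lemma kc_one : 1 ≤ kc := exists_kc.choose_spec.1
lemma kc_bound {y r : ℝ} (t : ℝ) (hr : 0 < r) : |ker y r t| ≤ kc / r := exists_kc.choose_spec.2 y r t hr

lemma ker_integral {y r : ℝ} (hr : 0 < r) : ∫ t, ker y r t = 1 := by
  have h : ∫ t in (y - r)..(y + r), ker y r t = 1 := by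
    unfold ker
    rw [intervalIntegral.integral_deriv_eq_sub (fun x _ => (PP_smooth y r).differentiable (by norm_num) x)
      ((ker_cont y r).intervalIntegrable _ _), PP_right hr le_rfl, PP_left hr le_rfl]
    norm_num
  rw [← h, intervalIntegral.integral_of_le (by linarith), ← integral_Icc_eq_integral_Ioc, ← Real.closedBall_eq_Icc]
  symm
  apply setIntegral_eq_integral_of_forall_compl_eq_zero
  exact fun x hx => ker_zero hr hx

lemma PP_mem (y r t : ℝ) : 0 ≤ PP y r t ∧ PP y r t ≤ 1 :=
  ⟨Real.smoothTransition.nonneg _, Real.smoothTransition.le_one _⟩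

section
variable {Q : Set (ℝ × ℝ)} {F1 F2 j g : ℝ × ℝ → ℝ}

lemma Dat.AA_int (d : Dat Q F1 F2 j) (hg : BL g) {k1 k2 : ℝ → ℝ} (h1 : Continuous k1)
    (h2 : Continuous k2) (hz : ∀ z : ℝ × ℝ, z ∉ Q → k1 z.1 * k2 z.2 = 0) {M : ℝ}
    (hM : ∀ s t, |k1 s * k2 t| ≤ M) :
    Integrable (fun x => k1 (F1 x) * k2 (F2 x) * g x * J F1 F2 x) := by
  obtain ⟨C, hC⟩ := J_bdd d.l1 d.l2
  obtain ⟨⟨G, hG⟩, M', hM'⟩ := hg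
  have : IntegrableOn (fun x => k1 (F1 x) * k2 (F2 x) * g x * J F1 F2 x) U := by
    apply Measure.integrableOn_of_bounded (M := M * M' * C) U_fin.ne
    · obtain ⟨_, c1⟩ := d.l1
      obtain ⟨_, c2⟩ := d.l2
      exact ((((h1.comp c1.continuous).mul (h2.comp c2.continuous)).mul
        hG.continuous).measurable.mul J_meas).aestronglyMeasurable
    · refine .of_forall fun x => ?_
      rw [Real.norm_eq_abs, abs_mul, abs_mul]
      have e1 := hM (F1 x) (F2 x)
      have e2 := hC x
      have e3 := hM' x
      have : 0 ≤ M := (abs_nonneg _).trans e1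
      have : 0 ≤ M' := (abs_nonneg _).trans e3
      gcongr
  exact (integrableOn_iff_integrable_of_support_subset (fun x hx => by
      by_contra h; exact hx (by simp only [hz (F1 x, F2 x) (d.off x h), zero_mul]))).1 this

lemma mem_box {y z : ℝ × ℝ} {R : ℝ} : z ∈ Metric.closedBall y R ↔
    z.1 ∈ Metric.closedBall y.1 R ∧ z.2 ∈ Metric.closedBall y.2 R := by
  rw [← closedBall_prod_same, Set.mem_prod]

lemma ball_fst {y y' : ℝ × ℝ} {r R : ℝ} (hr : 0 < r) (h : Metric.closedBall y' r ⊆ Metric.closedBall y R) :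
    Metric.closedBall y'.1 r ⊆ Metric.closedBall y.1 R := by
  intro t ht
  exact (mem_box.1 (h (mem_box.2 (show (t, y'.2).1 ∈ _ ∧ (t, y'.2).2 ∈ _ from
    ⟨ht, Metric.mem_closedBall_self hr.le⟩)))).1

lemma ball_snd {y y' : ℝ × ℝ} {r R : ℝ} (hr : 0 < r) (h : Metric.closedBall y' r ⊆ Metric.closedBall y R) :
    Metric.closedBall y'.2 r ⊆ Metric.closedBall y.2 R := by
  intro t ht
  exact (mem_box.1 (h (mem_box.2 (show (y'.1, t).1 ∈ _ ∧ (y'.1, t).2 ∈ _ from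
    ⟨Metric.mem_closedBall_self hr.le, ht⟩)))).2

lemma PPdiff {y r y' r' Y R : ℝ} (hr : 0 < r) (hr' : 0 < r')
    (h : Metric.closedBall y r ⊆ Metric.closedBall Y R)
    (h' : Metric.closedBall y' r' ⊆ Metric.closedBall Y R) {t : ℝ} (ht : t ∉ Metric.closedBall Y R) :
    PP y r t - PP y' r' t = 0 := by
  have l : y - r ∈ Metric.closedBall Y R := h (by rw [Real.closedBall_eq_Icc]; constructor <;> linarith)
  have u : y + r ∈ Metric.closedBall Y R := h (by rw [Real.closedBall_eq_Icc]; constructor <;> linarith)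
  have l' : y' - r' ∈ Metric.closedBall Y R := h' (by rw [Real.closedBall_eq_Icc]; constructor <;> linarith)
  have u' : y' + r' ∈ Metric.closedBall Y R := h' (by rw [Real.closedBall_eq_Icc]; constructor <;> linarith)
  rw [Real.closedBall_eq_Icc] at *
  rcases lt_or_ge t (Y - R) with h1 | h1
  · rw [PP_left hr (by linarith [l.1]), PP_left hr' (by linarith [l'.1])]; ring
  · have : Y + R < t := by
      by_contra h2; exact ht ⟨h1, not_lt.1 h2⟩
    rw [PP_right hr (by linarith [u.2]), PP_right hr' (by linarith [u'.2])]; ring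

noncomputable def aa (F1 F2 g : ℝ × ℝ → ℝ) (y : ℝ × ℝ) (r : ℝ) : ℝ :=
  AA F1 F2 g (ker y.1 r) (ker y.2 r)

lemma Dat.step (d : Dat Q F1 F2 j) (a : Adm F1 F2 j g) {y y' Y : ℝ × ℝ} {r r' R : ℝ}
    (hr : 0 < r) (hr' : 0 < r') (h : Metric.closedBall y r ⊆ Metric.closedBall Y R)
    (h' : Metric.closedBall y' r' ⊆ Metric.closedBall Y R) (hQ : Metric.closedBall Y R ⊆ Q) :
    |aa F1 F2 g y r - aa F1 F2 g y' r'| ≤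
      kc * (1 / r + 1 / r') * (mu F1 F2 j (Metric.closedBall Y R)).toReal := by
  have hkc := kc_one
  have key : ∀ (y y' w Y r r' s R: ℝ), 0 < r → 0 < r' → 0 < s →
      ∀ u t, |(PP y r u - PP y' r' u) * ker w s t| ≤ kc / s := by
    intro y y' w Y r r' s R hr hr' hs u t
    rw [abs_mul]
    have h1 : |PP y r u - PP y' r' u| ≤ 1 := by
      rw [abs_le]; constructor <;> linarith [(PP_mem y r u).1, (PP_mem y r u).2, (PP_mem y' r' u).1, (PP_mem y' r' u).2]
    have h2 := kc_bound (y := w) t hs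
    calc _ ≤ 1 * (kc / s) := by gcongr
      _ = _ := one_mul _
  have hcs : ∀ {y r y' r' Y R : ℝ}, 0 < r → 0 < r' →
    Metric.closedBall y r ⊆ Metric.closedBall Y R →
    Metric.closedBall y' r' ⊆ Metric.closedBall Y R → HasCompactSupport (fun t => PP y r t - PP y' r' t) :=
    fun {y r y' r' Y R} hr hr' h h' => HasCompactSupport.intro (isCompact_closedBall Y R) fun t ht => PPdiff hr hr' h h' ht
  have hsm : ∀ y r y' r' : ℝ, ContDiff ℝ 1 (fun t => PP y r t - PP y' r' t) := fun y r y' r' =>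
    ((PP_smooth y r).sub (PP_smooth y' r')).of_le (by norm_num)
  have hder : ∀ y r y' r' : ℝ, deriv (fun t => PP y r t - PP y' r' t) = fun t => ker y r t - ker y' r' t := by
    intro y r y' r'
    ext t
    exact deriv_fun_sub ((PP_smooth y r).differentiable (by norm_num) _) ((PP_smooth y' r').differentiable (by norm_num) _)
  have f1 := ball_fst hr h
  have f2 := ball_snd hr h
  have f1' := ball_fst hr' h'
  have f2' := ball_snd hr' h'
  have m1 := d.move1 a (hsm y.1 r y'.1 r') (hcs hr hr' f1 f1') (ker_smooth y.2 r) (ker_compact hr)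
    (Metric.isClosed_closedBall (x := Y) (ε := R)).measurableSet hQ (fun z hz => by
      by_cases hz1 : z.1 ∈ Metric.closedBall Y.1 R
      · have : z.2 ∉ Metric.closedBall Y.2 R := fun hh => hz (mem_box.2 ⟨hz1, hh⟩)
        rw [ker_zero hr (fun hh => this (f2 hh)), mul_zero]
      · simp only [PPdiff hr hr' f1 f1' hz1, zero_mul]) (key _ _ _ 0 _ _ _ 0 hr hr' hr)
  have m2 := d.move2 a (ker_smooth y'.1 r') (ker_compact hr') (hsm y.2 r y'.2 r') (hcs hr hr' f2 f2')
    (Metric.isClosed_closedBall (x := Y) (ε := R)).measurableSet hQ (fun z hz => by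
      by_cases hz1 : z.2 ∈ Metric.closedBall Y.2 R
      · have : z.1 ∉ Metric.closedBall Y.1 R := fun hh => hz (mem_box.2 ⟨hh, hz1⟩)
        rw [ker_zero hr' (fun hh => this (f1' hh)), zero_mul]
      · simp only [PPdiff hr hr' f2 f2' hz1, mul_zero]) (fun s t => by
        rw [mul_comm]; exact key _ _ _ 0 _ _ _ 0 hr hr' hr' t s)
  have hint : ∀ {a b r s : ℝ}, 0 < r → 0 < s → Metric.closedBall a r ⊆ Metric.closedBall Y.1 R →
      Metric.closedBall b s ⊆ Metric.closedBall Y.2 R →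
      Integrable (fun x => ker a r (F1 x) * ker b s (F2 x) * g x * J F1 F2 x) := by
    intro a' b r s hr hs h1 h2
    refine d.AA_int a.bl (ker_cont _ _) (ker_cont _ _) (M := kc / r * (kc / s)) (fun z hz => ?_) (fun u t => ?_)
    · by_cases hz1 : z.1 ∈ Metric.closedBall a' r
      · have : z.2 ∉ Metric.closedBall b s := fun hh => hz (hQ (mem_box.2 ⟨h1 hz1, h2 hh⟩))
        rw [ker_zero hs this, mul_zero]
      · rw [ker_zero hr hz1, zero_mul]
    · rw [abs_mul]
      have := kc_bound (y := a') u hr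
      have := kc_bound (y := b) t hs
      gcongr
  rw [hder] at m1 m2
  have e1 : AA F1 F2 g (fun t => ker y.1 r t - ker y'.1 r' t) (ker y.2 r) =
      AA F1 F2 g (ker y.1 r) (ker y.2 r) - AA F1 F2 g (ker y'.1 r') (ker y.2 r) := by
    unfold AA
    rw [← integral_sub (hint hr hr f1 f2) (hint hr' hr f1' f2)]
    congr 1; ext x; ring
  have e2 : AA F1 F2 g (ker y'.1 r') (fun t => ker y.2 r t - ker y'.2 r' t) =
      AA F1 F2 g (ker y'.1 r') (ker y.2 r) - AA F1 F2 g (ker y'.1 r') (ker y'.2 r') := by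
    unfold AA
    rw [← integral_sub (hint hr' hr f1' f2) (hint hr' hr' f1' f2')]
    congr 1; ext x; ring
  rw [e1] at m1
  rw [e2] at m2
  have e3 : aa F1 F2 g y r - aa F1 F2 g y' r' = (AA F1 F2 g (ker y.1 r) (ker y.2 r) - AA F1 F2 g (ker y'.1 r') (ker y.2 r)) +
    (AA F1 F2 g (ker y'.1 r') (ker y.2 r) - AA F1 F2 g (ker y'.1 r') (ker y'.2 r')) := by unfold aa; ring
  rw [e3]
  refine (abs_add_le _ _).trans ((add_le_add m1 m2).trans (le_of_eq ?_))
  ring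

/-- telescoping -/
lemma Dat.tele (d : Dat Q F1 F2 j) (a : Adm F1 F2 j g) {y : ℝ × ℝ} {r l s : ℝ}
    (hr : 0 < r) (hQ : Metric.closedBall y r ⊆ Q) (hl : 0 ≤ l)
    (hmax : ∀ ρ, 0 < ρ → ρ ≤ r → (mu F1 F2 j (Metric.closedBall y ρ)).toReal ≤ l * ρ ^ 2)
    (hlim : Tendsto (fun ρ => aa F1 F2 g y ρ) (𝓝[>] 0) (𝓝 s)) :
    |aa F1 F2 g y r - s| ≤ 6 * kc * l * r := by
  have hkc := kc_one
  have hp : ∀ n : ℕ, 0 < r / 2 ^ n := fun n => by positivity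
  have hle : ∀ n : ℕ, r / 2 ^ n ≤ r := fun n => div_le_self hr.le (one_le_pow₀ (by norm_num))
  have hs : ∀ n : ℕ, |aa F1 F2 g y (r / 2 ^ n) - aa F1 F2 g y (r / 2 ^ (n+1))| ≤ 3 * kc * l * r / 2 ^ n := by
    intro n
    have := d.step a (hp n) (hp (n+1)) (y := y) (y' := y) (Y := y) (R := r / 2 ^ n) subset_rfl
      (Metric.closedBall_subset_closedBall (by rw [pow_succ]; apply div_le_div_of_nonneg_left hr.le (by positivity); nlinarith [show (0:ℝ) < 2 ^ n by positivity]))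
      ((Metric.closedBall_subset_closedBall (hle n)).trans hQ)
    refine this.trans ?_
    have h2 := hmax _ (hp n) (hle n)
    calc _ ≤ kc * (1 / (r / 2 ^ n) + 1 / (r / 2 ^ (n+1))) * (l * (r / 2 ^ n) ^ 2) := by
          gcongr
      _ = _ := by rw [pow_succ]; field_simp; ring
  have hsum : ∀ n : ℕ, |aa F1 F2 g y r - aa F1 F2 g y (r / 2 ^ n)| ≤ 6 * kc * l * r * (1 - 1 / 2 ^ n) := by
    intro n
    induction n with
    | zero => simp
    | succ n ih =>
      have h1 := hs n
      have h2 := abs_sub_le (aa F1 F2 g y r) (aa F1 F2 g y (r / 2 ^ n)) (aa F1 F2 g y (r / 2 ^ (n+1)))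
      refine h2.trans ((add_le_add ih h1).trans (le_of_eq ?_))
      rw [pow_succ]; field_simp; ring
  have ht : Tendsto (fun n : ℕ => r / 2 ^ n) atTop (𝓝[>] 0) := by
    rw [tendsto_nhdsWithin_iff]
    refine ⟨?_, .of_forall hp⟩
    have := (tendsto_pow_atTop_nhds_zero_of_lt_one (r := (1/2:ℝ)) (by norm_num) (by norm_num)).const_mul r
    rw [mul_zero] at this
    refine this.congr fun n => ?_
    rw [one_div, inv_pow]; rfl
  have := ((hlim.comp ht).const_sub (aa F1 F2 g y r)).abs
  refine le_of_tendsto this (.of_forall fun n => (hsum n).trans ?_)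
  have : (0:ℝ) < 1 / 2 ^ n := by positivity
  have h3 : 0 ≤ 6 * kc * l * r := by positivity
  nlinarith

/-- the BV-type Lipschitz estimate between good points. -/
lemma Dat.lip (d : Dat Q F1 F2 j) (a : Adm F1 F2 j g) {y y' : ℝ × ℝ} {r l s s' : ℝ}
    (hQ : Metric.closedBall y r ⊆ Q) (hQ' : Metric.closedBall y' r ⊆ Q) (hl : 0 ≤ l)
    (hmax : ∀ ρ, 0 < ρ → ρ ≤ r → (mu F1 F2 j (Metric.closedBall y ρ)).toReal ≤ l * ρ ^ 2)
    (hmax' : ∀ ρ, 0 < ρ → ρ ≤ r → (mu F1 F2 j (Metric.closedBall y' ρ)).toReal ≤ l * ρ ^ 2)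
    (hlim : Tendsto (fun ρ => aa F1 F2 g y ρ) (𝓝[>] 0) (𝓝 s))
    (hlim' : Tendsto (fun ρ => aa F1 F2 g y' ρ) (𝓝[>] 0) (𝓝 s'))
    (hd : 2 * dist y y' ≤ r) :
    |s - s'| ≤ 20 * kc * l * dist y y' := by
  have hkc := kc_one
  rcases eq_or_ne y y' with rfl | hne
  · rw [tendsto_nhds_unique hlim hlim']; simp
  have hp : 0 < dist y y' := dist_pos.2 hne
  set D := dist y y' with hD
  have t1 := d.tele a hp ((Metric.closedBall_subset_closedBall (by linarith)).trans hQ) hl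
    (fun ρ h0 h1 => hmax ρ h0 (by linarith)) hlim
  have t2 := d.tele a hp ((Metric.closedBall_subset_closedBall (by linarith)).trans hQ') hl
    (fun ρ h0 h1 => hmax' ρ h0 (by linarith)) hlim'
  have t3 := d.step a hp hp (y := y) (y' := y') (Y := y) (R := 2 * D)
    (Metric.closedBall_subset_closedBall (by linarith))
    (Metric.closedBall_subset_closedBall' (by rw [dist_comm, ← hD]; linarith))
    ((Metric.closedBall_subset_closedBall hd).trans hQ)
  have t4 := hmax (2 * D) (by linarith) hd
  have t5 : |aa F1 F2 g y D - aa F1 F2 g y' D| ≤ 8 * kc * l * D := by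
    refine t3.trans ?_
    calc _ ≤ kc * (1 / D + 1 / D) * (l * (2 * D) ^ 2) := by gcongr
      _ = _ := by field_simp; ring
  rw [abs_le] at *
  constructor <;> linarith [t1.1, t1.2, t2.1, t2.2, t5.1, t5.2]

end


end

section
open scoped NNReal ENNReal Topology
open MeasureTheory Filter

noncomputable def n2 (x : ℝ × ℝ) : ℝ := Real.sqrt (x.1 ^ 2 + x.2 ^ 2)

lemma n2_eq (x : ℝ × ℝ) : n2 x = ‖(⟨x.1, x.2⟩ : ℂ)‖ := by
  rw [Complex.norm_eq_sqrt_sq_add_sq]; rfl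

lemma n2_lip (x y : ℝ × ℝ) : |n2 x - n2 y| ≤ 2 * dist x y := by
  rw [n2_eq, n2_eq]
  refine (abs_norm_sub_norm_le _ _).trans ?_
  refine (Complex.norm_le_abs_re_add_abs_im _).trans ?_
  simp only [Complex.sub_re, Complex.sub_im]
  rw [Prod.dist_eq, Real.dist_eq, Real.dist_eq]
  linarith [le_max_left |x.1 - y.1| |x.2 - y.2|, le_max_right |x.1 - y.1| |x.2 - y.2|]

lemma abs_fst_le (x : ℝ × ℝ) : |x.1| ≤ n2 x := Real.abs_le_sqrt (by nlinarith [sq_nonneg x.2])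
lemma abs_snd_le (x : ℝ × ℝ) : |x.2| ≤ n2 x := Real.abs_le_sqrt (by nlinarith [sq_nonneg x.1])

noncomputable def RR (x : ℝ × ℝ) : ℝ × ℝ := (x.1 / max 1 (n2 x), x.2 / max 1 (n2 x))

lemma RR_lip : LipschitzWith 3 RR := by
  refine LipschitzWith.of_dist_le_mul fun x y => ?_
  have hx : 1 ≤ max 1 (n2 x) := le_max_left _ _
  have hy : 1 ≤ max 1 (n2 y) := le_max_left _ _
  have hM : |max 1 (n2 x) - max 1 (n2 y)| ≤ 2 * dist x y := by
    refine (abs_max_sub_max_le_max _ _ _ _).trans ?_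
    simp only [sub_self, abs_zero]
    exact max_le (by positivity) (n2_lip x y)
  have key : ∀ a b : ℝ, |a - b| ≤ dist x y → |b| ≤ n2 y →
      |a / max 1 (n2 x) - b / max 1 (n2 y)| ≤ 3 * dist x y := by
    intro a b hab hb
    set p := max 1 (n2 x)
    set q := max 1 (n2 y)
    have hbq : |b| ≤ q := hb.trans (le_max_right _ _)
    have e : a / p - b / q = ((a - b) + (b / q) * (q - p)) / p := by
      field_simp; ring
    rw [e, abs_div, abs_of_pos (show 0 < p by linarith)]
    refine (div_le_self (abs_nonneg _) hx).trans ?_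
    refine (abs_add_le _ _).trans ?_
    rw [abs_mul, abs_div, abs_of_pos (show 0 < q by linarith), abs_sub_comm q p]
    have : |b| / q ≤ 1 := by rw [div_le_one (by linarith)]; exact hbq
    nlinarith [abs_nonneg (p - q)]
  rw [Prod.dist_eq]
  have d1 : |x.1 - y.1| ≤ dist x y := by rw [Prod.dist_eq]; exact le_max_left _ _
  have d2 : |x.2 - y.2| ≤ dist x y := by rw [Prod.dist_eq]; exact le_max_right _ _
  exact max_le (key _ _ d1 (abs_fst_le y)) (key _ _ d2 (abs_snd_le y))

lemma RR_id {x : ℝ × ℝ} (hx : x ∈ D2) : RR x = x := by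
  have : n2 x ≤ 1 := by
    exact Real.sqrt_le_one.2 hx
  unfold RR; rw [max_eq_left this]; simp

lemma U_sub_D2 : U ⊆ D2 := fun x (hx : x.1 ^ 2 + x.2 ^ 2 < 1) => hx.le

lemma RR_sphere {x : ℝ × ℝ} (hx : x ∉ U) : (RR x).1 ^ 2 + (RR x).2 ^ 2 = 1 := by
  have h1 : 1 ≤ x.1 ^ 2 + x.2 ^ 2 := not_lt.1 hx
  have h2 : 1 ≤ n2 x := Real.one_le_sqrt.2 h1
  have h3 : n2 x ^ 2 = x.1 ^ 2 + x.2 ^ 2 := Real.sq_sqrt (by positivity)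
  unfold RR; rw [max_eq_right h2]
  simp only
  rw [div_pow, div_pow, ← add_div, h3, div_self (by linarith)]

lemma RR_D2 (x : ℝ × ℝ) : RR x ∈ D2 := by
  by_cases hx : x ∈ U
  · rw [RR_id (U_sub_D2 hx)]; exact U_sub_D2 hx
  · exact (RR_sphere hx).le

lemma RR_norm (x : ℝ × ℝ) : |(RR x).1| ≤ 1 ∧ |(RR x).2| ≤ 1 := by
  have h : (RR x).1 ^ 2 + (RR x).2 ^ 2 ≤ 1 := RR_D2 x
  constructor <;> apply abs_le_of_sq_le_sq _ zero_le_one <;> nlinarith [sq_nonneg (RR x).1, sq_nonneg (RR x).2]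

lemma sphere_null : volume {p : ℝ × ℝ | p.1 ^ 2 + p.2 ^ 2 = 1} = 0 := by
  have hm : MeasurableSet {p : ℝ × ℝ | p.1 ^ 2 + p.2 ^ 2 = 1} :=
    (isClosed_eq (by fun_prop) (by fun_prop)).measurableSet
  rw [Measure.volume_eq_prod, Measure.measure_prod_null hm]
  refine .of_forall fun x => ?_
  apply Set.Finite.measure_zero
  refine Set.Finite.subset (Set.toFinite {Real.sqrt (1 - x ^ 2), - Real.sqrt (1 - x ^ 2)}) fun y hy => ?_
  have hy' : x ^ 2 + y ^ 2 = 1 := hy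
  have : y ^ 2 = 1 - x ^ 2 := by linarith
  have h2 : |y| = Real.sqrt (1 - x ^ 2) := by rw [← this, Real.sqrt_sq_eq_abs]
  rcases abs_choice y with h | h
  · left; rw [← h2, h]
  · right; rw [← h2, h]; simp

lemma J_intU {a b : ℝ × ℝ → ℝ} (ha : ∃ C, LipschitzWith C a) (hb : ∃ C, LipschitzWith C b) :
    IntegrableOn (J a b) U := by
  obtain ⟨M, hM⟩ := J_bdd ha hb
  exact Measure.integrableOn_of_bounded (M := M) U_fin.ne J_meas.aestronglyMeasurable (.of_forall hM)

lemma D2_closed : IsClosed D2 := isClosed_le (by fun_prop) (by fun_prop)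

lemma integral_J_U {a b : ℝ × ℝ → ℝ} (ha : BL a) (hb : ∃ C, LipschitzWith C b)
    (h : ∀ x ∉ U, a x = 0) : ∫ x in U, J a b x = 0 := by
  rw [← integral_J_zero' ha hb h]
  apply setIntegral_eq_integral_of_ae_compl_eq_zero
  have hn : ∀ᵐ p : ℝ × ℝ, ¬ (p.1 ^ 2 + p.2 ^ 2 = 1) := by
    rw [ae_iff]; simpa using sphere_null
  filter_upwards [hn] with x hx hU
  apply J_zero_off
  have : x ∉ D2 := by
    intro h2
    exact hU (lt_of_le_of_ne h2 hx)
  filter_upwards [D2_closed.isOpen_compl.mem_nhds this] with y hy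
  exact h y fun hh => hy (U_sub_D2 hh)

structure Bd (F1 F2 : ℝ × ℝ → ℝ) : Prop where
  R1 : ∀ x, F1 x = F1 (RR x)
  R2 : ∀ x, F2 x = F2 (RR x)
  low : ∀ p : ℝ × ℝ, p.1 ^ 2 + p.2 ^ 2 = 1 → p.2 ≤ 0 → F1 p = p.1 ∧ F2 p = 0
  up : ∀ p : ℝ × ℝ, p.1 ^ 2 + p.2 ^ 2 = 1 → 0 ≤ p.2 → |F1 p| < 1/4 → 1/4 ≤ F2 p

lemma PP_BL {y r : ℝ} (hr : 0 < r) : BL (PP y r) := by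
  refine ⟨?_, 1, fun x => abs_le.2 ⟨by linarith [(PP_mem y r x).1], (PP_mem y r x).2⟩⟩
  refine ⟨(kc / r).toNNReal, lipschitzWith_of_nnnorm_deriv_le ((PP_smooth y r).differentiable (by norm_num)) fun x => ?_⟩
  have := kc_bound (y := y) x hr
  rw [← NNReal.coe_le_coe, Real.coe_toNNReal _ ((abs_nonneg _).trans this)]
  exact this

lemma BL_const {α : Type*} [PseudoMetricSpace α] (c : ℝ) : BL (fun _ : α => c) :=
  ⟨⟨0, LipschitzWith.const c⟩, |c|, fun _ => le_rfl⟩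

lemma BL.neg {α : Type*} [PseudoMetricSpace α] {f : α → ℝ} (hf : BL f) : BL (fun x => - f x) := by
  have := (BL_const (α := α) 0).sub hf
  simpa using this

lemma Dat.degree {F1 F2 j : ℝ × ℝ → ℝ} (d : Dat Qo F1 F2 j) (b : Bd F1 F2) {y : ℝ × ℝ} {r : ℝ}
    (hr : 0 < r) (hQ : Metric.closedBall y r ⊆ Qo) : aa F1 F2 (fun _ => 1) y r = 1 := by
  have hq : ∀ s, |s - y.1| ≤ r → |s| < 1/4 := fun s hs =>
    (hQ (mem_box.2 (show (s, y.2).1 ∈ _ ∧ (s, y.2).2 ∈ _ from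
      ⟨hs, Metric.mem_closedBall_self hr.le⟩))).1
  have hq2 : ∀ s, |s - y.2| ≤ r → 0 < s ∧ s < 1/4 := fun s hs =>
    (hQ (mem_box.2 (show (y.1, s).1 ∈ _ ∧ (y.1, s).2 ∈ _ from
      ⟨Metric.mem_closedBall_self hr.le, hs⟩))).2
  have hk1 : ∀ s, ¬ |s| < 1/4 → ker y.1 r s = 0 := fun s hs => ker_zero hr fun h => hs (hq s h)
  have hlo : 0 < y.2 - r := (hq2 (y.2 - r) (by rw [sub_sub_cancel_left, abs_neg, abs_of_pos hr])).1
  have hhi : y.2 + r < 1/4 := (hq2 (y.2 + r) (by rw [add_sub_cancel_left, abs_of_pos hr])).2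
  set ze : ℝ → ℝ := fun t => 1 - PP (-0.7) 0.2 t with hze
  set xi : ℝ → ℝ := fun t => 1 - PP (-0.2) 0.1 t with hxi
  set M : ℝ × ℝ → ℝ := fun x => - (ker y.1 r x.1 * ze x.2) with hM
  set al : ℝ × ℝ → ℝ := fun x => ker y.1 r (F1 x) * (PP y.2 r (F2 x) - 1) with hal
  have bker : BL (ker y.1 r) := BL_of_smooth (ker_smooth _ _) (ker_compact hr)
  have bze : BL ze := (BL_const 1).sub (PP_BL (by norm_num))
  have bxi : BL xi := (BL_const 1).sub (PP_BL (by norm_num))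
  have lfst : ∃ C, LipschitzWith C (fun x : ℝ × ℝ => x.1) := ⟨_, LipschitzWith.prod_fst⟩
  have lsnd : ∃ C, LipschitzWith C (fun x : ℝ × ℝ => x.2) := ⟨_, LipschitzWith.prod_snd⟩
  have lR : ∃ C, LipschitzWith C RR := ⟨_, RR_lip⟩
  have bM : BL M := ((bker.comp lfst).mul (bze.comp lsnd)).neg
  have bMR : BL (fun x => M (RR x)) := bM.comp lR
  have bal : BL al := (bker.comp d.l1).mul (((PP_BL hr).comp d.l2).sub (BL_const 1))
  have hd1 : ∀ᵐ x, DifferentiableAt ℝ F1 x := by obtain ⟨C, hC⟩ := d.l1; exact hC.ae_differentiableAt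
  have hd2 : ∀ᵐ x, DifferentiableAt ℝ F2 x := by obtain ⟨C, hC⟩ := d.l2; exact hC.ae_differentiableAt
  have hRU : ∀ x ∈ U, RR =ᶠ[𝓝 x] id := fun x hx => by
    filter_upwards [U_open.mem_nhds hx] with z hz
    exact RR_id (U_sub_D2 hz)
  have dM : ∀ x, DifferentiableAt ℝ M x := by
    have : Differentiable ℝ (ker y.1 r) := (ker_smooth _ _).differentiable (by norm_num)
    have h2 : Differentiable ℝ (PP (-0.7) 0.2) := (PP_smooth _ _).differentiable (by norm_num)
    intro x
    have : Differentiable ℝ M := by simp only [hM, hze]; fun_prop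
    exact this x
  -- step (i)
  have s1 : ∫ x in U, J (fun x => al x - M (RR x)) F1 x = 0 := by
    apply integral_J_U (bal.sub bMR) d.l1
    intro x hx
    have e1 : al x = al (RR x) := by simp only [hal]; rw [b.R1 x, b.R2 x]
    rw [e1]
    have hp := RR_sphere hx
    generalize RR x = p at hp
    simp only [hal, hM, hze]
    rcases le_total p.2 0 with h | h
    · obtain ⟨e1, e2⟩ := b.low p hp h
      rw [e1, e2]
      by_cases h4 : |p.1| < 1/4
      · have : p.2 ≤ -0.7 - 0.2 := by
          rw [abs_lt] at h4
          nlinarith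
        rw [PP_left (by norm_num) this, PP_left hr hlo.le]; ring
      · rw [hk1 _ h4]; ring
    · rw [PP_right (y := -0.7) (by norm_num) (by norm_num; linarith)]
      by_cases h4 : |F1 p| < 1/4
      · rw [PP_right hr (by linarith [b.up p hp h h4])]; ring
      · rw [hk1 _ h4]; ring
  have i1 : IntegrableOn (fun x => ker y.1 r (F1 x) * ker y.2 r (F2 x) * 1 * J F1 F2 x) U :=
    (d.AA_int (g := fun _ => 1) (BL_const 1) (ker_cont _ _) (ker_cont _ _) (M := kc / r * (kc / r)) (fun z hz => by
      by_cases hz1 : z.1 ∈ Metric.closedBall y.1 r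
      · have : z.2 ∉ Metric.closedBall y.2 r := fun hh => hz (hQ (mem_box.2 ⟨hz1, hh⟩))
        rw [ker_zero hr this, mul_zero]
      · rw [ker_zero hr hz1, zero_mul]) (fun u t => by
        rw [abs_mul]
        have := kc_bound (y := y.1) u hr
        have := kc_bound (y := y.2) t hr
        have := kc_one
        gcongr)).integrableOn
  have e1 : aa F1 F2 (fun _ => 1) y r = ∫ x in U, ker y.1 r (F1 x) * ker y.2 r (F2 x) * 1 * J F1 F2 x := by
    symm
    apply setIntegral_eq_integral_of_forall_compl_eq_zero
    intro x hx
    have hz : (F1 x, F2 x) ∉ Metric.closedBall y r := fun h => d.off x hx (hQ h)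
    by_cases hz1 : F1 x ∈ Metric.closedBall y.1 r
    · have : F2 x ∉ Metric.closedBall y.2 r := fun hh => hz (mem_box.2 ⟨hz1, hh⟩)
      rw [ker_zero hr this]; ring
    · rw [ker_zero hr hz1]; ring
  have e2 : ∫ x in U, J (fun x => al x - M (RR x)) F1 x =
      ∫ x in U, (- (ker y.1 r (F1 x) * ker y.2 r (F2 x) * 1 * J F1 F2 x) - J M F1 x) := by
    apply setIntegral_congr_ae U_open.measurableSet
    filter_upwards [hd1, hd2] with x h1 h2 hU
    have dk : DifferentiableAt ℝ (ker y.1 r) (F1 x) := (ker_smooth _ _).differentiable (by norm_num) _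
    have dP0 : DifferentiableAt ℝ (PP y.2 r) (F2 x) := (PP_smooth y.2 r).differentiable (by norm_num) _
    have dP : DifferentiableAt ℝ (fun t => PP y.2 r t - 1) (F2 x) := dP0.sub_const 1
    have hMR : (fun x => M (RR x)) =ᶠ[𝓝 x] M := by
      filter_upwards [hRU x hU] with z hz
      rw [hz]; rfl
    have dMR : DifferentiableAt ℝ (fun x => M (RR x)) x := (dM x).congr_of_eventuallyEq hMR
    have da1 : DifferentiableAt ℝ (fun x => ker y.1 r (F1 x)) x := dk.comp x h1
    have da2 : DifferentiableAt ℝ (fun x => PP y.2 r (F2 x) - 1) x := dP.comp x h2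
    rw [J_sub (da1.fun_mul da2) dMR, J_congr hMR EventuallyEq.rfl, J_mul da1 da2, J_comp h1 dk, J_self,
      J_comp (K := fun t => PP y.2 r t - 1) h2 dP, J_swap F2 F1]
    have : deriv (fun t => PP y.2 r t - 1) (F2 x) = ker y.2 r (F2 x) := by
      rw [deriv_sub_const]; rfl
    rw [this]; ring
  have iM : IntegrableOn (J M F1) U := J_intU bM.1 d.l1
  rw [e2, integral_sub (f := fun x => -(ker y.1 r (F1 x) * ker y.2 r (F2 x) * 1 * J F1 F2 x)) i1.neg iM, integral_neg, ← e1] at s1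
  -- step (ii)
  have bF : BL (fun x => F1 x - (RR x).1) := by
    obtain ⟨C, hC⟩ := d.l1
    refine ⟨⟨_, hC.sub (LipschitzWith.prod_fst.comp RR_lip)⟩, |F1 0| + C + 1, fun x => ?_⟩
    have h1 := hC.dist_le_mul (RR x) 0
    rw [Real.dist_eq, ← b.R1 x] at h1
    have h2 : dist (RR x) 0 ≤ 1 := by
      rw [dist_zero_right, Prod.norm_def]; exact max_le (RR_norm x).1 (RR_norm x).2
    have h3 := (RR_norm x).1
    have h4 : |F1 x - F1 0| ≤ C := h1.trans (by nlinarith [C.2])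
    rw [abs_le] at *
    have := neg_abs_le (F1 0)
    have := le_abs_self (F1 0)
    constructor <;> linarith [h3.1, h3.2, h4.1, h4.2]
  have s2 : ∫ x in U, J (fun x => (F1 x - (RR x).1) * xi (RR x).2) M x = 0 := by
    apply integral_J_U (bF.mul (bxi.comp ⟨_, LipschitzWith.prod_snd.comp RR_lip⟩)) bM.1
    intro x hx
    show (F1 x - (RR x).1) * xi (RR x).2 = 0
    rw [b.R1 x]
    have hp := RR_sphere hx
    generalize RR x = p at hp
    rcases le_total p.2 0 with h | h
    · rw [(b.low p hp h).1]; ring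
    · simp only [hxi]
      rw [PP_right (by norm_num) (by norm_num; linarith)]; ring
  have e3 : ∫ x in U, J (fun x => (F1 x - (RR x).1) * xi (RR x).2) M x =
      ∫ x in U, (ker y.1 r x.1 * (- ker (-0.7) 0.2 x.2) - J M F1 x) := by
    apply setIntegral_congr_ae U_open.measurableSet
    filter_upwards [hd1] with x h1 hU
    have hf : fderiv ℝ M x (0, 1) = - (ker y.1 r x.1 * (- ker (-0.7) 0.2 x.2)) := by
      have dk : HasDerivAt (PP (-0.7) 0.2) (ker (-0.7) 0.2 x.2) (x.2) :=
        ((PP_smooth (-0.7) 0.2).differentiable (by norm_num) _).hasDerivAt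
      have : HasDerivAt (fun s : ℝ => M (x + s • ((0:ℝ), (1:ℝ)))) (- (ker y.1 r x.1 * (- ker (-0.7) 0.2 x.2))) 0 := by
        have hs : HasDerivAt (fun s : ℝ => x.2 + s) 1 0 := (hasDerivAt_id' (0:ℝ)).const_add x.2
        have h3 : HasDerivAt (fun s : ℝ => PP (-0.7) 0.2 (x.2 + s)) (ker (-0.7) 0.2 x.2 * 1) 0 := by
          apply HasDerivAt.comp (h := fun s : ℝ => x.2 + s) (h₂ := PP (-0.7) 0.2) 0 _ hs
          simpa using dk
        have h4 := ((h3.const_sub 1).const_mul (ker y.1 r x.1)).fun_neg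
        simpa [hM, hze] using h4
      rw [← (dM x).lineDeriv_eq_fderiv]
      exact this.deriv
    have hx1 : J M (fun x : ℝ × ℝ => x.1) x = ker y.1 r x.1 * (- ker (-0.7) 0.2 x.2) := by
      have : fderiv ℝ (fun x : ℝ × ℝ => x.1) x = ContinuousLinearMap.fst ℝ ℝ ℝ := fderiv_fst
      unfold J; rw [this, hf]; simp
    rw [← hx1]
    rcases lt_or_ge x.2 (-0.3) with h | h
    · have : (fun x => (F1 x - (RR x).1) * xi (RR x).2) =ᶠ[𝓝 x] fun x => F1 x - x.1 := by
        filter_upwards [hRU x hU, (isOpen_lt continuous_snd continuous_const).mem_nhds h] with z hz h2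
        have h2' : z.2 < -0.3 := h2
        rw [hz]; simp only [hxi, id]
        rw [PP_left (by norm_num) (by norm_num at h2' ⊢; linarith)]; ring
      rw [J_congr this EventuallyEq.rfl, J_sub h1 differentiableAt_fst, J_swap F1, J_swap (fun x : ℝ × ℝ => x.1)]
      ring
    · have : M =ᶠ[𝓝 x] fun _ => 0 := by
        have h3 : x.2 > -0.5 := by norm_num at h ⊢; linarith
        filter_upwards [(isOpen_lt continuous_const continuous_snd).mem_nhds h3] with z hz
        have hz' : -0.5 < z.2 := hz
        simp only [hM, hze]
        rw [PP_right (by norm_num) (by norm_num at hz' ⊢; linarith)]; ring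
      rw [J_swap _ M, J_zero_off this, J_zero_off this, J_zero_off this]; ring
  have iker : Integrable (fun x : ℝ × ℝ => ker y.1 r x.1 * (- ker (-0.7) 0.2 x.2)) := by
    have k1 : Integrable (ker y.1 r) := (ker_cont _ _).integrable_of_hasCompactSupport (ker_compact hr)
    have k2 : Integrable (ker (-0.7) 0.2) := (ker_cont _ _).integrable_of_hasCompactSupport (ker_compact (by norm_num))
    exact k1.mul_prod k2.neg
  have e4 : ∫ x in U, ker y.1 r x.1 * (- ker (-0.7) 0.2 x.2) = -1 := by
    have : ∫ x in U, ker y.1 r x.1 * (- ker (-0.7) 0.2 x.2) = ∫ x : ℝ × ℝ, ker y.1 r x.1 * (- ker (-0.7) 0.2 x.2) := by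
      apply setIntegral_eq_integral_of_forall_compl_eq_zero
      intro x hx
      by_cases h1 : |x.1| < 1/4
      · have : x.2 ∉ Metric.closedBall (-0.7) 0.2 := by
          intro h2
          apply hx
          rw [Real.closedBall_eq_Icc] at h2
          rw [abs_lt] at h1
          have a1 := h2.1
          have a2 := h2.2
          norm_num at a1 a2
          show x.1 ^ 2 + x.2 ^ 2 < 1
          nlinarith
        rw [ker_zero (by norm_num) this]; simp
      · rw [hk1 _ h1]; simp
    rw [this, Measure.volume_eq_prod, integral_prod_mul (ker y.1 r) (fun t => - ker (-0.7) 0.2 t), integral_neg,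
      ker_integral hr, ker_integral (by norm_num)]
    norm_num
  rw [e3, integral_sub iker.integrableOn iM, e4] at s2
  linarith


end

section
open scoped NNReal ENNReal Topology
open MeasureTheory Filter

def FF (F1 F2 : ℝ × ℝ → ℝ) (x : ℝ × ℝ) : ℝ × ℝ := (F1 x, F2 x)

noncomputable def FF' (F1 F2 : ℝ × ℝ → ℝ) (x : ℝ × ℝ) : ℝ × ℝ →L[ℝ] ℝ × ℝ :=
  (fderiv ℝ F1 x).prod (fderiv ℝ F2 x)

lemma FF'_det (F1 F2 : ℝ × ℝ → ℝ) (x : ℝ × ℝ) : (FF' F1 F2 x).det = J F1 F2 x := det_prod _ _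

/-- A decomposition of the nondegenerate set into injectivity pieces. -/
structure Slc (F1 F2 j : ℝ × ℝ → ℝ) (E : ℕ → Set (ℝ × ℝ)) : Prop where
  meas : ∀ k, MeasurableSet (E k)
  disj : Pairwise (Function.onFun Disjoint E)
  sub : ∀ k, E k ⊆ U
  inj : ∀ k, Set.InjOn (FF F1 F2) (E k)
  der : ∀ k, ∀ x ∈ E k, HasFDerivWithinAt (FF F1 F2) (FF' F1 F2 x) (E k) x
  cov : ∀ᵐ x, x ∈ U → J F1 F2 x ≠ 0 → x ∈ ⋃ k, E k
  mass : ∑' k, volume (FF F1 F2 '' E k) ≤ ENNReal.ofReal (∫ x in U, j x)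

section
variable {Q : Set (ℝ × ℝ)} {F1 F2 j g : ℝ × ℝ → ℝ}

lemma Dat.exists_slc (d : Dat Q F1 F2 j) : ∃ E, Slc F1 F2 j E := by
  classical
  set W : Set (ℝ × ℝ) := {x | x ∈ U ∧ DifferentiableAt ℝ F1 x ∧ DifferentiableAt ℝ F2 x ∧ J F1 F2 x ≠ 0} with hW
  have mW : MeasurableSet W :=
    U_open.measurableSet.inter ((measurableSet_of_differentiableAt ℝ F1).inter
      ((measurableSet_of_differentiableAt ℝ F2).inter (J_meas (measurableSet_singleton 0).compl)))
  have hder : ∀ x ∈ W, HasFDerivAt (FF F1 F2) (FF' F1 F2 x) x := fun x hx =>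
    hx.2.1.hasFDerivAt.prodMk hx.2.2.1.hasFDerivAt
  let rr : (ℝ × ℝ →L[ℝ] ℝ × ℝ) → ℝ≥0 := fun A =>
    if h : A.det ≠ 0 then
      ‖((A.toContinuousLinearEquivOfDetNeZero h).symm : ℝ × ℝ →L[ℝ] ℝ × ℝ)‖₊⁻¹ / 2 else 1
  have rpos : ∀ A, rr A ≠ 0 := by
    intro A
    simp only [rr]
    split_ifs with h
    · apply ne_of_gt
      have := (A.toContinuousLinearEquivOfDetNeZero h).norm_symm_pos
      have h2 : 0 < ‖((A.toContinuousLinearEquivOfDetNeZero h).symm : ℝ × ℝ →L[ℝ] ℝ × ℝ)‖₊ := by exact_mod_cast this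
      positivity
    · exact one_ne_zero
  obtain ⟨t, A, tdisj, tm, tcov, tap, tA⟩ := exists_partition_approximatesLinearOn_of_hasFDerivWithinAt
    (FF F1 F2) W (FF' F1 F2) (fun x hx => (hder x hx).hasFDerivWithinAt) rr rpos
  have hsub : ∀ k, W ∩ t k ⊆ W := fun k => Set.inter_subset_left
  have hinj : ∀ k, Set.InjOn (FF F1 F2) (W ∩ t k) := by
    intro k
    rcases Set.eq_empty_or_nonempty W with h0 | h0
    · rw [h0]; simp
    obtain ⟨y, hy, hAy⟩ := tA h0 k
    have hdet : (A k).det ≠ 0 := by rw [hAy, FF'_det]; exact hy.2.2.2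
    have h1 := tap k
    have h2 : (((A k).toContinuousLinearEquivOfDetNeZero hdet : (ℝ × ℝ) ≃L[ℝ] ℝ × ℝ) : ℝ × ℝ →L[ℝ] ℝ × ℝ) = A k := by
      ext <;> simp
    have h3 : rr (A k) = ‖(((A k).toContinuousLinearEquivOfDetNeZero hdet).symm : ℝ × ℝ →L[ℝ] ℝ × ℝ)‖₊⁻¹ / 2 := by
      simp only [rr]; rw [dif_pos hdet]
    rw [← h2] at h1
    refine h1.injOn (Or.inr ?_)
    rw [h2, h3]
    apply NNReal.half_lt_self
    have := rpos (A k)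
    rw [h3] at this
    intro h; rw [h] at this; simp at this
  have hd : Pairwise (Function.onFun Disjoint fun k => W ∩ t k) := fun a b hab =>
    (tdisj hab).mono Set.inter_subset_right Set.inter_subset_right
  have hder' : ∀ k, ∀ x ∈ W ∩ t k, HasFDerivWithinAt (FF F1 F2) (FF' F1 F2 x) (W ∩ t k) x :=
    fun k x hx => (hder x hx.1).hasFDerivWithinAt
  refine ⟨fun k => W ∩ t k, fun k => mW.inter (tm k), hd, fun k x hx => hx.1.1, hinj, hder', ?_, ?_⟩
  · have hd1 : ∀ᵐ x, DifferentiableAt ℝ F1 x := by obtain ⟨C, hC⟩ := d.l1; exact hC.ae_differentiableAt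
    have hd2 : ∀ᵐ x, DifferentiableAt ℝ F2 x := by obtain ⟨C, hC⟩ := d.l2; exact hC.ae_differentiableAt
    filter_upwards [hd1, hd2] with x h1 h2 hU hJ
    have hx : x ∈ W := ⟨hU, h1, h2, hJ⟩
    rw [← Set.inter_iUnion]
    exact ⟨hx, tcov hx⟩
  · calc ∑' k, volume (FF F1 F2 '' (W ∩ t k))
        = ∑' k, ∫⁻ x in W ∩ t k, ENNReal.ofReal |J F1 F2 x| := by
          congr 1; ext k
          rw [← lintegral_abs_det_fderiv_eq_addHaar_image volume (mW.inter (tm k)) (hder' k) (hinj k)]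
          simp only [FF'_det]
      _ = ∫⁻ x in ⋃ k, W ∩ t k, ENNReal.ofReal |J F1 F2 x| :=
          (lintegral_iUnion (fun k => mW.inter (tm k)) hd _).symm
      _ ≤ ∫⁻ x in U, ENNReal.ofReal |J F1 F2 x| :=
          lintegral_mono_set (Set.iUnion_subset fun k x hx => hx.1.1)
      _ ≤ ∫⁻ x in U, ENNReal.ofReal (j x) := by
          apply lintegral_mono_ae
          rw [ae_restrict_iff' U_open.measurableSet]
          filter_upwards [d.jJ] with x hx hU
          exact ENNReal.ofReal_le_ofReal (hx hU)
      _ = _ := (ofReal_integral_eq_lintegral_ofReal d.ji (.of_forall d.j0)).symm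

noncomputable def xk (F1 F2 : ℝ × ℝ → ℝ) (E : ℕ → Set (ℝ × ℝ)) (k : ℕ) (y : ℝ × ℝ) : ℝ × ℝ :=
  Function.invFunOn (FF F1 F2) (E k) y

noncomputable def hk (F1 F2 g : ℝ × ℝ → ℝ) (E : ℕ → Set (ℝ × ℝ)) (k : ℕ) : ℝ × ℝ → ℝ :=
  (FF F1 F2 '' E k).indicator fun y =>
    (SignType.sign (J F1 F2 (xk F1 F2 E k y)) : ℝ) * g (xk F1 F2 E k y)

noncomputable def SS (F1 F2 g : ℝ × ℝ → ℝ) (E : ℕ → Set (ℝ × ℝ)) (y : ℝ × ℝ) : ℝ :=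
  ∑' k, hk F1 F2 g E k y

variable {E : ℕ → Set (ℝ × ℝ)}

lemma Slc.xk_eq (s : Slc F1 F2 j E) {k : ℕ} {x : ℝ × ℝ} (hx : x ∈ E k) :
    xk F1 F2 E k (FF F1 F2 x) = x := (s.inj k).leftInvOn_invFunOn hx

lemma Slc.im_meas (s : Slc F1 F2 j E) (k : ℕ) : MeasurableSet (FF F1 F2 '' E k) :=
  measurable_image_of_fderivWithin (s.meas k) (s.der k) (s.inj k)

lemma sign_mul_abs' (t c : ℝ) : |t| * ((SignType.sign t : ℝ) * c) = c * t := by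
  rw [← mul_assoc, abs_mul_sign]; ring

lemma Slc.mass_lt (s : Slc F1 F2 j E) : ∑' k, volume (FF F1 F2 '' E k) ≠ ⊤ :=
  (s.mass.trans_lt ENNReal.ofReal_lt_top).ne

lemma Slc.vol_lt (s : Slc F1 F2 j E) (k : ℕ) : volume (FF F1 F2 '' E k) ≠ ⊤ :=
  ENNReal.ne_top_of_tsum_ne_top s.mass_lt k

lemma abs_hk_le {M : ℝ} (hM : ∀ x, |g x| ≤ M) (k : ℕ) (y : ℝ × ℝ) :
    |hk F1 F2 g E k y| ≤ (FF F1 F2 '' E k).indicator (fun _ => M) y := by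
  have hM0 : 0 ≤ M := (abs_nonneg _).trans (hM 0)
  unfold hk
  by_cases h : y ∈ FF F1 F2 '' E k
  · rw [Set.indicator_of_mem h, Set.indicator_of_mem h, abs_mul]
    have h1 : |(SignType.sign (J F1 F2 (xk F1 F2 E k y)) : ℝ)| ≤ 1 := by
      rcases lt_trichotomy (J F1 F2 (xk F1 F2 E k y)) 0 with h | h | h
      · rw [sign_neg h]; simp
      · rw [h]; simp
      · rw [sign_pos h]; simp
    have h2 := hM (xk F1 F2 E k y)
    calc _ ≤ 1 * M := by gcongr
      _ = M := one_mul M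
  · rw [Set.indicator_of_notMem h, Set.indicator_of_notMem h, abs_zero]

lemma Slc.hk_int (s : Slc F1 F2 j E) (hg : BL g) (l1 : ∃ C, LipschitzWith C F1)
    (l2 : ∃ C, LipschitzWith C F2) (k : ℕ) : Integrable (hk F1 F2 g E k) := by
  unfold hk
  rw [integrable_indicator_iff (s.im_meas k),
    integrableOn_image_iff_integrableOn_abs_det_fderiv_smul volume (s.meas k) (s.der k) (s.inj k)]
  obtain ⟨M, hM⟩ := J_bdd l1 l2
  obtain ⟨⟨G, hG⟩, M', hM'⟩ := hg
  have : IntegrableOn (fun x => g x * J F1 F2 x) (E k) := by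
    apply Measure.integrableOn_of_bounded (M := M' * M) ((measure_mono (s.sub k)).trans_lt U_fin).ne
    · exact (hG.continuous.measurable.mul J_meas).aestronglyMeasurable
    · refine .of_forall fun x => ?_
      rw [Real.norm_eq_abs, abs_mul]
      have e2 := hM x
      have e3 := hM' x
      have : 0 ≤ M' := (abs_nonneg _).trans e3
      gcongr
  refine this.congr_fun (fun x hx => ?_) (s.meas k)
  simp only [smul_eq_mul, FF'_det]
  rw [s.xk_eq hx, sign_mul_abs']

lemma Slc.hk_integral (s : Slc F1 F2 j E) (η : ℝ × ℝ → ℝ) (k : ℕ) :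
    ∫ y, η y * hk F1 F2 g E k y = ∫ x in E k, η (F1 x, F2 x) * g x * J F1 F2 x := by
  unfold hk
  have : ∀ y, η y * (FF F1 F2 '' E k).indicator (fun y =>
      (SignType.sign (J F1 F2 (xk F1 F2 E k y)) : ℝ) * g (xk F1 F2 E k y)) y =
      (FF F1 F2 '' E k).indicator (fun y => η y * (
      (SignType.sign (J F1 F2 (xk F1 F2 E k y)) : ℝ) * g (xk F1 F2 E k y))) y := by
    intro y
    by_cases h : y ∈ FF F1 F2 '' E k
    · simp only [Set.indicator_of_mem h]
    · simp only [Set.indicator_of_notMem h, mul_zero]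
  simp_rw [this]
  rw [integral_indicator (s.im_meas k),
    integral_image_eq_integral_abs_det_fderiv_smul volume (s.meas k) (s.der k) (s.inj k)]
  apply setIntegral_congr_fun (s.meas k)
  intro x hx
  simp only [smul_eq_mul, FF'_det]
  rw [s.xk_eq hx]
  have := sign_mul_abs' (J F1 F2 x) (η (F1 x, F2 x) * g x)
  rw [← this]
  show _ * (η (F1 x, F2 x) * _) = _
  ring

lemma Slc.sum_int (s : Slc F1 F2 j E) (hg : BL g) (l1 : ∃ C, LipschitzWith C F1)
    (l2 : ∃ C, LipschitzWith C F2) : Summable fun k => ∫ y, ‖hk F1 F2 g E k y‖ := by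
  obtain ⟨M, hM⟩ := hg.2
  have h0 : Summable fun k => M * (volume (FF F1 F2 '' E k)).toReal :=
    (ENNReal.summable_toReal s.mass_lt).mul_left M
  refine h0.of_nonneg_of_le (fun k => integral_nonneg fun _ => norm_nonneg _) fun k => ?_
  have : ∫ y, (FF F1 F2 '' E k).indicator (fun _ => M) y = M * (volume (FF F1 F2 '' E k)).toReal := by
    rw [integral_indicator (s.im_meas k), setIntegral_const, smul_eq_mul, mul_comm]; rfl
  rw [← this]
  apply integral_mono (s.hk_int hg l1 l2 k).norm
  · rw [integrable_indicator_iff (s.im_meas k)]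
    exact integrableOn_const (s.vol_lt k)
  · exact fun y => abs_hk_le hM k y

/-- multiplicity -/
noncomputable def NN (F1 F2 : ℝ × ℝ → ℝ) (E : ℕ → Set (ℝ × ℝ)) (y : ℝ × ℝ) : ℝ≥0∞ :=
  ∑' k, (FF F1 F2 '' E k).indicator (fun _ => 1) y

lemma Slc.NN_int (s : Slc F1 F2 j E) : ∫⁻ y, NN F1 F2 E y = ∑' k, volume (FF F1 F2 '' E k) := by
  unfold NN
  rw [lintegral_tsum fun k => (measurable_const.indicator (s.im_meas k)).aemeasurable]
  congr 1; ext k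
  rw [lintegral_indicator (s.im_meas k)]; simp

lemma Slc.NN_meas (s : Slc F1 F2 j E) : Measurable (NN F1 F2 E) :=
  Measurable.ennreal_tsum fun k => measurable_const.indicator (s.im_meas k)

lemma NN_finite {y : ℝ × ℝ} (h : NN F1 F2 E y ≠ ⊤) : {k | y ∈ FF F1 F2 '' E k}.Finite := by
  have := ENNReal.finite_const_le_of_tsum_ne_top h one_ne_zero
  refine this.subset fun k hk' => ?_
  have hk'' : y ∈ FF F1 F2 '' E k := hk'
  show (1:ℝ≥0∞) ≤ _
  rw [Set.indicator_of_mem hk'']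

lemma Slc.NN_ae (s : Slc F1 F2 j E) : ∀ᵐ y, NN F1 F2 E y ≠ ⊤ := by
  have := ae_lt_top s.NN_meas (by rw [s.NN_int]; exact s.mass_lt)
  filter_upwards [this] with y hy using hy.ne

lemma hk_zero {k : ℕ} {y : ℝ × ℝ} (h : y ∉ FF F1 F2 '' E k) : hk F1 F2 g E k y = 0 :=
  Set.indicator_of_notMem h _

lemma SS_summable {y : ℝ × ℝ} (h : NN F1 F2 E y ≠ ⊤) : Summable fun k => hk F1 F2 g E k y :=
  summable_of_finite_support ((NN_finite h).subset fun k hk' => by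
    by_contra h'; exact hk' (hk_zero h'))

lemma Slc.SS_int (s : Slc F1 F2 j E) (hg : BL g) (l1 : ∃ C, LipschitzWith C F1)
    (l2 : ∃ C, LipschitzWith C F2) : Integrable (SS F1 F2 g E) := by
  have hm : AEStronglyMeasurable (SS F1 F2 g E) := by
    apply aestronglyMeasurable_of_tendsto_ae atTop (f := fun n y => ∑ k ∈ Finset.range n, hk F1 F2 g E k y)
    · intro n
      exact Finset.aestronglyMeasurable_fun_sum _ fun k _ => (s.hk_int hg l1 l2 k).aestronglyMeasurable
    · filter_upwards [s.NN_ae] with y hy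
      exact (SS_summable hy).hasSum.tendsto_sum_nat
  obtain ⟨M, hM⟩ := hg.2
  refine ⟨hm, ?_⟩
  have hle : ∀ᵐ y, ‖SS F1 F2 g E y‖ₑ ≤ ENNReal.ofReal M * NN F1 F2 E y := by
    filter_upwards [s.NN_ae] with y hy
    unfold SS NN
    refine (enorm_tsum_le_tsum_enorm).trans ?_
    rw [← ENNReal.tsum_mul_left]
    apply ENNReal.tsum_le_tsum
    intro k
    have := abs_hk_le (F1 := F1) (F2 := F2) (E := E) hM k y
    rw [Real.enorm_eq_ofReal_abs]
    refine (ENNReal.ofReal_le_ofReal this).trans ?_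
    by_cases h : y ∈ FF F1 F2 '' E k
    · rw [Set.indicator_of_mem h, Set.indicator_of_mem h, mul_one]
    · rw [Set.indicator_of_notMem h]; simp
  refine (lintegral_mono_ae hle).trans_lt ?_
  rw [lintegral_const_mul _ s.NN_meas, s.NN_int]
  exact ENNReal.mul_lt_top ENNReal.ofReal_lt_top s.mass_lt.lt_top

lemma Slc.AA_eq (s : Slc F1 F2 j E) (d : Dat Q F1 F2 j) (hg : BL g) {k1 k2 : ℝ → ℝ} (h1 : Continuous k1)
    (h2 : Continuous k2) (hz : ∀ z : ℝ × ℝ, z ∉ Q → k1 z.1 * k2 z.2 = 0) {M : ℝ}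
    (hM : ∀ s t, |k1 s * k2 t| ≤ M) :
    AA F1 F2 g k1 k2 = ∫ y : ℝ × ℝ, k1 y.1 * k2 y.2 * SS F1 F2 g E y := by
  have hint := d.AA_int hg h1 h2 hz hM
  have e1 := hasSum_integral_iUnion (f := fun x => k1 (F1 x) * k2 (F2 x) * g x * J F1 F2 x)
    s.meas s.disj hint.integrableOn
  have hcm : Continuous (fun y : ℝ × ℝ => k1 y.1 * k2 y.2) := by fun_prop
  have e2 := hasSum_integral_of_summable_integral_norm (μ := volume)
    (F := fun k (y : ℝ × ℝ) => k1 y.1 * k2 y.2 * hk F1 F2 g E k y) (fun k => by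
      exact (s.hk_int hg d.l1 d.l2 k).bdd_mul hcm.aestronglyMeasurable (.of_forall fun y => hM y.1 y.2)) (by
      refine ((s.sum_int hg d.l1 d.l2).mul_left M).of_nonneg_of_le (fun k => integral_nonneg fun _ => norm_nonneg _) fun k => ?_
      rw [← integral_const_mul]
      apply integral_mono
      · exact ((s.hk_int hg d.l1 d.l2 k).bdd_mul hcm.aestronglyMeasurable (.of_forall fun y => hM y.1 y.2)).norm
      · exact (s.hk_int hg d.l1 d.l2 k).norm.const_mul M
      · intro y
        simp only
        rw [norm_mul]
        exact mul_le_mul_of_nonneg_right (hM y.1 y.2) (norm_nonneg _))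
  have e3 : (fun k => ∫ y : ℝ × ℝ, k1 y.1 * k2 y.2 * hk F1 F2 g E k y) =
      fun k => ∫ x in E k, k1 (F1 x) * k2 (F2 x) * g x * J F1 F2 x := by
    ext k
    exact s.hk_integral (fun y => k1 y.1 * k2 y.2) k
  rw [e3] at e2
  have e4 := e1.unique e2
  simp_rw [tsum_mul_left] at e4
  unfold SS
  rw [← e4]
  symm
  apply setIntegral_eq_integral_of_ae_compl_eq_zero
  filter_upwards [s.cov] with x hx hn
  by_cases hU : x ∈ U
  · by_cases hJ : J F1 F2 x = 0
    · rw [hJ, mul_zero]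
    · exact absurd (hx hU hJ) hn
  · rw [hz (F1 x, F2 x) (d.off x hU)]; ring

end


end

section
open scoped NNReal ENNReal Topology
open MeasureTheory Filter

lemma vol_box (y : ℝ × ℝ) {r : ℝ} (hr : 0 ≤ r) :
    volume (Metric.closedBall y r) = ENNReal.ofReal (4 * r ^ 2) := by
  rw [← closedBall_prod_same, Measure.volume_eq_prod, Measure.prod_prod, Real.volume_closedBall,
    Real.volume_closedBall, ← ENNReal.ofReal_mul (by positivity)]
  congr 1; ring

section
variable {F1 F2 j g : ℝ × ℝ → ℝ} {E : ℕ → Set (ℝ × ℝ)}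

lemma Slc.leb_aux (s : Slc F1 F2 j E) (d : Dat Qo F1 F2 j) (hg : BL g) {y : ℝ × ℝ} {r : ℝ} (hr : 0 < r)
    (hQ : Metric.closedBall y r ⊆ Qo) :
    |aa F1 F2 g y r - SS F1 F2 g E y| ≤
      4 * kc ^ 2 * ⨍ z in Metric.closedBall y r, ‖SS F1 F2 g E z - SS F1 F2 g E y‖ := by
  have hkc := kc_one
  have hM : ∀ s t, |ker y.1 r s * ker y.2 r t| ≤ (kc / r) * (kc / r) := by
    intro s t
    rw [abs_mul]
    exact mul_le_mul (kc_bound s hr) (kc_bound t hr) (abs_nonneg _) (by positivity)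
  have hz : ∀ z : ℝ × ℝ, z ∉ Metric.closedBall y r → ker y.1 r z.1 * ker y.2 r z.2 = 0 := by
    intro z hz
    rw [mem_box, not_and_or] at hz
    rcases hz with h | h
    · rw [ker_zero hr h, zero_mul]
    · rw [ker_zero hr h, mul_zero]
  have e1 : aa F1 F2 g y r = ∫ z : ℝ × ℝ, ker y.1 r z.1 * ker y.2 r z.2 * SS F1 F2 g E z :=
    s.AA_eq d hg (ker_cont _ _) (ker_cont _ _) (fun z h => hz z fun h' => h (hQ h')) hM
  have hcm : Continuous (fun z : ℝ × ℝ => ker y.1 r z.1 * ker y.2 r z.2) :=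
    ((ker_cont _ _).comp continuous_fst).mul ((ker_cont _ _).comp continuous_snd)
  have hS := s.SS_int hg d.l1 d.l2
  have i1 : Integrable fun z : ℝ × ℝ => ker y.1 r z.1 * ker y.2 r z.2 * SS F1 F2 g E z :=
    hS.bdd_mul hcm.aestronglyMeasurable (.of_forall fun z => hM z.1 z.2)
  have hk1 : Integrable (fun z : ℝ × ℝ => ker y.1 r z.1 * ker y.2 r z.2) :=
    hcm.integrable_of_hasCompactSupport (HasCompactSupport.intro (isCompact_closedBall y r) hz)
  have e2 : ∫ z : ℝ × ℝ, ker y.1 r z.1 * ker y.2 r z.2 = 1 := by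
    rw [Measure.volume_eq_prod, integral_prod_mul, ker_integral hr, ker_integral hr, one_mul]
  have e3 : aa F1 F2 g y r - SS F1 F2 g E y =
      ∫ z : ℝ × ℝ, ker y.1 r z.1 * ker y.2 r z.2 * (SS F1 F2 g E z - SS F1 F2 g E y) := by
    simp_rw [mul_sub]
    rw [integral_sub i1 (hk1.mul_const _), integral_mul_const, e2, e1, one_mul]
  have e4 : ∫ z : ℝ × ℝ, ker y.1 r z.1 * ker y.2 r z.2 * (SS F1 F2 g E z - SS F1 F2 g E y) =
      ∫ z in Metric.closedBall y r, ker y.1 r z.1 * ker y.2 r z.2 * (SS F1 F2 g E z - SS F1 F2 g E y) := by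
    symm
    apply setIntegral_eq_integral_of_forall_compl_eq_zero
    intro z h; rw [hz z h, zero_mul]
  have i2 : IntegrableOn (fun z => SS F1 F2 g E z - SS F1 F2 g E y) (Metric.closedBall y r) :=
    hS.integrableOn.sub (integrableOn_const (by rw [vol_box y hr.le]; exact ENNReal.ofReal_ne_top))
  rw [e3, e4, ← Real.norm_eq_abs]
  calc _ ≤ ∫ z in Metric.closedBall y r, (kc / r) * (kc / r) * ‖SS F1 F2 g E z - SS F1 F2 g E y‖ := by
        apply norm_integral_le_of_norm_le
        · exact i2.norm.const_mul _
        · refine .of_forall fun z => ?_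
          rw [norm_mul]
          exact mul_le_mul_of_nonneg_right (hM z.1 z.2) (norm_nonneg _)
    _ = _ := by
        rw [integral_const_mul, setAverage_eq, Measure.real, vol_box y hr.le, ENNReal.toReal_ofReal (by positivity),
          smul_eq_mul]
        field_simp

lemma Qo_open : IsOpen Qo := by
  unfold Qo
  apply IsOpen.inter
  · exact isOpen_lt (f := fun z : ℝ × ℝ => |z.1|) (by fun_prop) continuous_const
  · apply IsOpen.inter
    · exact isOpen_lt (g := fun z : ℝ × ℝ => z.2) continuous_const (by fun_prop)
    · exact isOpen_lt (f := fun z : ℝ × ℝ => z.2) (by fun_prop) continuous_const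

lemma Slc.leb (s : Slc F1 F2 j E) (d : Dat Qo F1 F2 j) (hg : BL g) :
    ∀ᵐ y, y ∈ Qo → Tendsto (fun ρ => aa F1 F2 g y ρ) (𝓝[>] 0) (𝓝 (SS F1 F2 g E y)) := by
  have hS := s.SS_int hg d.l1 d.l2
  filter_upwards [IsUnifLocDoublingMeasure.ae_tendsto_average_norm_sub volume hS.locallyIntegrable 1] with y hy hQ
  have h1 := hy (l := 𝓝[>] (0:ℝ)) (fun _ => y) id tendsto_id (by
    filter_upwards [self_mem_nhdsWithin] with r hr
    exact Metric.mem_closedBall_self (by have : (0:ℝ) < r := hr; simp only [id]; positivity))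
  rw [tendsto_iff_dist_tendsto_zero]
  have h2 := h1.const_mul (4 * kc ^ 2)
  rw [mul_zero] at h2
  refine squeeze_zero' (.of_forall fun _ => dist_nonneg) ?_ h2
  obtain ⟨ε, he, hb⟩ := Metric.nhds_basis_closedBall.mem_iff.1 (Qo_open.mem_nhds hQ)
  filter_upwards [self_mem_nhdsWithin, nhdsWithin_le_nhds (Iic_mem_nhds he)] with r hr hr'
  rw [Real.dist_eq]
  exact s.leb_aux d hg hr ((Metric.closedBall_subset_closedBall hr').trans hb)

lemma Slc.one (s : Slc F1 F2 j E) (d : Dat Qo F1 F2 j) (b : Bd F1 F2) :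
    ∀ᵐ y, y ∈ Qo → SS F1 F2 (fun _ => 1) E y = 1 := by
  filter_upwards [s.leb d (BL_const 1)] with y hy hQ
  refine tendsto_nhds_unique (hy hQ) (tendsto_const_nhds.congr' ?_)
  obtain ⟨ε, he, hb⟩ := Metric.nhds_basis_closedBall.mem_iff.1 (Qo_open.mem_nhds hQ)
  filter_upwards [self_mem_nhdsWithin, nhdsWithin_le_nhds (Iic_mem_nhds he)] with r hr hr'
  exact (d.degree b hr ((Metric.closedBall_subset_closedBall hr').trans hb)).symm

/-- Maximal bound. -/
lemma max_bound (μ : Measure (ℝ × ℝ)) {l r1 : ℝ} (hl : 0 < l) :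
    volume {y | ∃ ρ, 0 < ρ ∧ ρ ≤ r1 ∧ ENNReal.ofReal (l * ρ ^ 2) < μ (Metric.closedBall y ρ)} ≤
      ENNReal.ofReal (100 / l) * μ Set.univ := by
  set B := {y | ∃ ρ, 0 < ρ ∧ ρ ≤ r1 ∧ ENNReal.ofReal (l * ρ ^ 2) < μ (Metric.closedBall y ρ)} with hB
  have hB' : ∀ y : B, ∃ ρ, 0 < ρ ∧ ρ ≤ r1 ∧ ENNReal.ofReal (l * ρ ^ 2) < μ (Metric.closedBall (y : ℝ × ℝ) ρ) :=
    fun y => y.2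
  choose R R0 R1 R2 using hB'
  obtain ⟨u, -, hd, hc⟩ := Vitali.exists_disjoint_subfamily_covering_enlargement_closedBall
    (Set.univ : Set B) (fun y => (y : ℝ × ℝ)) R r1 (fun y _ => R1 y) 5 (by norm_num)
  have hint : ∀ y ∈ u, (interior (Metric.closedBall (y : ℝ × ℝ) (R y))).Nonempty := fun y _ =>
    ⟨y, Metric.ball_subset_interior_closedBall (Metric.mem_ball_self (R0 y))⟩
  have hcu : u.Countable := hd.countable_of_nonempty_interior hint
  have hsub : B ⊆ ⋃ y ∈ u, Metric.closedBall (y : ℝ × ℝ) (5 * R y) := by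
    intro y hy
    obtain ⟨b, hb, hb'⟩ := hc ⟨y, hy⟩ (Set.mem_univ _)
    exact Set.mem_biUnion hb (hb' (Metric.mem_closedBall_self (R0 _).le))
  calc volume B ≤ ∑' y : u, volume (Metric.closedBall ((y : B) : ℝ × ℝ) (5 * R y)) :=
        (measure_mono hsub).trans (measure_biUnion_le _ hcu _)
    _ ≤ ∑' y : u, ENNReal.ofReal (100 / l) * μ (Metric.closedBall ((y : B) : ℝ × ℝ) (R y)) := by
        apply ENNReal.tsum_le_tsum
        intro y
        rw [vol_box _ (by have := R0 y; positivity)]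
        refine le_trans ?_ (mul_le_mul_right (R2 y).le _)
        rw [← ENNReal.ofReal_mul (by positivity)]
        apply ENNReal.ofReal_le_ofReal
        apply le_of_eq; field_simp; ring
    _ = ENNReal.ofReal (100 / l) * μ (⋃ y ∈ u, Metric.closedBall (y : ℝ × ℝ) (R y)) := by
        rw [ENNReal.tsum_mul_left, measure_biUnion hcu hd fun y _ => Metric.isClosed_closedBall.measurableSet]
    _ ≤ _ := by gcongr; exact Set.subset_univ _

lemma Slc.atoms (s : Slc F1 F2 j E) {y : ℝ × ℝ} {N : ℕ} (hN : NN F1 F2 E y ≤ N)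
    (h1 : SS F1 F2 (fun _ => 1) E y = 1) : ∃ (p : Fin N → ℝ × ℝ) (σ : Fin N → SignType),
      (∀ k, FF F1 F2 (p k) = y ∧ p k ∈ U) ∧ ∀ g, SS F1 F2 g E y = ∑ k, (σ k : ℝ) * g (p k) := by
  classical
  have hfin := NN_finite (ne_top_of_le_ne_top (ENNReal.natCast_ne_top N) hN)
  set T := hfin.toFinset with hT
  have hTm : ∀ k, k ∈ T ↔ y ∈ FF F1 F2 '' E k := fun k => by rw [hT, Set.Finite.mem_toFinset]; rfl
  have hS : ∀ g, SS F1 F2 g E y = ∑ k : T, hk F1 F2 g E k y := by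
    intro g
    unfold SS
    rw [tsum_eq_sum (s := T) (fun k hk' => hk_zero fun h => hk' ((hTm k).2 h)), ← Finset.sum_coe_sort]
  have hc : T.card ≤ N := by
    have : NN F1 F2 E y = T.card := by
      unfold NN
      rw [tsum_eq_sum (s := T) (fun k hk' => Set.indicator_of_notMem (fun h => hk' ((hTm k).2 h)) _)]
      rw [Finset.sum_congr rfl fun k hk' => Set.indicator_of_mem ((hTm k).1 hk') _]
      simp
    rw [this] at hN
    exact_mod_cast hN
  have hx : ∀ k : T, FF F1 F2 (xk F1 F2 E k y) = y ∧ xk F1 F2 E k y ∈ U := by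
    intro k
    have h := (hTm k).1 k.2
    exact ⟨Function.invFunOn_eq h, s.sub k (Function.invFunOn_mem h)⟩
  have hne : Nonempty T := by
    by_contra h
    rw [not_nonempty_iff] at h
    rw [hS] at h1
    simp at h1
  obtain ⟨t0⟩ := hne
  obtain ⟨ι⟩ : Nonempty (T ↪ Fin N) := by
    apply Function.Embedding.nonempty_of_card_le
    simpa using hc
  refine ⟨Function.extend ι (fun t => xk F1 F2 E t y) (fun _ => xk F1 F2 E t0 y),
    Function.extend ι (fun t => SignType.sign (J F1 F2 (xk F1 F2 E t y))) (fun _ => 0), fun k => ?_, fun g => ?_⟩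
  · by_cases h : ∃ t, ι t = k
    · obtain ⟨t, rfl⟩ := h
      rw [ι.injective.extend_apply]
      exact hx t
    · rw [Function.extend_apply' _ _ _ h]
      exact hx t0
  · rw [hS]
    apply Fintype.sum_of_injective ι ι.injective
    · intro k hk'
      rw [Function.extend_apply' _ _ _ hk']
      simp
    · intro t
      rw [ι.injective.extend_apply, ι.injective.extend_apply]
      unfold hk
      rw [Set.indicator_of_mem ((hTm t).1 t.2)]

def Qp : Set (ℝ × ℝ) := Metric.closedBall (0, 1/8) (1/16)

lemma Qp_ball {y : ℝ × ℝ} (hy : y ∈ Qp) : Metric.closedBall y (1/32) ⊆ Qo := by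
  intro z hz
  unfold Qp at hy
  rw [mem_box, Real.closedBall_eq_Icc, Real.closedBall_eq_Icc] at hy hz
  obtain ⟨⟨a1, a2⟩, a3, a4⟩ := hy
  obtain ⟨⟨b1, b2⟩, b3, b4⟩ := hz
  simp only at a1 a2 a3 a4
  refine ⟨abs_lt.2 ⟨by linarith, by linarith⟩, by linarith, by linarith⟩

theorem core (d : Dat Qo F1 F2 j) (b : Bd F1 F2) {C' : ℝ} (hC1 : 1 ≤ C') (hC : ∫ x in U, j x ≤ C')
    {gs : ℕ → ℝ × ℝ → ℝ} (ha : ∀ i, Adm F1 F2 j (gs i)) {N : ℕ} (hN : 256 * C' ≤ N) :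
    ∃ G ⊆ Qp, ENNReal.ofReal (1/128) ≤ volume G ∧
      ∃ (p : ℝ × ℝ → Fin N → ℝ × ℝ) (σ : ℝ × ℝ → Fin N → SignType), ∀ y ∈ G,
        (∀ k, FF F1 F2 (p y k) = y ∧ p y k ∈ U) ∧ ∑ k, (σ y k : ℝ) = 1 ∧
        ∀ y' ∈ G, dist y y' ≤ 1/64 → ∀ i, |∑ k, (σ y k : ℝ) * gs i (p y k) - ∑ k, (σ y' k : ℝ) * gs i (p y' k)|
          ≤ 20 * kc * (25600 * C') * dist y y' := by
  obtain ⟨E, s⟩ := d.exists_slc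
  have hfin := d.fin
  set l := 25600 * C' with hl
  have l0 : 0 < l := by positivity
  set B1 := {y | ∃ ρ, 0 < ρ ∧ ρ ≤ 1/32 ∧ ENNReal.ofReal (l * ρ ^ 2) < mu F1 F2 j (Metric.closedBall y ρ)} with hB1
  have v1 : volume B1 ≤ ENNReal.ofReal (1/256) := by
    refine (max_bound (mu F1 F2 j) l0).trans ?_
    rw [d.mu_univ, ← ENNReal.ofReal_mul (by positivity)]
    apply ENNReal.ofReal_le_ofReal
    calc 100 / l * ∫ x in U, j x ≤ 100 / l * C' := by gcongr
      _ = 1 / 256 := by rw [hl]; field_simp; norm_num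
  set B2 := {y | (N : ℝ≥0∞) ≤ NN F1 F2 E y} with hB2
  have hNpos : (0:ℝ) < N := by linarith
  have v2 : volume B2 ≤ ENNReal.ofReal (1/256) := by
    refine (meas_ge_le_lintegral_div s.NN_meas.aemeasurable (by
      have : N ≠ 0 := by rintro rfl; simp at hNpos
      exact_mod_cast this) (ENNReal.natCast_ne_top N)).trans ?_
    rw [s.NN_int]
    refine (ENNReal.div_le_div_right s.mass _).trans ?_
    rw [← ENNReal.ofReal_natCast, ← ENNReal.ofReal_div_of_pos hNpos]
    apply ENNReal.ofReal_le_ofReal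
    rw [div_le_iff₀ hNpos]
    linarith
  obtain ⟨B3, hB3, v3⟩ : ∃ B3 : Set (ℝ × ℝ), (∀ y ∉ B3, y ∈ Qo → SS F1 F2 (fun _ => 1) E y = 1 ∧
      ∀ i, Tendsto (fun ρ => aa F1 F2 (gs i) y ρ) (𝓝[>] 0) (𝓝 (SS F1 F2 (gs i) E y))) ∧ volume B3 = 0 := by
    have h1 := s.one d b
    have h2 := ae_all_iff.2 fun i => s.leb d (ha i).bl
    have h3 := h1.and h2
    refine ⟨_, fun y hy hQ => ?_, ae_iff.1 h3⟩
    have := not_not.1 hy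
    exact ⟨this.1 hQ, fun i => this.2 i hQ⟩
  have hat : ∀ y, ∃ (p : Fin N → ℝ × ℝ) (σ : Fin N → SignType), y ∈ Qp \ (B1 ∪ B2 ∪ B3) →
      (∀ k, FF F1 F2 (p k) = y ∧ p k ∈ U) ∧ ∀ g, SS F1 F2 g E y = ∑ k, (σ k : ℝ) * g (p k) := by
    intro y
    by_cases hy : y ∈ Qp \ (B1 ∪ B2 ∪ B3)
    · obtain ⟨hQ, hb⟩ := hy
      simp only [Set.mem_union, not_or] at hb
      obtain ⟨p, σ, h⟩ := s.atoms (N := N) (le_of_lt (not_le.1 hb.1.2))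
        (hB3 y hb.2 (Qp_ball hQ (Metric.mem_closedBall_self (by norm_num)))).1
      exact ⟨p, σ, fun _ => h⟩
    · exact ⟨fun _ => 0, fun _ => 0, fun h => absurd h hy⟩
  choose p σ hpσ using hat
  refine ⟨Qp \ (B1 ∪ B2 ∪ B3), Set.diff_subset, ?_, p, σ, fun y hy => ?_⟩
  · have hv : volume (B1 ∪ B2 ∪ B3) ≤ ENNReal.ofReal (1/128) := by
      refine (measure_union_le _ _).trans ?_
      rw [v3, add_zero]
      refine (measure_union_le _ _).trans ((add_le_add v1 v2).trans ?_)
      rw [← ENNReal.ofReal_add (by norm_num) (by norm_num)]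
      norm_num
    have h0 : volume Qp = ENNReal.ofReal (1/64) := by
      unfold Qp; rw [vol_box _ (by norm_num)]; norm_num
    have h1 := le_measure_diff (μ := volume) (s₁ := Qp) (s₂ := B1 ∪ B2 ∪ B3)
    refine le_trans ?_ h1
    rw [h0]
    refine le_trans ?_ (tsub_le_tsub_left hv _)
    rw [← ENNReal.ofReal_sub _ (by norm_num)]
    norm_num
  · obtain ⟨hp, hS⟩ := hpσ y hy
    have hgood : ∀ z ∈ Qp \ (B1 ∪ B2 ∪ B3), (SS F1 F2 (fun _ => 1) E z = 1 ∧
      (∀ i, Tendsto (fun ρ => aa F1 F2 (gs i) z ρ) (𝓝[>] 0) (𝓝 (SS F1 F2 (gs i) E z)))) ∧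
      ∀ ρ, 0 < ρ → ρ ≤ 1/32 → (mu F1 F2 j (Metric.closedBall z ρ)).toReal ≤ l * ρ ^ 2 := by
      intro z hz
      obtain ⟨hQ, hb⟩ := hz
      simp only [Set.mem_union, not_or] at hb
      refine ⟨hB3 z hb.2 (Qp_ball hQ (Metric.mem_closedBall_self (by norm_num))), fun ρ h0 h1 => ?_⟩
      have := hb.1.1
      simp only [hB1, Set.mem_ofPred_eq, not_exists, not_and, not_lt] at this
      exact ENNReal.toReal_le_of_le_ofReal (by positivity) (this ρ h0 h1)
    refine ⟨hp, ?_, fun y' hy' hd i => ?_⟩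
    · have := hS (fun _ => 1)
      simp only [mul_one] at this
      rw [← this]; exact (hgood y hy).1.1
    · rw [← hS (gs i), ← (hpσ y' hy').2 (gs i)]
      exact d.lip (ha i) (Qp_ball hy.1) (Qp_ball hy'.1) l0.le (hgood y hy).2 (hgood y' hy').2
        ((hgood y hy).1.2 i) ((hgood y' hy').1.2 i) (by linarith)

end


end

section
open scoped NNReal ENNReal Topology
open MeasureTheory Filter

section
variable {Y : Type u} [MetricSpace Y] {Φ : ℝ × ℝ → Y} {K : ℝ≥0}

lemma quot_nonneg (Φ : ℝ × ℝ → Y) (x v : ℝ × ℝ) :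
    ∀ᶠ r in 𝓝[>] (0:ℝ), 0 ≤ dist (Φ (x + r • v)) (Φ x) / r := by
  filter_upwards [self_mem_nhdsWithin] with r hr
  have : (0:ℝ) < r := hr
  positivity

lemma quot_le (h : LipschitzWith K Φ) (x v : ℝ × ℝ) :
    ∀ᶠ r in 𝓝[>] (0:ℝ), dist (Φ (x + r • v)) (Φ x) / r ≤ K * ‖v‖ := by
  filter_upwards [self_mem_nhdsWithin] with r hr
  have hr : (0:ℝ) < r := hr
  rw [div_le_iff₀ hr]
  refine (h.dist_le_mul _ _).trans ?_
  rw [dist_eq_norm, add_sub_cancel_left, norm_smul, Real.norm_eq_abs, abs_of_pos hr]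
  apply le_of_eq; ring

lemma quot_bdd (h : LipschitzWith K Φ) (x v : ℝ × ℝ) :
    IsBoundedUnder (· ≤ ·) (𝓝[>] (0:ℝ)) fun r : ℝ => dist (Φ (x + r • v)) (Φ x) / r :=
  isBoundedUnder_of_eventually_le (quot_le h x v)

lemma quot_cobdd (Φ : ℝ × ℝ → Y) (x v : ℝ × ℝ) :
    IsCoboundedUnder (· ≤ ·) (𝓝[>] (0:ℝ)) fun r : ℝ => dist (Φ (x + r • v)) (Φ x) / r :=
  (isBoundedUnder_of_eventually_ge (quot_nonneg Φ x v)).isCoboundedUnder_le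

lemma mder_le (h : LipschitzWith K Φ) (x v : ℝ × ℝ) : mder Φ x v ≤ K * ‖v‖ :=
  limsup_le_of_le (quot_cobdd Φ x v) (quot_le h x v)

lemma mder_iff (h : LipschitzWith K Φ) (x v : ℝ × ℝ) : mder Φ x v ≤ 1 ↔
    ∀ m : ℕ, ∃ n : ℕ, ∀ q : ℚ, 0 < q → q < 1 / ((n:ℚ) + 1) →
      dist (Φ (x + (q:ℝ) • v)) (Φ x) ≤ q * (1 + 1 / ((m:ℝ) + 1)) := by
  unfold mder
  rw [limsup_le_iff (quot_cobdd Φ x v) (quot_bdd h x v)]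
  constructor
  · intro H m
    have h1 := H (1 + 1 / ((m:ℝ) + 1)) (by have : 0 < 1 / ((m:ℝ) + 1) := by positivity
                                           linarith)
    obtain ⟨e, he, h2⟩ := mem_nhdsGT_iff_exists_Ioo_subset.1 h1
    obtain ⟨n, hn⟩ := exists_nat_one_div_lt (show (0:ℝ) < e from he)
    refine ⟨n, fun q q0 q1 => ?_⟩
    have q0' : (0:ℝ) < q := by exact_mod_cast q0
    have q1' : (q:ℝ) < 1 / ((n:ℝ) + 1) := by
      have := (Rat.cast_lt (K := ℝ)).2 q1
      push_cast at this
      exact this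
    have := h2 ⟨q0', q1'.trans hn⟩
    have h3 : dist (Φ (x + (q:ℝ) • v)) (Φ x) / q < 1 + 1 / ((m:ℝ) + 1) := this
    rw [div_lt_iff₀ q0'] at h3
    linarith
  · intro H y hy
    obtain ⟨m, hm⟩ := exists_nat_one_div_lt (show (0:ℝ) < y - 1 by linarith)
    obtain ⟨n, hn⟩ := H m
    filter_upwards [Ioo_mem_nhdsGT (show (0:ℝ) < 1 / ((n:ℝ) + 1) by positivity)] with r hr
    rw [div_lt_iff₀ hr.1]
    refine lt_of_le_of_lt ?_ (show r * (1 + 1 / ((m:ℝ) + 1)) < y * r by nlinarith [hr.1])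
    by_contra hlt
    push Not at hlt
    have hop : IsOpen {s : ℝ | s * (1 + 1 / ((m:ℝ) + 1)) < dist (Φ (x + s • v)) (Φ x)} :=
      isOpen_lt (by fun_prop) ((h.continuous.comp (by fun_prop)).dist continuous_const)
    obtain ⟨s, hs, q, rfl⟩ := (Rat.denseRange_cast (𝕜 := ℝ)).inter_open_nonempty _ (hop.inter (isOpen_Ioo (a := (0:ℝ)) (b := 1 / ((n:ℝ) + 1))))
      ⟨r, hlt, hr⟩
    have q0 : 0 < q := by exact_mod_cast hs.2.1
    have q1 : q < 1 / ((n:ℚ) + 1) := by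
      have := hs.2.2
      rw [← Rat.cast_lt (K := ℝ)]
      push_cast
      exact this
    have := hn q q0 q1
    exact absurd hs.1 (not_lt.2 this)

lemma mder_meas (h : LipschitzWith K Φ) :
    MeasurableSet {z : (ℝ × ℝ) × (ℝ × ℝ) | mder Φ z.1 z.2 ≤ 1} := by
  simp_rw [mder_iff h]
  refine measurableSet_setOf.2 (Measurable.forall fun m => Measurable.exists fun n => Measurable.forall fun q => ?_)
  refine measurable_const.imp (measurable_const.imp (measurableSet_setOf.1 ?_))
  refine (isClosed_le ?_ continuous_const).measurableSet
  have := h.continuous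
  exact (this.comp (by fun_prop)).dist (this.comp (by fun_prop))

lemma jac_meas (h : LipschitzWith K Φ) : Measurable fun x => jac2 (mder Φ x) := by
  have h1 : Measurable fun x => volume {v : ℝ × ℝ | mder Φ x v ≤ 1} :=
    measurable_measure_prodMk_left (mder_meas h)
  unfold jac2
  exact Measurable.ite (measurableSet_lt h1 measurable_const) (measurable_const.div h1.ennreal_toReal) measurable_const

lemma jac_nonneg (s : ℝ × ℝ → ℝ) : 0 ≤ jac2 s := by
  unfold jac2
  split_ifs
  · positivity
  · exact le_rfl

lemma vol_lower (h : LipschitzWith K Φ) (x : ℝ × ℝ) :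
    ENNReal.ofReal (4 * (1 / ((K:ℝ) + 1)) ^ 2) ≤ volume {v : ℝ × ℝ | mder Φ x v ≤ 1} := by
  rw [← vol_box (0 : ℝ × ℝ) (by positivity)]
  apply measure_mono
  intro v hv
  rw [mem_closedBall_zero_iff, le_div_iff₀ (by positivity)] at hv
  exact (mder_le h x v).trans (by nlinarith [norm_nonneg v])

lemma jac_bdd (h : LipschitzWith K Φ) : ∃ M, ∀ x, jac2 (mder Φ x) ≤ M := by
  refine ⟨Real.pi / (4 * (1 / ((K:ℝ) + 1)) ^ 2), fun x => ?_⟩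
  unfold jac2
  split_ifs with hf
  · have := ENNReal.toReal_mono hf.ne (vol_lower h x)
    rw [ENNReal.toReal_ofReal (by positivity)] at this
    gcongr
  · positivity

lemma der_le (h : LipschitzWith K Φ) {r : ℝ} (hr : 0 < r) {α : Y → ℝ}
    (hα : ∀ u v, |α u - α v| ≤ dist u v / r) {x : ℝ × ℝ}
    (hd : DifferentiableAt ℝ (fun z => α (Φ z)) x) (v : ℝ × ℝ) :
    |fderiv ℝ (fun z => α (Φ z)) x v| ≤ mder Φ x v / r := by
  have h1 : HasDerivAt (fun t : ℝ => α (Φ (x + t • v))) (fderiv ℝ (fun z => α (Φ z)) x v) 0 := by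
    have h2 : HasDerivAt (fun t : ℝ => x + t • v) v 0 := by
      simpa using ((hasDerivAt_id (0:ℝ)).smul_const v).const_add x
    have h3 : HasFDerivAt (fun z => α (Φ z)) (fderiv ℝ (fun z => α (Φ z)) x) (x + (0:ℝ) • v) := by
      simpa using hd.hasFDerivAt
    exact h3.comp_hasDerivAt 0 h2
  have h4 := h1.tendsto_slope_zero_right
  simp only [zero_add, zero_smul, add_zero, smul_eq_mul] at h4
  have h5 := (h4.abs).mul_const r
  rw [le_div_iff₀ hr]
  rw [← h5.limsup_eq]
  refine limsup_le_limsup ?_ h5.isBoundedUnder_ge.isCoboundedUnder_le (quot_bdd h x v)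
  filter_upwards [self_mem_nhdsWithin] with t ht
  have ht : (0:ℝ) < t := ht
  rw [abs_mul, abs_inv, abs_of_pos ht]
  have := hα (Φ (x + t • v)) (Φ x)
  rw [le_div_iff₀ hr] at this
  rw [div_eq_inv_mul, mul_assoc]
  gcongr

lemma jac_J (h : LipschitzWith K Φ) {r : ℝ} (hr : 0 < r) {α β : Y → ℝ}
    (hα : ∀ u v, |α u - α v| ≤ dist u v / r) (hβ : ∀ u v, |β u - β v| ≤ dist u v / r) {x : ℝ × ℝ}
    (hd : DifferentiableAt ℝ (fun z => α (Φ z)) x) (hd' : DifferentiableAt ℝ (fun z => β (Φ z)) x) :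
    |J (fun z => α (Φ z)) (fun z => β (Φ z)) x| ≤ 4 / Real.pi * (1 / r ^ 2) * jac2 (mder Φ x) := by
  set j := J (fun z => α (Φ z)) (fun z => β (Φ z)) x with hj
  have hpi := Real.pi_pos
  by_cases h0 : j = 0
  · rw [h0, abs_zero]; have := jac_nonneg (mder Φ x); positivity
  set L := (fderiv ℝ (fun z => α (Φ z)) x).prod (fderiv ℝ (fun z => β (Φ z)) x) with hL
  have hdet : LinearMap.det (L : ℝ × ℝ →ₗ[ℝ] ℝ × ℝ) = j := det_prod _ _
  have hsub : {v : ℝ × ℝ | mder Φ x v ≤ 1} ⊆ L ⁻¹' Metric.closedBall 0 (1 / r) := by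
    intro v hv
    have hv : mder Φ x v ≤ 1 := hv
    rw [Set.mem_preimage, mem_box]
    simp only [Metric.mem_closedBall, Prod.fst_zero, Prod.snd_zero, dist_zero_right, Real.norm_eq_abs]
    exact ⟨(der_le h hr hα hd v).trans (by gcongr), (der_le h hr hβ hd' v).trans (by gcongr)⟩
  have hv : volume {v : ℝ × ℝ | mder Φ x v ≤ 1} ≤ ENNReal.ofReal (|j|⁻¹ * (4 * (1 / r) ^ 2)) := by
    refine (measure_mono hsub).trans ?_
    rw [Measure.addHaar_preimage_continuousLinearMap _ (by rw [hdet]; exact h0), hdet, vol_box _ (by positivity),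
      ← ENNReal.ofReal_mul (abs_nonneg _), abs_inv]
  have hfin := hv.trans_lt ENNReal.ofReal_lt_top
  have hlow := ENNReal.toReal_mono hfin.ne (vol_lower h x)
  rw [ENNReal.toReal_ofReal (by positivity)] at hlow
  have hV := ENNReal.toReal_le_of_le_ofReal (by positivity) hv
  unfold jac2
  rw [if_pos hfin]
  set V := (volume {v : ℝ × ℝ | mder Φ x v ≤ 1}).toReal
  have hVpos : 0 < V := lt_of_lt_of_le (by positivity) hlow
  have hjp : 0 < |j| := abs_pos.2 h0
  have : 4 / Real.pi * (1 / r ^ 2) * (Real.pi / V) = 4 * (1 / r) ^ 2 / V := by field_simp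
  rw [this, le_div_iff₀ hVpos]
  rw [← div_eq_inv_mul, le_div_iff₀ hjp] at hV
  linarith

lemma mder_congr {φ : ℝ × ℝ → Y} (he : ∀ z ∈ U, φ z = Φ z) {x : ℝ × ℝ} (hx : x ∈ U) : mder φ x = mder Φ x := by
  ext v
  unfold mder
  apply limsup_congr
  have : Tendsto (fun r : ℝ => x + r • v) (𝓝[>] 0) (𝓝 x) := by
    have : Continuous fun r : ℝ => x + r • v := by fun_prop
    simpa using (this.tendsto 0).mono_left nhdsWithin_le_nhds
  filter_upwards [this.eventually (U_open.mem_nhds hx)] with r hr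
  rw [he _ hr, he _ hx]

lemma D2_ae : D2 =ᵐ[volume] U := by
  have hn : ∀ᵐ p : ℝ × ℝ, ¬ (p.1 ^ 2 + p.2 ^ 2 = 1) := by
    rw [ae_iff]; simpa using sphere_null
  filter_upwards [hn] with x hx
  apply propext
  exact ⟨fun h => lt_of_le_of_ne h hx, fun h => U_sub_D2 h⟩

lemma area_eq {φ : ℝ × ℝ → Y} (he : ∀ z ∈ U, φ z = Φ z) : lipArea φ = ∫ x in U, jac2 (mder Φ x) := by
  unfold lipArea
  rw [setIntegral_congr_set D2_ae]
  exact setIntegral_congr_fun U_open.measurableSet fun x hx => by rw [mder_congr he hx]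

lemma jac_int (h : LipschitzWith K Φ) : IntegrableOn (fun x => jac2 (mder Φ x)) U := by
  obtain ⟨M, hM⟩ := jac_bdd h
  refine Measure.integrableOn_of_bounded U_fin.ne (jac_meas h).aestronglyMeasurable (M := M) (.of_forall fun x => ?_)
  rw [Real.norm_eq_abs, abs_of_nonneg (jac_nonneg _)]
  exact hM x

lemma lip_of {r : ℝ} (hr : 0 < r) {α : Y → ℝ} (hα : ∀ u v, |α u - α v| ≤ dist u v / r) :
    ∃ C, LipschitzWith C α := by
  refine ⟨(1 / r).toNNReal, LipschitzWith.of_dist_le_mul fun u v => ?_⟩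
  rw [Real.coe_toNNReal _ (by positivity), Real.dist_eq]
  refine (hα u v).trans (le_of_eq ?_)
  ring

lemma jac_J_ae (h : LipschitzWith K Φ) {r : ℝ} (hr : 0 < r) {α β : Y → ℝ}
    (hα : ∀ u v, |α u - α v| ≤ dist u v / r) (hβ : ∀ u v, |β u - β v| ≤ dist u v / r) :
    ∀ᵐ x, x ∈ U → |J (fun z => α (Φ z)) (fun z => β (Φ z)) x| ≤ 4 / Real.pi * (1 / r ^ 2) * jac2 (mder Φ x) := by
  obtain ⟨C, hC⟩ := lip_of hr hα
  obtain ⟨C', hC'⟩ := lip_of hr hβ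
  filter_upwards [(hC.comp h).ae_differentiableAt, (hC'.comp h).ae_differentiableAt] with x h1 h2 _
  exact jac_J h hr hα hβ h1 h2

end


end

section
open scoped NNReal ENNReal Topology
open MeasureTheory Filter

lemma circ_up {p : ℝ × ℝ} (h : p.1 ^ 2 + p.2 ^ 2 = 1) (h2 : 0 ≤ p.2) :
    ∃ s ∈ Set.Icc (0:ℝ) (1/2), (Real.cos (2 * Real.pi * s), Real.sin (2 * Real.pi * s)) = p := by
  have hpi := Real.pi_pos
  have e : 2 * Real.pi * (Real.arccos p.1 / (2 * Real.pi)) = Real.arccos p.1 := by field_simp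
  refine ⟨Real.arccos p.1 / (2 * Real.pi), ⟨by have := Real.arccos_nonneg p.1; positivity, ?_⟩, ?_⟩
  · rw [div_le_iff₀ (by positivity)]; have := Real.arccos_le_pi p.1; linarith
  · rw [e, Real.cos_arccos (by nlinarith) (by nlinarith), Real.sin_arccos]
    have : 1 - p.1 ^ 2 = p.2 ^ 2 := by linarith
    rw [this, Real.sqrt_sq h2]

lemma circ_low {p : ℝ × ℝ} (h : p.1 ^ 2 + p.2 ^ 2 = 1) (h2 : p.2 ≤ 0) :
    ∃ s ∈ Set.Icc (1/2:ℝ) 1, (Real.cos (2 * Real.pi * s), Real.sin (2 * Real.pi * s)) = p := by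
  obtain ⟨s, hs, e⟩ := circ_up (p := (p.1, -p.2)) (by simpa using h) (by simpa using h2)
  refine ⟨1 - s, ⟨by linarith [hs.2], by linarith [hs.1]⟩, ?_⟩
  have : 2 * Real.pi * (1 - s) = 2 * Real.pi - 2 * Real.pi * s := by ring
  rw [this, Real.cos_two_pi_sub, Real.sin_two_pi_sub]
  rw [Prod.mk.injEq] at e
  rw [e.1, e.2, neg_neg]

section
variable {Y : Type u} [MetricSpace Y]

noncomputable def gam (r : ℝ) (g c : ℝ → Y) (s : ℝ) : Y :=
  if s ≤ 1/2 then c (2 * s) else g (r * Real.cos (2 * Real.pi * s))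

lemma gam_right {r : ℝ} {g c : ℝ → Y} (h : c 1 = g (-r)) {s : ℝ} (hs : 1/2 ≤ s) :
    gam r g c s = g (r * Real.cos (2 * Real.pi * s)) := by
  unfold gam
  split_ifs with h'
  · have : s = 1/2 := le_antisymm h' hs
    subst this
    have e : 2 * Real.pi * (1/2) = Real.pi := by ring
    rw [e, Real.cos_pi]
    norm_num
    exact h
  · rfl

lemma gam_lip {r : ℝ} (hr : 0 < r) {g c : ℝ → Y} (h1 : c 1 = g (-r))
    (hg : ∀ s ∈ Set.Icc (-r) r, ∀ t ∈ Set.Icc (-r) r, dist (g s) (g t) = |s - t|)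
    (hc : ∀ s ∈ Set.Icc (0:ℝ) 1, ∀ t ∈ Set.Icc (0:ℝ) 1, dist (c s) (c t) ≤ 10000 * r * |s - t|) :
    LipschitzOnWith (20000 * r).toNNReal (gam r g c) (Set.Icc 0 1) := by
  have L : ∀ s ∈ Set.Icc (0:ℝ) (1/2), ∀ t ∈ Set.Icc (0:ℝ) (1/2),
      dist (gam r g c s) (gam r g c t) ≤ 20000 * r * |s - t| := by
    intro s hs t ht
    unfold gam
    rw [if_pos hs.2, if_pos ht.2]
    refine (hc _ ⟨by linarith [hs.1], by linarith [hs.2]⟩ _ ⟨by linarith [ht.1], by linarith [ht.2]⟩).trans ?_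
    rw [← mul_sub, abs_mul, abs_two]
    apply le_of_eq; ring
  have hm : ∀ s : ℝ, r * Real.cos (2 * Real.pi * s) ∈ Set.Icc (-r) r := fun s =>
    ⟨by nlinarith [Real.neg_one_le_cos (2 * Real.pi * s)], by nlinarith [Real.cos_le_one (2 * Real.pi * s)]⟩
  have R : ∀ s ∈ Set.Icc (1/2:ℝ) 1, ∀ t ∈ Set.Icc (1/2:ℝ) 1,
      dist (gam r g c s) (gam r g c t) ≤ 20000 * r * |s - t| := by
    intro s hs t ht
    rw [gam_right h1 hs.1, gam_right h1 ht.1, hg _ (hm s) _ (hm t), ← mul_sub, abs_mul, abs_of_pos hr]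
    have h2 : |Real.cos (2 * Real.pi * s) - Real.cos (2 * Real.pi * t)| ≤ |2 * Real.pi * s - 2 * Real.pi * t| := by
      have := Real.abs_cos_sub_cos_le (2 * Real.pi * s) (2 * Real.pi * t)
      exact this
    rw [← mul_sub, abs_mul, abs_of_pos (show 0 < 2 * Real.pi by have := Real.pi_pos; positivity)] at h2
    have h3 := Real.pi_le_four
    have : 2 * Real.pi * |s - t| ≤ 20000 * |s - t| := by
      apply mul_le_mul_of_nonneg_right _ (abs_nonneg _); linarith
    calc _ ≤ r * (20000 * |s - t|) := by gcongr; exact h2.trans this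
      _ = _ := by ring
  have key : ∀ s ∈ Set.Icc (0:ℝ) 1, ∀ t ∈ Set.Icc (0:ℝ) 1, s ≤ t →
      dist (gam r g c s) (gam r g c t) ≤ 20000 * r * |s - t| := by
    intro s hs t ht hst
    rcases le_total t (1/2) with h | h
    · exact L s ⟨hs.1, by linarith⟩ t ⟨ht.1, h⟩
    rcases le_total (1/2) s with h' | h'
    · exact R s ⟨h', hs.2⟩ t ⟨h, ht.2⟩
    refine (dist_triangle _ (gam r g c (1/2)) _).trans ?_
    have a1 := L s ⟨hs.1, h'⟩ (1/2) ⟨by norm_num, le_rfl⟩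
    have a2 := R (1/2) ⟨le_rfl, by norm_num⟩ t ⟨h, ht.2⟩
    rw [abs_of_nonpos (by linarith)] at a1 a2 ⊢
    linarith
  apply LipschitzOnWith.of_dist_le_mul
  intro s hs t ht
  rw [Real.coe_toNNReal _ (by positivity), Real.dist_eq]
  rcases le_total s t with h | h
  · exact key s hs t ht h
  · rw [dist_comm, abs_sub_comm]; exact key t ht s hs h

lemma len_le {γ : ℝ → Y} {K : ℝ≥0} (h : LipschitzOnWith K γ (Set.Icc 0 1)) : loopLength γ ≤ K := by
  unfold loopLength
  have h1 := h.comp_eVariationOn_le (g := id) (s := Set.Icc (0:ℝ) 1) (Set.mapsTo_id _)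
  have h2 : eVariationOn (id : ℝ → ℝ) (Set.Icc (0:ℝ) 1) ≤ 1 := by
    have := (monotone_id.monotoneOn (Set.Icc (0:ℝ) 1)).eVariationOn_le (a := 0) (b := 1) (by simp) (by simp)
    simpa using this
  have h3 : eVariationOn γ (Set.Icc 0 1) ≤ K := by
    refine h1.trans ?_
    calc (K : ℝ≥0∞) * _ ≤ K * 1 := by gcongr
      _ = K := mul_one _
  exact ENNReal.toReal_mono ENNReal.coe_ne_top h3

/-- Quadratic isoperimetric inequality with constant. -/
def QI (Y : Type u) [MetricSpace Y] (C : ℝ) : Prop := ∀ c : ℝ → Y, IsLipLoop c →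
    ∃ φ : ℝ × ℝ → Y, BoundsLoop φ c ∧ lipArea φ ≤ C * (loopLength c) ^ 2

noncomputable def pi1 (r : ℝ) (g : ℝ → Y) (w : Y) : ℝ := (dist w (g (-r)) - r) / r
noncomputable def pi2 (r : ℝ) (g : ℝ → Y) (w : Y) : ℝ := Metric.infDist w (g '' Set.Icc (-r) r) / r

lemma pi1_lip {r : ℝ} (hr : 0 < r) (g : ℝ → Y) (u v : Y) : |pi1 r g u - pi1 r g v| ≤ dist u v / r := by
  unfold pi1
  rw [← sub_div, abs_div, abs_of_pos hr]
  gcongr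
  rw [sub_sub_sub_cancel_right]
  exact abs_dist_sub_le _ _ _

lemma pi2_lip {r : ℝ} (hr : 0 < r) (g : ℝ → Y) (u v : Y) : |pi2 r g u - pi2 r g v| ≤ dist u v / r := by
  unfold pi2
  rw [← sub_div, abs_div, abs_of_pos hr]
  gcongr
  have := (Metric.lipschitz_infDist_pt (g '' Set.Icc (-r) r)).dist_le_mul u v
  simpa [Real.dist_eq] using this

noncomputable def bmp (r δ : ℝ) (w u : Y) : ℝ := max 0 (δ - dist w u / r)

lemma bmp_lip {r : ℝ} (hr : 0 < r) (δ : ℝ) (w u v : Y) : |bmp r δ w u - bmp r δ w v| ≤ dist u v / r := by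
  unfold bmp
  refine (abs_max_sub_max_le_max _ _ _ _).trans ?_
  rw [sub_self, abs_zero, sub_sub_sub_cancel_left, ← sub_div, abs_div, abs_of_pos hr]
  apply max_le (by positivity)
  gcongr
  have := abs_dist_sub_le v u w
  rwa [dist_comm v w, dist_comm u w, dist_comm v u] at this

lemma bmp_bdd {r : ℝ} (hr : 0 < r) (δ : ℝ) (w u : Y) : |bmp r δ w u| ≤ |δ| := by
  unfold bmp
  rw [abs_of_nonneg (le_max_left _ _)]
  apply max_le (abs_nonneg _)
  have : 0 ≤ dist w u / r := by positivity
  have := le_abs_self δ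
  linarith

noncomputable def Ct (C : ℝ) : ℝ := 1 + 1000000000 * C

theorem scale {C : ℝ} (hC : 0 < C) (hQ : QI Y C) {r : ℝ} (hr : 0 < r) {g : ℝ → Y}
    (hg : ∀ s ∈ Set.Icc (-r) r, ∀ t ∈ Set.Icc (-r) r, dist (g s) (g t) = |s - t|)
    (hcn : Conn {w | r ≤ dist (g 0) w} (10000 * r) (g r) (g (-r))) {N : ℕ} (hN : 256 * Ct C ≤ N) :
    ∃ G ⊆ Qp, ENNReal.ofReal (1/128) ≤ volume G ∧
      ∃ (p : ℝ × ℝ → Fin N → Y) (σ : ℝ × ℝ → Fin N → SignType), ∀ y ∈ G,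
        (∀ k, (pi1 r g (p y k), pi2 r g (p y k)) = y) ∧ ∑ k, (σ y k : ℝ) = 1 ∧
        ∀ y' ∈ G, dist y y' ≤ 1/64 → ∀ z k' δ,
          |∑ k, (σ y k : ℝ) * bmp r δ (p z k') (p y k) - ∑ k, (σ y' k : ℝ) * bmp r δ (p z k') (p y' k)|
          ≤ 20 * kc * (25600 * Ct C) * dist y y' := by
  obtain ⟨c, hc, hc0, hc1, hcS⟩ := hcn
  have hpi := Real.pi_pos
  have hlip := gam_lip hr hc1 hg hc
  have g0 : gam r g c 0 = g r := by unfold gam; rw [if_pos (by norm_num), mul_zero, hc0]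
  have g1 : gam r g c 1 = g r := by rw [gam_right hc1 (by norm_num), mul_one, Real.cos_two_pi, mul_one]
  obtain ⟨φ, ⟨⟨K, hK⟩, hφ⟩, harea⟩ := hQ (gam r g c) ⟨⟨_, hlip⟩, g0.trans g1.symm⟩
  set Φ : ℝ × ℝ → Y := fun x => φ (RR x) with hΦ
  have hΦl : LipschitzWith (K * 3) Φ := by
    have := hK.comp (RR_lip.lipschitzOnWith (s := Set.univ)) (fun x _ => RR_D2 x)
    rwa [lipschitzOnWith_univ] at this
  have hlen := len_le hlip
  rw [Real.coe_toNNReal _ (by positivity)] at hlen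
  have hlen0 : 0 ≤ loopLength (gam r g c) := ENNReal.toReal_nonneg
  have harea' : ∫ x in U, jac2 (mder Φ x) ≤ C * (20000 * r) ^ 2 := by
    rw [← area_eq (φ := φ) fun z hz => by rw [hΦ]; simp only; rw [RR_id (U_sub_D2 hz)]]
    exact harea.trans (by gcongr)
  set j : ℝ × ℝ → ℝ := fun x => 4 / Real.pi * (1 / r ^ 2) * jac2 (mder Φ x) with hj
  set F1 : ℝ × ℝ → ℝ := fun x => pi1 r g (Φ x) with hF1
  set F2 : ℝ × ℝ → ℝ := fun x => pi2 r g (Φ x) with hF2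
  have hΦc : ∀ p : ℝ × ℝ, p.1 ^ 2 + p.2 ^ 2 = 1 → Φ p = φ p := by
    intro p hp
    rw [hΦ]; simp only
    rw [RR_id (show p ∈ D2 from hp.le)]
  have mr : -r ∈ Set.Icc (-r) r := ⟨le_rfl, by linarith⟩
  have m0 : (0:ℝ) ∈ Set.Icc (-r) r := ⟨by linarith, by linarith⟩
  have bd : Bd F1 F2 := by
    refine ⟨fun x => ?_, fun x => ?_, fun p hp h2 => ?_, fun p hp h2 h3 => ?_⟩
    · simp only [hF1, hΦ]; rw [RR_id (RR_D2 x)]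
    · simp only [hF2, hΦ]; rw [RR_id (RR_D2 x)]
    · obtain ⟨s, hs, e⟩ := circ_low hp h2
      have h4 := hφ s ⟨by linarith [hs.1], hs.2⟩
      rw [e, gam_right hc1 hs.1] at h4
      have h5 : Real.cos (2 * Real.pi * s) = p.1 := congrArg Prod.fst e
      rw [h5] at h4
      have hm : r * p.1 ∈ Set.Icc (-r) r := by
        have := Real.neg_one_le_cos (2 * Real.pi * s)
        have := Real.cos_le_one (2 * Real.pi * s)
        rw [h5] at *
        constructor <;> nlinarith
      simp only [hF1, hF2, hΦc p hp, h4]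
      constructor
      · unfold pi1
        rw [hg _ hm _ mr, abs_of_nonneg (by linarith [hm.1])]
        field_simp; ring
      · unfold pi2
        rw [Metric.infDist_zero_of_mem (Set.mem_image_of_mem g hm), zero_div]
    · obtain ⟨s, hs, e⟩ := circ_up hp h2
      have h4 := hφ s ⟨hs.1, by linarith [hs.2]⟩
      rw [e] at h4
      unfold gam at h4
      rw [if_pos hs.2] at h4
      have h5 := hcS (2 * s) ⟨by linarith [hs.1], by linarith [hs.2]⟩
      rw [← h4] at h5
      have h5 : r ≤ dist (g 0) (φ p) := h5
      simp only [hF1, hF2, hΦc p hp] at h3 ⊢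
      by_contra hlt
      push Not at hlt
      unfold pi1 at h3
      unfold pi2 at hlt
      rw [div_lt_iff₀ hr] at hlt
      rw [abs_div, abs_of_pos hr, div_lt_iff₀ hr, abs_lt] at h3
      obtain ⟨_, ⟨t, ht, rfl⟩, hd⟩ := (Metric.infDist_lt_iff ((Set.nonempty_of_mem m0).image g)).1 hlt
      have h6 := hg t ht _ mr
      have h7 := hg _ m0 t ht
      rw [abs_of_nonneg (by linarith [ht.1])] at h6
      have h8 := dist_triangle (φ p) (g t) (g (-r))
      have h9 := dist_triangle (g t) (φ p) (g (-r))
      rw [dist_comm (g t) (φ p)] at h9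
      have h10 := dist_triangle (g 0) (g t) (φ p)
      rw [dist_comm (g t) (φ p)] at h10
      have : |0 - t| < 1/2 * r := by rw [zero_sub, abs_neg, abs_lt]; constructor <;> linarith
      linarith
  have hi := jac_int hΦl
  have d : Dat Qo F1 F2 j := by
    refine ⟨?_, ?_, fun x => ?_, hi.const_mul _, jac_J_ae hΦl hr (pi1_lip hr g) (pi2_lip hr g), fun x hx hm => ?_⟩
    · obtain ⟨C', h⟩ := lip_of hr (pi1_lip hr g); exact ⟨_, h.comp hΦl⟩
    · obtain ⟨C', h⟩ := lip_of hr (pi2_lip hr g); exact ⟨_, h.comp hΦl⟩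
    · have := jac_nonneg (mder Φ x); simp only [hj]; positivity
    · rw [bd.R1, bd.R2] at hm
      have hs := RR_sphere hx
      rcases le_total (RR x).2 0 with h | h
      · have := (bd.low _ hs h).2
        rw [this] at hm
        exact absurd hm.2.1 (lt_irrefl _)
      · have := bd.up _ hs h hm.1
        exact absurd hm.2.2 (not_lt.2 this)
  have hjC : ∫ x in U, j x ≤ Ct C := by
    simp only [hj]
    rw [integral_const_mul]
    have h3 := Real.pi_gt_three
    calc 4 / Real.pi * (1 / r ^ 2) * ∫ x in U, jac2 (mder Φ x)
        ≤ 4 / Real.pi * (1 / r ^ 2) * (C * (20000 * r) ^ 2) := by gcongr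
      _ = 1600000000 * C / Real.pi := by field_simp; ring
      _ ≤ 1600000000 * C / 3 := by gcongr
      _ ≤ Ct C := by unfold Ct; linarith
  set ds := TopologicalSpace.denseSeq ((ℝ × ℝ) × ℝ) with hds
  set gs : ℕ → ℝ × ℝ → ℝ := fun i x => bmp r (ds i).2 (Φ (ds i).1) (Φ x) with hgs
  have ha : ∀ i, Adm F1 F2 j (gs i) := by
    intro i
    refine ⟨⟨?_, |(ds i).2|, fun x => bmp_bdd hr _ _ _⟩, jac_J_ae hΦl hr (bmp_lip hr _ _) (pi1_lip hr g),
      jac_J_ae hΦl hr (bmp_lip hr _ _) (pi2_lip hr g)⟩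
    obtain ⟨C', h⟩ := lip_of hr (bmp_lip hr (ds i).2 (Φ (ds i).1))
    exact ⟨_, h.comp hΦl⟩
  have hC1 : 1 ≤ Ct C := by unfold Ct; linarith
  obtain ⟨G, hG, hv, p, σ, H⟩ := core d bd hC1 hjC ha hN
  refine ⟨G, hG, hv, fun y k => Φ (p y k), σ, fun y hy => ⟨fun k => ((H y hy).1 k).1, (H y hy).2.1,
    fun y' hy' hd z k' δ => ?_⟩⟩
  have h1 := (H y hy).2.2 y' hy' hd
  have hcl : IsClosed {q : (ℝ × ℝ) × ℝ | |∑ k, (σ y k : ℝ) * bmp r q.2 (Φ q.1) (Φ (p y k)) -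
      ∑ k, (σ y' k : ℝ) * bmp r q.2 (Φ q.1) (Φ (p y' k))| ≤ 20 * kc * (25600 * Ct C) * dist y y'} := by
    apply isClosed_le _ continuous_const
    have hb : ∀ u : Y, Continuous fun q : (ℝ × ℝ) × ℝ => bmp r q.2 (Φ q.1) u := by
      intro u
      unfold bmp
      have : Continuous fun q : (ℝ × ℝ) × ℝ => dist (Φ q.1) u :=
        (hΦl.continuous.comp continuous_fst).dist continuous_const
      fun_prop
    refine Continuous.abs (Continuous.sub ?_ ?_)
    · exact continuous_finset_sum _ fun k _ => continuous_const.mul (hb _)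
    · exact continuous_finset_sum _ fun k _ => continuous_const.mul (hb _)
  exact (TopologicalSpace.denseRange_denseSeq ((ℝ × ℝ) × ℝ)).induction_on (p := fun q => |∑ k, (σ y k : ℝ) * bmp r q.2 (Φ q.1) (Φ (p y k)) -
      ∑ k, (σ y' k : ℝ) * bmp r q.2 (Φ q.1) (Φ (p y' k))| ≤ 20 * kc * (25600 * Ct C) * dist y y') (p z k', δ) hcl h1

end


end

section
open scoped NNReal ENNReal Topology
open MeasureTheory Filter

/-- ultrafilter on the naturals -/
noncomputable def UU : Ultrafilter ℕ := hyperfilter ℕ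

noncomputable def ul (f : ℕ → ℝ) : ℝ := limUnder (UU : Filter ℕ) f

lemma ul_spec {f : ℕ → ℝ} {M : ℝ} (h : ∀ n, |f n| ≤ M) : Tendsto f UU (𝓝 (ul f)) := by
  apply tendsto_nhds_limUnder
  have hc : IsCompact (Set.Icc (-M) M) := isCompact_Icc
  obtain ⟨x, -, hx⟩ := hc.ultrafilter_le_nhds (UU.map f) (by
    rw [le_principal_iff]
    exact Filter.univ_mem' (f := (UU : Filter ℕ)) (s := f ⁻¹' Set.Icc (-M) M)
      fun n => abs_le.1 (h n))
  exact ⟨x, hx⟩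

lemma UU_le : (UU : Filter ℕ) ≤ atTop := by
  have := Nat.hyperfilter_le_atTop
  exact this

/-- the carrier of the limit set -/
structure ZZ (K : Set (ℝ × ℝ)) : Type u where
  pt : ℝ × ℝ
  mem : pt ∈ K

section
variable {X : Type u} [MetricSpace X]

lemma finale (h : ∀ (Z : Type u) (mZ : MetricSpace Z),
      letI := mZ
      IsAsymptoticSubset X Z →
        ∀ K : Set (ℝ × ℝ), IsCompact K →
          ∀ (φ : ℝ × ℝ → Z) (L : ℝ≥0), LipschitzOnWith L φ K →
            letI : MeasurableSpace Z := borel Z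
            letI : BorelSpace Z := ⟨rfl⟩
            μH[2] (φ '' K) = 0)
    {E : Set (ℝ × ℝ)} (hb : Bornology.IsBounded E) (hE : volume E ≠ 0) {D : ℝ × ℝ → ℝ × ℝ → ℝ} {L : ℝ}
    (hL : 0 ≤ L) (hlow : ∀ y ∈ E, ∀ y' ∈ E, dist y y' ≤ D y y')
    (hup : ∀ y ∈ E, ∀ y' ∈ E, D y y' ≤ L * dist y y')
    (happ : ∀ F : Finset (ℝ × ℝ), (F : Set (ℝ × ℝ)) ⊆ E → ∀ ε > 0, ∀ M : ℝ, ∃ r ≥ M, ∃ x : ℝ × ℝ → X,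
      ∀ y ∈ F, ∀ y' ∈ F, |D y y' - r⁻¹ * dist (x y) (x y')| ≤ ε) : False := by
  classical
  have hsymm : ∀ y ∈ E, ∀ y' ∈ E, D y y' = D y' y := by
    intro y hy y' hy'
    refine eq_of_abs_sub_le_all fun ε hε => ?_
    obtain ⟨r, -, x, hx⟩ := happ {y, y'} (by intro z; simp; rintro (rfl | rfl) <;> assumption) (ε / 2) (by positivity) 0
    have h1 := hx y (by simp) y' (by simp)
    have h2 := hx y' (by simp) y (by simp)
    rw [dist_comm] at h2
    rw [abs_le] at *
    constructor <;> linarith [h1.1, h1.2, h2.1, h2.2]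
  have htri : ∀ y ∈ E, ∀ y' ∈ E, ∀ y'' ∈ E, D y y'' ≤ D y y' + D y' y'' := by
    intro y hy y' hy' y'' hy''
    refine le_of_forall_pos_le_add fun ε hε => ?_
    obtain ⟨r, hr, x, hx⟩ := happ {y, y', y''} (by intro z; simp; rintro (rfl | rfl | rfl) <;> assumption)
      (ε / 3) (by positivity) 0
    have h1 := hx y (by simp) y' (by simp)
    have h2 := hx y' (by simp) y'' (by simp)
    have h3 := hx y (by simp) y'' (by simp)
    have h4 := mul_le_mul_of_nonneg_left (dist_triangle (x y) (x y') (x y'')) (inv_nonneg.2 hr)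
    rw [mul_add] at h4
    rw [abs_le] at *
    linarith [h1.1, h1.2, h2.1, h2.2, h3.1, h3.2]
  have hself : ∀ y ∈ E, D y y = 0 := fun y hy =>
    le_antisymm (by simpa using hup y hy y hy) (by simpa using hlow y hy y hy)
  set K := closure E with hK
  have hKc : IsCompact K := hb.isCompact_closure
  have hseq : ∀ z : ZZ.{u} K, ∃ e : ℕ → ℝ × ℝ, (∀ m, e m ∈ E) ∧ Tendsto e atTop (𝓝 z.pt) ∧
      (z.pt ∈ E → ∀ m, e m = z.pt) := by
    intro z
    by_cases hz : z.pt ∈ E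
    · exact ⟨fun _ => z.pt, fun _ => hz, tendsto_const_nhds, fun _ _ => rfl⟩
    · obtain ⟨e, he, ht⟩ := mem_closure_iff_seq_limit.1 z.mem
      exact ⟨e, he, ht, fun h' => absurd h' hz⟩
  choose e eE et ec using hseq
  obtain ⟨B, hB⟩ := Metric.isBounded_iff.1 hb
  let DK : ZZ.{u} K → ZZ.{u} K → ℝ := fun z z' => ul fun m => D (e z m) (e z' m)
  have hDK : ∀ z z', Tendsto (fun m => D (e z m) (e z' m)) UU (𝓝 (DK z z')) := by
    intro z z'
    refine ul_spec (M := L * B) fun m => ?_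
    rw [abs_of_nonneg (dist_nonneg.trans (hlow _ (eE z m) _ (eE z' m)))]
    refine (hup _ (eE z m) _ (eE z' m)).trans ?_
    gcongr
    exact hB (eE z m) (eE z' m)
  have het : ∀ z z' : ZZ.{u} K, Tendsto (fun m => dist (e z m) (e z' m)) UU (𝓝 (dist z.pt z'.pt)) :=
    fun z z' => ((et z).dist (et z')).mono_left UU_le
  have klow : ∀ z z', dist z.pt z'.pt ≤ DK z z' := fun z z' =>
    le_of_tendsto_of_tendsto (het z z') (hDK z z') (.of_forall fun m => hlow _ (eE z m) _ (eE z' m))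
  have kup : ∀ z z', DK z z' ≤ L * dist z.pt z'.pt := fun z z' =>
    le_of_tendsto_of_tendsto (hDK z z') ((het z z').const_mul L) (.of_forall fun m => hup _ (eE z m) _ (eE z' m))
  have kE : ∀ z z' : ZZ.{u} K, z.pt ∈ E → z'.pt ∈ E → DK z z' = D z.pt z'.pt := by
    intro z z' hz hz'
    refine tendsto_nhds_unique (hDK z z') ?_
    have : (fun m => D (e z m) (e z' m)) = fun _ => D z.pt z'.pt := by
      ext m; rw [ec z hz, ec z' hz']
    rw [this]
    exact tendsto_const_nhds
  let mZ : MetricSpace (ZZ.{u} K) :=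
    { dist := DK
      dist_self := fun z => le_antisymm (by simpa using kup z z) (by simpa using klow z z)
      dist_comm := fun z z' => tendsto_nhds_unique (hDK z z')
        ((hDK z' z).congr fun m => hsymm _ (eE z' m) _ (eE z m))
      dist_triangle := fun z z' z'' => le_of_tendsto_of_tendsto (hDK z z'') ((hDK z z').add (hDK z' z''))
        (.of_forall fun m => htri _ (eE z m) _ (eE z' m) _ (eE z'' m))
      eq_of_dist_eq_zero := fun {z z'} h0 => by
        have h1 := klow z z'
        have h0 : DK z z' = 0 := h0
        rw [h0] at h1
        have h2 := dist_le_zero.1 h1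
        cases z; cases z'; simp only at h2; subst h2; rfl }
  letI := mZ
  have hdist : ∀ z z' : ZZ.{u} K, dist z z' = DK z z' := fun _ _ => rfl
  have hne : E.Nonempty := by
    rw [Set.nonempty_iff_ne_empty]; rintro rfl; simp at hE
  obtain ⟨y0, hy0⟩ := hne
  let φ : ℝ × ℝ → ZZ.{u} K := fun y => if hy : y ∈ K then ⟨y, hy⟩ else ⟨y0, subset_closure hy0⟩
  have hφ : ∀ y ∈ K, (φ y).pt = y := by
    intro y hy; simp only [φ]; rw [dif_pos hy]
  have hφl : LipschitzOnWith L.toNNReal φ K := by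
    apply LipschitzOnWith.of_dist_le_mul
    intro y hy y' hy'
    rw [Real.coe_toNNReal _ hL, hdist]
    have := kup (φ y) (φ y')
    rwa [hφ y hy, hφ y' hy'] at this
  have hφu : φ '' K = Set.univ := by
    rw [Set.eq_univ_iff_forall]
    intro z
    refine ⟨z.pt, z.mem, ?_⟩
    simp only [φ]; rw [dif_pos z.mem]
  have hcomp : CompactSpace (ZZ.{u} K) := ⟨by
    rw [← hφu]; exact hKc.image_of_continuousOn hφl.continuousOn⟩
  have hq : LipschitzWith 1 (fun z : ZZ.{u} K => z.pt) := by
    apply LipschitzWith.of_dist_le_mul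
    intro z z'
    rw [NNReal.coe_one, one_mul]
    exact klow z z'
  have hasy : IsAsymptoticSubset X (ZZ.{u} K) := by
    refine ⟨hcomp, ?_⟩
    have htb : TotallyBounded E := hKc.totallyBounded.subset subset_closure
    have hnet : ∀ m : ℕ, ∃ F : Finset (ℝ × ℝ), (F : Set (ℝ × ℝ)) ⊆ E ∧
        E ⊆ ⋃ y ∈ F, Metric.ball y (1 / ((m:ℝ) + 1)) := by
      intro m
      obtain ⟨t, ht, hf, hc⟩ := Metric.finite_approx_of_totallyBounded htb (1 / ((m:ℝ) + 1)) (by positivity)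
      refine ⟨hf.toFinset, by simpa using ht, by simpa using hc⟩
    choose F FE Fc using hnet
    have hr : ∀ m : ℕ, ∃ r : ℝ, r ≥ m ∧ ∃ x : ℝ × ℝ → X, ∀ y ∈ F m, ∀ y' ∈ F m,
        |D y y' - r⁻¹ * dist (x y) (x y')| ≤ 1 / ((m:ℝ) + 1) := fun m =>
      happ (F m) (FE m) (1 / ((m:ℝ) + 1)) (by positivity) m
    choose r rm x hx using hr
    refine ⟨fun m => x m '' (F m : Set (ℝ × ℝ)), r, fun m => ⟨?_, ?_⟩, ?_, fun ε hε => ?_⟩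
    · have := Fc m hy0
      simp only [Set.mem_iUnion] at this
      obtain ⟨y, hy, -⟩ := this
      exact ⟨x m y, y, hy, rfl⟩
    · exact ((F m).finite_toSet.image _).isCompact
    · exact tendsto_atTop_mono rm tendsto_natCast_atTop_atTop
    · have hlim : Tendsto (fun m : ℕ => (2 * L + 1) * (1 / ((m:ℝ) + 1))) atTop (𝓝 0) := by
        simpa using tendsto_one_div_add_atTop_nhds_zero_nat.const_mul (2 * L + 1)
      filter_upwards [hlim.eventually (Iic_mem_nhds hε)] with m hm
      have hm : (2 * L + 1) * (1 / ((m:ℝ) + 1)) ≤ ε := hm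
      have hm0 : 0 < 1 / ((m:ℝ) + 1) := by positivity
      have hm1 : 1 / ((m:ℝ) + 1) ≤ ε := by nlinarith
      have hsel : ∀ p : x m '' (F m : Set (ℝ × ℝ)), ∃ y, y ∈ F m ∧ x m y = p := fun p => p.2
      choose s sF sx using hsel
      have hpt : ∀ p, (φ (s p)).pt = s p := fun p => hφ _ (subset_closure (FE m (sF p)))
      refine ⟨fun p => φ (s p), fun p q => ?_, fun z => ?_⟩
      · rw [hdist, kE _ _ (by rw [hpt]; exact FE m (sF p)) (by rw [hpt]; exact FE m (sF q)), hpt, hpt, ← sx p, ← sx q]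
        exact (hx m _ (sF p) _ (sF q)).trans hm1
      · obtain ⟨w, hw, hzw⟩ := Metric.mem_closure_iff.1 z.mem (1 / ((m:ℝ) + 1)) hm0
        have := Fc m hw
        simp only [Set.mem_iUnion] at this
        obtain ⟨y, hy, hwy⟩ := this
        have hy : y ∈ F m := hy
        refine ⟨⟨x m y, y, hy, rfl⟩, ?_⟩
        set p : x m '' (F m : Set (ℝ × ℝ)) := ⟨x m y, y, hy, rfl⟩ with hp
        have hyp := hφ y (subset_closure (FE m hy))
        refine (dist_triangle _ (φ y) _).trans ?_
        rw [hdist, hdist, kE (φ y) (φ (s p)) (by rw [hyp]; exact FE m hy) (by rw [hpt]; exact FE m (sF p)), hyp, hpt]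
        have h1 := kup z (φ y)
        rw [hyp] at h1
        have h2 := hx m y hy (s p) (sF p)
        rw [sx p, hp] at h2
        simp only [dist_self, mul_zero, sub_zero] at h2
        have h3 := (le_abs_self _).trans h2
        have h4 : dist z.pt y ≤ 2 * (1 / ((m:ℝ) + 1)) := by
          have := dist_triangle z.pt w y
          have h5 := Metric.mem_ball.1 hwy
          linarith
        have h6 : L * dist z.pt y ≤ L * (2 * (1 / ((m:ℝ) + 1))) := by gcongr
        linarith
  have h0 := h (ZZ.{u} K) mZ hasy K hKc φ L.toNNReal hφl
  letI : MeasurableSpace (ZZ.{u} K) := borel _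
  haveI : BorelSpace (ZZ.{u} K) := ⟨rfl⟩
  have h0 : μH[2] (φ '' K) = 0 := h0
  have h1 := hq.hausdorffMeasure_image_le (d := 2) (by norm_num) (φ '' K)
  rw [h0, mul_zero, hausdorffMeasure_prod_real] at h1
  apply hE
  refine measure_mono_null (fun y hy => ?_) (le_antisymm h1 zero_le)
  exact ⟨φ y, ⟨y, subset_closure hy, rfl⟩, hφ y (subset_closure hy)⟩

end


end

section
open scoped NNReal ENNReal Topology
open MeasureTheory Filter

section
variable {N : ℕ}

/-- bump sums -/
noncomputable def bs (D : (ℝ × ℝ) × Fin N → (ℝ × ℝ) × Fin N → ℝ) (σ : ℝ × ℝ → Fin N → SignType)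
    (q : (ℝ × ℝ) × Fin N) (δ : ℝ) (y : ℝ × ℝ) : ℝ :=
  ∑ k, (σ y k : ℝ) * max 0 (δ - D q (y, k))

lemma sign_sum_int (σ : Fin N → SignType) (A : Finset (Fin N)) (h : ∑ k ∈ A, (σ k : ℝ) ≠ 0) :
    1 ≤ |∑ k ∈ A, (σ k : ℝ)| := by
  have e : ∑ k ∈ A, (σ k : ℝ) = ((∑ k ∈ A, (σ k : ℤ) : ℤ) : ℝ) := by
    push_cast
    refine Finset.sum_congr rfl fun k _ => ?_
    cases σ k <;> simp
  rw [e] at h ⊢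
  have : (∑ k ∈ A, (σ k : ℤ) : ℤ) ≠ 0 := by exact_mod_cast h
  exact_mod_cast Int.one_le_abs this

/-- a charged cluster exists -/
lemma cluster (D : Fin N → Fin N → ℝ) (h0 : ∀ k, D k k = 0) (hs : ∀ k l, D k l = D l k)
    (hn : ∀ k l, 0 ≤ D k l) (ht : ∀ k l m, D k m ≤ D k l + D l m) (σ : Fin N → ℝ)
    (h1 : ∑ k, σ k = 1) : ∃ k, ∑ l with D k l = 0, σ l ≠ 0 := by
  classical
  by_contra hc
  push Not at hc
  have hf : ∀ k l, D k l = 0 → (Finset.univ.filter fun m => D k m = 0) =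
      Finset.univ.filter fun m => D l m = 0 := by
    intro k l hkl
    ext m
    simp only [Finset.mem_filter, Finset.mem_univ, true_and]
    constructor
    · intro hh
      have := ht l k m
      rw [hs l k, hkl, hh] at this
      have := hn l m
      linarith
    · intro hh
      have := ht k l m
      rw [hkl, hh] at this
      have := hn k m
      linarith
  have := Finset.sum_fiberwise_of_maps_to (s := Finset.univ)
    (t := Finset.univ.image fun k => (Finset.univ.filter fun m => D k m = 0))
    (g := fun k => (Finset.univ.filter fun m => D k m = 0))
    (fun k _ => Finset.mem_image_of_mem _ (Finset.mem_univ k)) σ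
  rw [h1] at this
  rw [Finset.sum_eq_zero] at this
  · norm_num at this
  intro A hA
  obtain ⟨k, -, rfl⟩ := Finset.mem_image.1 hA
  refine Eq.trans ?_ (hc k)
  refine Finset.sum_congr ?_ fun _ _ => rfl
  ext m
  simp only [Finset.mem_filter, Finset.mem_univ, true_and]
  constructor
  · intro hh
    have : m ∈ (Finset.univ.filter fun l => D m l = 0) := by simp [h0]
    rw [hh] at this
    simpa using this
  · intro hh
    exact (hf k m hh).symm

lemma stratify (G : Set (ℝ × ℝ)) (hG : volume G ≠ 0)
    (D : (ℝ × ℝ) × Fin N → (ℝ × ℝ) × Fin N → ℝ) (hn : ∀ a b, 0 ≤ D a b) (η : ℝ → ℝ)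
    (hη : ∀ ρ > 0, 0 < η ρ) :
    ∃ E ⊆ G, volume E ≠ 0 ∧ ∃ ρ > 0, (∀ y ∈ E, ∀ k l, D (y, k) (y, l) < ρ → D (y, k) (y, l) = 0) ∧
      ∀ y ∈ E, ∀ y' ∈ E, dist y y' < η ρ := by
  have key : ∃ j : ℕ, volume {y ∈ G | ∀ k l, D (y, k) (y, l) < 1 / ((j:ℝ) + 1) →
      D (y, k) (y, l) = 0} ≠ 0 := by
    by_contra hc
    push Not at hc
    apply hG
    refine measure_mono_null (fun y hy => ?_) (measure_iUnion_null hc)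
    have hpt : ∀ q : Fin N × Fin N, ∀ᶠ j : ℕ in atTop,
        (D (y, q.1) (y, q.2) < 1 / ((j:ℝ) + 1) → D (y, q.1) (y, q.2) = 0) := by
      intro q
      by_cases h0 : D (y, q.1) (y, q.2) = 0
      · exact Eventually.of_forall fun j _ => h0
      · have hp : 0 < D (y, q.1) (y, q.2) := lt_of_le_of_ne (hn _ _) (Ne.symm h0)
        filter_upwards [tendsto_one_div_add_atTop_nhds_zero_nat.eventually (gt_mem_nhds hp)] with j hj hlt
        exact absurd hlt (not_lt.2 hj.le)
    obtain ⟨j, hj⟩ := (eventually_all.2 hpt).exists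
    exact Set.mem_iUnion.2 ⟨j, hy, fun k l => hj (k, l)⟩
  obtain ⟨j, hj⟩ := key
  set ρ : ℝ := 1 / ((j:ℝ) + 1) with hρ
  have hρp : 0 < ρ := by positivity
  have h2 : ∃ i : ℕ, volume ({y ∈ G | ∀ k l, D (y, k) (y, l) < ρ → D (y, k) (y, l) = 0} ∩
      Metric.ball (TopologicalSpace.denseSeq (ℝ × ℝ) i) (η ρ / 2)) ≠ 0 := by
    by_contra hc
    push Not at hc
    apply hj
    refine measure_mono_null (fun y hy => ?_) (measure_iUnion_null hc)
    obtain ⟨z, hz1⟩ := (TopologicalSpace.denseRange_denseSeq (ℝ × ℝ)).exists_mem_open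
      (Metric.isOpen_ball (x := y) (ε := η ρ / 2)) ⟨y, Metric.mem_ball_self (half_pos (hη ρ hρp))⟩
    exact Set.mem_iUnion.2 ⟨z, hy, by rw [Metric.mem_ball'] ; exact hz1⟩
  obtain ⟨i, hi⟩ := h2
  refine ⟨_, fun y hy => hy.1.1, hi, ρ, hρp, fun y hy => hy.1.2, fun y hy y' hy' => ?_⟩
  have a := Metric.mem_ball.1 hy.2
  have b := Metric.mem_ball'.1 hy'.2
  linarith [dist_triangle y (TopologicalSpace.denseSeq (ℝ × ℝ) i) y']

lemma select (G : Set (ℝ × ℝ)) (hG : volume G ≠ 0)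
    (D : (ℝ × ℝ) × Fin N → (ℝ × ℝ) × Fin N → ℝ) (hn : ∀ a b, 0 ≤ D a b) (h0 : ∀ a, D a a = 0)
    (hs : ∀ a b, D a b = D b a) (ht : ∀ a b c, D a c ≤ D a b + D b c)
    (σ : ℝ × ℝ → Fin N → SignType) (h1 : ∀ y ∈ G, ∑ k, (σ y k : ℝ) = 1) {L : ℝ} (hL : 0 ≤ L)
    (hb : ∀ y ∈ G, ∀ y' ∈ G, dist y y' < 1 / 64 → ∀ q δ,
      |bs D σ q δ y - bs D σ q δ y'| ≤ L * dist y y') :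
    ∃ E ⊆ G, volume E ≠ 0 ∧ ∃ κ : ℝ × ℝ → Fin N, ∀ y ∈ E, ∀ y' ∈ E,
      D (y, κ y) (y', κ y') ≤ L * dist y y' := by
  classical
  obtain ⟨E, hEG, hE, ρ, hρ, hgap, hsm⟩ := stratify G hG D hn
    (fun ρ => min (1 / 64) (ρ / (8 * (L + 1)))) (fun ρ hρ => by positivity)
  have hLd : ∀ y ∈ E, ∀ y' ∈ E, L * dist y y' < ρ / 8 := by
    intro y hy y' hy'
    have := (lt_min_iff.1 (hsm y hy y' hy')).2
    rw [lt_div_iff₀ (by positivity)] at this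
    have := dist_nonneg (x := y) (y := y')
    nlinarith
  have hbE : ∀ y ∈ E, ∀ y' ∈ E, ∀ q δ, |bs D σ q δ y - bs D σ q δ y'| ≤ L * dist y y' :=
    fun y hy y' hy' => hb y (hEG hy) y' (hEG hy') (lt_min_iff.1 (hsm y hy y' hy')).1
  have hex : ∀ y q δ, bs D σ q δ y ≠ 0 → ∃ k, D q (y, k) < δ := by
    intro y q δ hne
    obtain ⟨k, -, hk⟩ := Finset.exists_ne_zero_of_sum_ne_zero hne
    refine ⟨k, ?_⟩
    by_contra hcc
    apply hk
    rw [max_eq_left (by linarith), mul_zero]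
  -- sums at a cluster point
  have hself : ∀ y ∈ E, ∀ k δ, 0 < δ → δ ≤ ρ →
      bs D σ (y, k) δ y = (∑ l with D (y, k) (y, l) = 0, (σ y l : ℝ)) * δ := by
    intro y hy k δ hδ hδρ
    unfold bs
    rw [Finset.sum_filter, Finset.sum_mul]
    refine Finset.sum_congr rfl fun l _ => ?_
    split_ifs with hh
    · rw [hh, sub_zero, max_eq_right hδ.le]
    · have : ρ ≤ D (y, k) (y, l) := by
        by_contra hcc
        exact hh (hgap y hy k l (not_le.1 hcc))
      rw [max_eq_left (by linarith)]; ring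
  obtain ⟨y0, hy0⟩ : E.Nonempty := by
    rw [Set.nonempty_iff_ne_empty]
    rintro rfl
    exact hE measure_empty
  obtain ⟨k0, hk0⟩ := cluster (fun k l => D (y0, k) (y0, l)) (fun _ => h0 _) (fun _ _ => hs _ _)
    (fun _ _ => hn _ _) (fun _ _ _ => ht _ _ _) (fun k => (σ y0 k : ℝ)) (h1 y0 (hEG hy0))
  have hm0 := sign_sum_int (σ y0) _ hk0
  have hfind : ∀ y ∈ E, bs D σ (y0, k0) (ρ / 4) y ≠ 0 := by
    intro y hy he
    have h3 := hbE y0 hy0 y hy (y0, k0) (ρ / 4)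
    rw [he, sub_zero, hself y0 hy0 k0 (ρ / 4) (by linarith) (by linarith), abs_mul,
      abs_of_pos (show 0 < ρ / 4 by linarith)] at h3
    have := hLd y0 hy0 y hy
    nlinarith
  have hch : ∀ y, ∃ k, y ∈ E → D (y0, k0) (y, k) < ρ / 4 := by
    intro y
    by_cases hy : y ∈ E
    · obtain ⟨k, hk⟩ := hex y _ _ (hfind y hy)
      exact ⟨k, fun _ => hk⟩
    · exact ⟨k0, fun h => absurd h hy⟩
  choose κ hκ using hch
  refine ⟨E, hEG, hE, κ, ?_⟩
  -- the chosen cluster is charged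
  have hcharge : ∀ y ∈ E, (∑ l with D (y, κ y) (y, l) = 0, (σ y l : ℝ)) ≠ 0 := by
    intro y hy he
    apply hfind y hy
    unfold bs
    have : ∀ l, (σ y l : ℝ) * max 0 (ρ / 4 - D (y0, k0) (y, l)) =
        if D (y, κ y) (y, l) = 0 then (σ y l : ℝ) * (ρ / 4 - D (y0, k0) (y, κ y)) else 0 := by
      intro l
      have hκy := hκ y hy
      split_ifs with hh
      · have a := ht (y0, k0) (y, κ y) (y, l)
        have b := ht (y0, k0) (y, l) (y, κ y)
        rw [hs (y, l) (y, κ y)] at b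
        have : D (y0, k0) (y, l) = D (y0, k0) (y, κ y) := by linarith
        rw [this, max_eq_right (by linarith)]
      · have : ρ / 4 ≤ D (y0, k0) (y, l) := by
          by_contra hcc
          apply hh
          apply hgap y hy
          have := ht (y, κ y) (y0, k0) (y, l)
          rw [hs (y, κ y) (y0, k0)] at this
          linarith
        rw [max_eq_left (by linarith), mul_zero]
    simp_rw [this]
    rw [← Finset.sum_filter, ← Finset.sum_mul, he, zero_mul]
  intro y hy y' hy'
  have hbd := hLd y hy y' hy'
  have hnn : 0 ≤ L * dist y y' := mul_nonneg hL dist_nonneg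
  have hall : ∀ δ, L * dist y y' < δ → δ ≤ ρ / 4 → D (y, κ y) (y', κ y') < δ := by
    intro δ hδ hδρ
    have hne : bs D σ (y, κ y) δ y' ≠ 0 := by
      intro he
      have h3 := hbE y hy y' hy' (y, κ y) δ
      rw [he, sub_zero, hself y hy (κ y) δ (by linarith) (by linarith), abs_mul,
        abs_of_pos (show 0 < δ by linarith)] at h3
      have := sign_sum_int (σ y) _ (hcharge y hy)
      nlinarith
    obtain ⟨k', hk'⟩ := hex _ _ _ hne
    have e0 : D (y', k') (y', κ y') = 0 := by
      apply hgap y' hy'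
      have a := ht (y', k') (y, κ y) (y', κ y')
      have b := ht (y, κ y) (y0, k0) (y', κ y')
      rw [hs (y', k') (y, κ y)] at a
      rw [hs (y, κ y) (y0, k0)] at b
      linarith [hκ y hy, hκ y' hy']
    linarith [ht (y, κ y) (y', k') (y', κ y')]
  by_contra hcc
  rw [not_le] at hcc
  have := hall (min (D (y, κ y) (y', κ y')) (ρ / 4)) (lt_min hcc (by linarith)) (min_le_right _ _)
  exact absurd this (not_lt.2 (min_le_left _ _))

end


end

section
open scoped NNReal ENNReal Topology
open MeasureTheory Filter

lemma limset {G : ℕ → Set (ℝ × ℝ)} (hG : ∀ n, G n ⊆ Qp)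
    (hv : ∀ n, ENNReal.ofReal (1 / 128) ≤ volume (G n)) :
    volume {y | y ∈ Qp ∧ Tendsto (fun n => Metric.infDist y (G n)) UU (𝓝 0)} ≠ 0 := by
  intro h0
  have hne : ∀ n, (G n).Nonempty := by
    intro n
    rw [Set.nonempty_iff_ne_empty]
    intro he
    have := hv n
    rw [he, measure_empty] at this
    simp at this
  obtain ⟨O, hO, hOo, hOv⟩ := Set.exists_isOpen_lt_of_lt _ (ENNReal.ofReal (1 / 128))
    (by rw [h0]; simp : volume {y | y ∈ Qp ∧ Tendsto (fun n => Metric.infDist y (G n)) UU (𝓝 0)} < _)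
  have hQc : IsCompact (Qp \ O) := (isCompact_closedBall _ _).diff hOo
  have hev : ∀ᶠ n in (UU : Filter ℕ), Disjoint (G n) (Qp \ O) := by
    refine hQc.induction_on (p := fun s => ∀ᶠ n in (UU : Filter ℕ), Disjoint (G n) s) ?_ ?_ ?_ ?_
    · simp
    · intro s t hst ht
      filter_upwards [ht] with n hn using hn.mono_right hst
    · intro s t hs ht
      filter_upwards [hs, ht] with n hn hm using Set.disjoint_union_right.2 ⟨hn, hm⟩
    · intro y hy
      have hnt : ¬ Tendsto (fun n => Metric.infDist y (G n)) UU (𝓝 0) := fun hh => hy.2 (hO ⟨hy.1, hh⟩)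
      rw [Metric.tendsto_nhds] at hnt
      push Not at hnt
      obtain ⟨ε, hε, hf⟩ := hnt
      refine ⟨Metric.ball y ε, mem_nhdsWithin_of_mem_nhds (Metric.ball_mem_nhds y hε), ?_⟩
      filter_upwards [hf] with n hn
      rw [Set.disjoint_left]
      intro z hz hzb
      apply not_lt.2 hn
      rw [Real.dist_eq, sub_zero, abs_of_nonneg Metric.infDist_nonneg]
      exact (Metric.infDist_le_dist_of_mem hz).trans_lt (Metric.mem_ball'.1 hzb)
  obtain ⟨n, hn⟩ := hev.exists
  have : G n ⊆ O := by
    intro z hz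
    by_contra hc
    exact Set.disjoint_left.1 hn hz ⟨hG n hz, hc⟩
  exact absurd ((hv n).trans (measure_mono this)) (not_le.2 hOv)

section
variable {Y : Type u} [MetricSpace Y] {N : ℕ}

lemma blow {L : ℝ} (hL : 0 ≤ L) {r : ℕ → ℝ} (hr : ∀ n, 0 < r n) {g : ℕ → ℝ → Y} {G : ℕ → Set (ℝ × ℝ)}
    (hG : ∀ n, G n ⊆ Qp) (hv : ∀ n, ENNReal.ofReal (1 / 128) ≤ volume (G n))
    {p : ℕ → ℝ × ℝ → Fin N → Y} {σ : ℕ → ℝ × ℝ → Fin N → SignType}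
    (hp : ∀ n, ∀ y ∈ G n, ∀ k, (pi1 (r n) (g n) (p n y k), pi2 (r n) (g n) (p n y k)) = y)
    (hσ : ∀ n, ∀ y ∈ G n, ∑ k, (σ n y k : ℝ) = 1)
    (hb : ∀ n, ∀ y ∈ G n, ∀ y' ∈ G n, dist y y' ≤ 1 / 64 → ∀ z k' δ,
      |∑ k, (σ n y k : ℝ) * bmp (r n) δ (p n z k') (p n y k) -
        ∑ k, (σ n y' k : ℝ) * bmp (r n) δ (p n z k') (p n y' k)| ≤ L * dist y y') :
    ∃ (E : Set (ℝ × ℝ)) (D : ℝ × ℝ → ℝ × ℝ → ℝ), Bornology.IsBounded E ∧ volume E ≠ 0 ∧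
      (∀ y ∈ E, ∀ y' ∈ E, dist y y' ≤ D y y') ∧ (∀ y ∈ E, ∀ y' ∈ E, D y y' ≤ L * dist y y') ∧
      ∃ x : ℕ → ℝ × ℝ → Y, ∀ y y', Tendsto (fun n => dist (x n y) (x n y') / r n) UU (𝓝 (D y y')) := by
  classical
  have hne : ∀ n, (G n).Nonempty := by
    intro n
    rw [Set.nonempty_iff_ne_empty]
    intro he
    have := hv n
    rw [he, measure_empty] at this
    simp at this
  have hq : ∀ n y, ∃ z ∈ G n, dist y z < Metric.infDist y (G n) + 1 / ((n:ℝ) + 1) := by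
    intro n y
    exact (Metric.infDist_lt_iff (hne n)).1 (lt_add_of_pos_right _ (by positivity))
  choose q hqG hqd using hq
  set P : ℕ → (ℝ × ℝ) × Fin N → Y := fun n a => p n (q n a.1) a.2 with hP
  have hPd : ∀ n a, dist (P n a) (g n (-(r n))) ≤ 2 * r n := by
    intro n a
    have h1 := congrArg Prod.fst (hp n _ (hqG n a.1) a.2)
    have h2 := hG n (hqG n a.1)
    rw [Qp, Metric.mem_closedBall, Prod.dist_eq, max_le_iff, Real.dist_eq, abs_le] at h2
    simp only [pi1] at h1
    rw [← h1] at h2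
    have h3 := h2.1.2
    have h4 : (dist (p n (q n a.1) a.2) (g n (-(r n))) - r n) / r n ≤ 1 := by
      simp only at h3
      linarith
    rw [div_le_one (hr n)] at h4
    show dist (p n (q n a.1) a.2) (g n (-(r n))) ≤ 2 * r n
    linarith
  set D : (ℝ × ℝ) × Fin N → (ℝ × ℝ) × Fin N → ℝ := fun a b => ul fun n => dist (P n a) (P n b) / r n with hD
  have hDt : ∀ a b, Tendsto (fun n => dist (P n a) (P n b) / r n) UU (𝓝 (D a b)) := by
    intro a b
    apply ul_spec (M := 4)
    intro n
    rw [abs_of_nonneg (div_nonneg dist_nonneg (hr n).le), div_le_iff₀ (hr n)]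
    linarith [dist_triangle_right (P n a) (P n b) (g n (-(r n))), hPd n a, hPd n b]
  have hD0 : ∀ a b, 0 ≤ D a b := fun a b =>
    ge_of_tendsto' (hDt a b) fun n => div_nonneg dist_nonneg (hr n).le
  have hDs : ∀ a, D a a = 0 := fun a => tendsto_nhds_unique (hDt a a) (by simp)
  have hDc : ∀ a b, D a b = D b a := fun a b => by simp only [hD, dist_comm]
  have hDtr : ∀ a b c, D a c ≤ D a b + D b c := fun a b c =>
    le_of_tendsto_of_tendsto' (hDt a c) ((hDt a b).add (hDt b c)) fun n => by
      rw [← add_div]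
      have := hr n
      gcongr
      exact dist_triangle _ _ _
  have hs : ∀ y k, ∃ s, ∀ᶠ n in (UU : Filter ℕ), σ n (q n y) k = s := by
    intro y k
    have : ∀ᶠ n in (UU : Filter ℕ), σ n (q n y) k = 0 ∨ σ n (q n y) k = -1 ∨ σ n (q n y) k = 1 :=
      Eventually.of_forall fun n => by
        cases σ n (q n y) k
        · exact Or.inl rfl
        · exact Or.inr (Or.inl rfl)
        · exact Or.inr (Or.inr rfl)
    rw [Ultrafilter.eventually_or, Ultrafilter.eventually_or] at this
    rcases this with h | h | h
    · exact ⟨_, h⟩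
    · exact ⟨_, h⟩
    · exact ⟨_, h⟩
  choose s hs using hs
  have hst : ∀ y k, Tendsto (fun n => (σ n (q n y) k : ℝ)) UU (𝓝 (s y k : ℝ)) := by
    intro y k
    refine tendsto_const_nhds.congr' ?_
    filter_upwards [hs y k] with n hn
    rw [hn]
  set G' : Set (ℝ × ℝ) := {y | y ∈ Qp ∧ Tendsto (fun n => Metric.infDist y (G n)) UU (𝓝 0)} with hG'
  have hqt : ∀ y ∈ G', Tendsto (fun n => q n y) UU (𝓝 y) := by
    intro y hy
    rw [tendsto_iff_dist_tendsto_zero]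
    have h1 : Tendsto (fun n : ℕ => Metric.infDist y (G n) + 1 / ((n:ℝ) + 1)) UU (𝓝 (0 + 0)) :=
      hy.2.add (tendsto_one_div_add_atTop_nhds_zero_nat.mono_left UU_le)
    rw [add_zero] at h1
    refine squeeze_zero (fun n => dist_nonneg) (fun n => ?_) h1
    rw [dist_comm]
    exact (hqd n y).le
  have hdt : ∀ y ∈ G', ∀ y' ∈ G', Tendsto (fun n => dist (q n y) (q n y')) UU (𝓝 (dist y y')) :=
    fun y hy y' hy' => (hqt y hy).dist (hqt y' hy')
  have hbt : ∀ y a δ, Tendsto (fun n => ∑ k, (σ n (q n y) k : ℝ) * bmp (r n) δ (P n a) (P n (y, k))) UU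
      (𝓝 (bs D s a δ y)) := by
    intro y a δ
    refine tendsto_finsetSum _ fun k _ => (hst y k).mul ?_
    exact tendsto_const_nhds.max (tendsto_const_nhds.sub (hDt a (y, k)))
  obtain ⟨E, hEG, hE, κ, hκ⟩ := select G' (limset hG hv) D hD0 hDs hDc hDtr s
    (fun y hy => by
      refine tendsto_nhds_unique (tendsto_finsetSum _ fun k _ => hst y k) ?_
      simp_rw [hσ _ _ (hqG _ _)]
      exact tendsto_const_nhds) hL
    (fun y hy y' hy' hd a δ => by
      refine le_of_tendsto_of_tendsto ((hbt y a δ).sub (hbt y' a δ)).abs ((hdt y hy y' hy').const_mul L) ?_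
      filter_upwards [(hdt y hy y' hy').eventually (gt_mem_nhds hd)] with n hn
      exact hb n _ (hqG n y) _ (hqG n y') hn.le _ _ _)
  refine ⟨E, fun y y' => D (y, κ y) (y', κ y'), ?_, hE, ?_, hκ, fun n y => P n (y, κ y), fun y y' => hDt _ _⟩
  · exact Metric.isBounded_closedBall.subset fun y hy => (hEG hy).1
  · intro y hy y' hy'
    refine le_of_tendsto_of_tendsto' (hdt y (hEG hy) y' (hEG hy')) (hDt _ _) fun n => ?_
    rw [Prod.dist_eq]
    have e1 := hp n _ (hqG n y) (κ y)
    have e2 := hp n _ (hqG n y') (κ y')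
    rw [max_le_iff]
    constructor
    · rw [Real.dist_eq, ← congrArg Prod.fst e1, ← congrArg Prod.fst e2]
      exact pi1_lip (hr n) _ _ _
    · rw [Real.dist_eq, ← congrArg Prod.snd e1, ← congrArg Prod.snd e2]
      exact pi2_lip (hr n) _ _ _

end

theorem main_aux {X : Type u} [MetricSpace X] (hX : GeodesicSpace X)
    (hadm : HasDiscThickeningQII X)
    (h : ∀ (Z : Type u) (mZ : MetricSpace Z),
      letI := mZ
      IsAsymptoticSubset X Z →
        ∀ K : Set (ℝ × ℝ), IsCompact K →
          ∀ (φ : ℝ × ℝ → Z) (L : ℝ≥0), LipschitzOnWith L φ K →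
            letI : MeasurableSpace Z := borel Z
            letI : BorelSpace Z := ⟨rfl⟩
            μH[2] (φ '' K) = 0) : GromovHyperbolic X := by
  by_contra hn
  obtain ⟨Y, mY, ι, -, hι, hH, C, hC, hQ⟩ := hadm
  have hQ : QI Y C := hQ
  have hH : Metric.hausdorffEDist (Set.range ι) (Set.univ : Set Y) ≠ ⊤ := hH
  obtain ⟨H, hH0, hH⟩ : ∃ H : ℝ, 0 < H ∧ ∀ w : Y, ∃ x : X, dist w (ι x) < H := by
    refine ⟨(Metric.hausdorffEDist (Set.range ι) (Set.univ : Set Y)).toReal + 1, by positivity, fun w => ?_⟩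
    have hlt : Metric.hausdorffEDist (Set.univ : Set Y) (Set.range ι) <
        ENNReal.ofReal ((Metric.hausdorffEDist (Set.range ι) (Set.univ : Set Y)).toReal + 1) := by
      rw [Metric.hausdorffEDist_comm]
      rw [ENNReal.lt_ofReal_iff_toReal_lt hH]
      linarith
    obtain ⟨_, ⟨x, rfl⟩, hx⟩ := Metric.exists_edist_lt_of_hausdorffEDist_lt (Set.mem_univ w) hlt
    refine ⟨x, ?_⟩
    rw [edist_dist, ENNReal.ofReal_lt_ofReal_iff (by positivity)] at hx
    exact hx
  choose π hπ using hH
  have hfat := fun n : ℕ => exists_fat hX hn ((n:ℝ) + 1)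
  choose r hr1 hr0 g hg hc using hfat
  have hsc := fun n : ℕ => scale hC hQ (hr0 n) (g := ι ∘ g n)
    (fun s hs t ht => by
      show dist (ι (g n s)) (ι (g n t)) = _
      rw [hι.dist_eq]; exact hg n s hs t ht)
    (by
      obtain ⟨c, c1, c2, c3, c4⟩ := hc n
      refine ⟨ι ∘ c, fun s hs t ht => ?_, congrArg ι c2, congrArg ι c3, fun s hs => ?_⟩
      · show dist (ι (c s)) (ι (c t)) ≤ _
        rw [hι.dist_eq]; exact c1 s hs t ht
      · show r n ≤ dist (ι (g n 0)) (ι (c s))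
        rw [hι.dist_eq]; exact c4 s hs)
    (Nat.le_ceil (256 * Ct C))
  choose G hGQ hGv p σ hall using hsc
  have hL : 0 ≤ 20 * kc * (25600 * Ct C) := by
    have := kc_one
    unfold Ct
    positivity
  obtain ⟨E, D, hEb, hE, hlow, hup, x, hx⟩ := blow hL hr0 hGQ hGv (fun n y hy => (hall n y hy).1)
    (fun n y hy => (hall n y hy).2.1) (fun n y hy => (hall n y hy).2.2)
  refine finale h hEb hE hL hlow hup ?_
  intro F hF ε hε M
  have hrt : Tendsto r UU atTop := by
    refine tendsto_atTop_mono (fun n => ?_) (tendsto_natCast_atTop_atTop.mono_left UU_le)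
    linarith [hr1 n]
  have hev : ∀ᶠ n in (UU : Filter ℕ), ∀ y ∈ F, ∀ y' ∈ F, |D y y' - dist (x n y) (x n y') / r n| < ε / 2 := by
    rw [Finset.eventually_all]
    intro y _
    rw [Finset.eventually_all]
    intro y' _
    filter_upwards [Metric.tendsto_nhds.1 (hx y y') (ε / 2) (half_pos hε)] with n hn
    rwa [dist_comm, Real.dist_eq] at hn
  obtain ⟨n, h1, h2, h3⟩ := (hev.and ((hrt.eventually_ge_atTop M).and
    (hrt.eventually_ge_atTop (4 * H / ε)))).exists
  refine ⟨r n, h2, fun y => π (x n y), fun y hy y' hy' => ?_⟩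
  have h4 := h1 y hy y' hy'
  have h5 : |dist (x n y) (x n y') / r n - (r n)⁻¹ * dist (π (x n y)) (π (x n y'))| ≤ ε / 2 := by
    rw [inv_mul_eq_div, ← sub_div, abs_div, abs_of_pos (hr0 n), div_le_iff₀ (hr0 n), ← hι.dist_eq]
    have a := hπ (x n y)
    have b := hπ (x n y')
    rw [div_le_iff₀ hε] at h3
    have c := dist_triangle4 (x n y) (ι (π (x n y))) (ι (π (x n y'))) (x n y')
    have d := dist_triangle4 (ι (π (x n y))) (x n y) (x n y') (ι (π (x n y')))
    rw [dist_comm (ι (π (x n y'))) (x n y')] at c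
    rw [dist_comm (ι (π (x n y))) (x n y)] at d
    rw [abs_le]
    constructor <;> linarith
  calc _ ≤ |D y y' - dist (x n y) (x n y') / r n| +
        |dist (x n y) (x n y') / r n - (r n)⁻¹ * dist (π (x n y)) (π (x n y'))| := abs_sub_le _ _ _
    _ ≤ ε := by linarith


end

/-- Proposition 4.1: let `X` be a geodesic metric space admitting a
disc-thickening with a quadratic isoperimetric inequality.  If `H²(φ(K)) = 0` for
every Lipschitz map `φ : K → Z` with `K ⊂ ℝ²` compact and `Z` an asymptotic subset
of `X`, then `X` is Gromov hyperbolic. -/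
theorem tree_bilip {X : Type u} [MetricSpace X] (hX : GeodesicSpace X)
    (hadm : HasDiscThickeningQII X)
    (h : ∀ (Z : Type u) (mZ : MetricSpace Z),
      letI := mZ
      IsAsymptoticSubset X Z →
        ∀ K : Set (ℝ × ℝ), IsCompact K →
          ∀ (φ : ℝ × ℝ → Z) (L : ℝ≥0), LipschitzOnWith L φ K →
            letI : MeasurableSpace Z := borel Z
            letI : BorelSpace Z := ⟨rfl⟩
            μH[2] (φ '' K) = 0) :
    GromovHyperbolic X := by
  exact main_aux hX hadm h

end SharpIsop
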